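/- Let L be a finite set of N pairwise distinct lines in ℂP² (2-dimensional ℂ-subspaces of ℂ³) and let β : L → ℝ be weights satisfying: 0 < βℓ < 1 for all ℓ ∈ L, Σ_{ℓ∈L}(βℓ − 1) = −3, and for every point p with μ(p) ≥ 3 one has Σ_{ℓ∈L, p ≤ ℓ}(βℓ − 1) > −2. For every point p with μ(p) ≥ 3 set α(p) := 1 + (1/2)·Σ_{ℓ∈L, p≤ℓ}(βℓ − 1), and for ℓ ∈ L set B(ℓ) := (number of points p with μ(p) ≥ 3 and p ≤ ℓ) − 1 ∈ ℤ. Then Σ_{p : μ(p) ≥ 3} (α(p) − 1)² − (1/2)·Σ_{ℓ∈L} (1 − βℓ)²·B(ℓ) − 3/2 ≤ 0. -/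

import Mathlib

/-- The multiplicity of a point `p` of `ℂP²` (a 1-dimensional subspace of `ℂ³`)
with respect to an arrangement of lines `L` (2-dimensional subspaces):
the number of lines of `L` containing `p`. -/
noncomputable def lineMult (L : Finset (Submodule ℂ (Fin 3 → ℂ)))
    (p : Submodule ℂ (Fin 3 → ℂ)) : ℕ :=
  Set.ncard {ℓ : Submodule ℂ (Fin 3 → ℂ) | ℓ ∈ L ∧ p ≤ ℓ}

/-- The number `α(p) = 1 + (1/2)·∑_{ℓ ∋ p} (βℓ − 1)`, the conical angle
parameter at a multiple point `p` of the weighted arrangement. -/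
noncomputable def alphaPt (L : Finset (Submodule ℂ (Fin 3 → ℂ)))
    (β : Submodule ℂ (Fin 3 → ℂ) → ℝ) (p : Submodule ℂ (Fin 3 → ℂ)) : ℝ :=
  1 + (1 / 2) * ∑ᶠ ℓ ∈ {ℓ : Submodule ℂ (Fin 3 → ℂ) | ℓ ∈ L ∧ p ≤ ℓ}, (β ℓ - 1)

/-- `B(ℓ) = #{p : μ(p) ≥ 3, p ≤ ℓ} − 1`, the quantity `B_{jj}` of the paper. -/
noncomputable def BSelf (L : Finset (Submodule ℂ (Fin 3 → ℂ)))
    (ℓ : Submodule ℂ (Fin 3 → ℂ)) : ℤ :=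
  (Set.ncard {p : Submodule ℂ (Fin 3 → ℂ) |
      Module.finrank ℂ p = 1 ∧ 3 ≤ lineMult L p ∧ p ≤ ℓ} : ℤ) - 1

/-!
Sections of twists of the symmetric powers of the tangent bundle of the plane are polynomials in the
affine coordinates `x`, `y` and the slope `t = dy / dx`: functions on the flag variety of points on
lines, to which every line of the arrangement lifts. If the numbers `1 - β ℓ` are fractions with
denominator `M`, the sections of the `n`-th symmetric power of the parabolic tangent bundle are the
polynomials whose weighted order along the lifted lines is large enough.

The parabolic tangent bundle is semistable: an irreducible section of degree at least two in `t` has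
a discriminant of bounded degree which vanishes on the lines, and a section of degree one is a
foliation of degree at most one, whose invariant lines are given by eigenvectors of a `3 × 3`
matrix. Hence twists of small degree have no nonzero sections. A residue pairing is then
nondegenerate on the sections of a larger twist and vanishes between any two of them, which bounds
their number from above as Serre duality would. Counting conditions at the multiple points and along
the lines bounds it from below. Comparing the terms of order `n ^ 3` gives the inequality for
rational weights, and real weights are limits of rational ones.
-/

namespace LineArrangement

open Polynomial
open scoped Matrix

set_option maxSynthPendingDepth 3

/-! ### Filtrations of polynomial rings -/

section Filtration

variable {R S : Type*} [CommRing R] [CommRing S]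

/-- The filtration of a ring by degree in which every nonzero element has degree `0`; the starting
point for filtering iterated polynomial rings by degree with `coeffFiltration`. -/
def constDegree (R : Type*) [CommRing R] (r : ℤ) : AddSubgroup R :=
  if 0 ≤ r then ⊤ else ⊥

/-- The filtration of a ring by order of vanishing in which every nonzero element has order `0`; the
starting point for filtering iterated polynomial rings by order with `coeffFiltration`. -/
def constOrder (R : Type*) [CommRing R] (r : ℤ) : AddSubgroup R :=
  if r ≤ 0 then ⊤ else ⊥

/-- The filtration of `R[X]` induced by a filtration `F` of `R` when the variable has weight `w`.
The same formula serves for filtrations by degree (at most `r`) and by order (at least `r`). -/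
def coeffFiltration (w : ℤ) (F : ℤ → AddSubgroup R) (r : ℤ) : AddSubgroup R[X] where
  carrier := {p | ∀ j : ℕ, p.coeff j ∈ F (r - w * j)}
  zero_mem' j := by simp
  add_mem' hp hq j := by simpa using add_mem (hp j) (hq j)
  neg_mem' hp j := by simpa using hp j

lemma mem_constDegree {r : ℤ} {a : R} : a ∈ constDegree R r ↔ (r < 0 → a = 0) := by
  unfold constDegree; split_ifs with h <;> simp [h]; omega

lemma mem_constOrder {r : ℤ} {a : R} : a ∈ constOrder R r ↔ (0 < r → a = 0) := by
  unfold constOrder; split_ifs with h <;> simp [h]; omega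

instance : SetLike.GradedMonoid (constDegree R) where
  one_mem := by simp [mem_constDegree]
  mul_mem r s a b ha hb := by
    rw [mem_constDegree] at *
    intro h
    rcases lt_or_ge r 0 with hr | hr
    · rw [ha hr, zero_mul]
    · rw [hb (by omega), mul_zero]

instance : SetLike.GradedMonoid (constOrder R) where
  one_mem := by simp [mem_constOrder]
  mul_mem r s a b ha hb := by
    rw [mem_constOrder] at *
    intro h
    rcases lt_or_ge 0 r with hr | hr
    · rw [ha hr, zero_mul]
    · rw [hb (by omega), mul_zero]

lemma constDegree_mono : Monotone (constDegree R) := fun _ _ hrs _ ha =>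
  mem_constDegree.2 fun h => mem_constDegree.1 ha (by omega)

variable {w : ℤ} {F : ℤ → AddSubgroup R}

lemma mem_coeffFiltration {r : ℤ} {p : R[X]} :
    p ∈ coeffFiltration w F r ↔ ∀ j : ℕ, p.coeff j ∈ F (r - w * j) := Iff.rfl

lemma coeffFiltration_mono (hF : Monotone F) : Monotone (coeffFiltration w F) :=
  fun _ _ hrs _ hp j => hF (by omega) (hp j)

lemma C_mem_coeffFiltration {r : ℤ} {a : R} (ha : a ∈ F r) : C a ∈ coeffFiltration w F r := by
  intro j
  rw [coeff_C]
  split_ifs with h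
  · simpa [h] using ha
  · exact zero_mem _

instance [SetLike.GradedMonoid F] : SetLike.GradedMonoid (coeffFiltration w F) where
  one_mem := C_mem_coeffFiltration (SetLike.one_mem_graded F)
  mul_mem r s p q hp hq j := by
    rw [coeff_mul]
    refine sum_mem fun x hx => ?_
    have h := SetLike.mul_mem_graded (hp x.1) (hq x.2)
    rw [← Finset.HasAntidiagonal.mem_antidiagonal.1 hx]
    convert h using 2
    push_cast
    ring

lemma X_mem_coeffFiltration [SetLike.GradedMonoid F] : (X : R[X]) ∈ coeffFiltration w F w := by
  intro j
  rw [coeff_X]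
  split_ifs with h
  · simpa [← h] using SetLike.one_mem_graded F
  · exact zero_mem _

lemma eval₂_mem_of_forall_coeff {G : ℤ → AddSubgroup S} [SetLike.GradedMonoid G] (φ : R →+* S)
    {x : S} (hx : x ∈ G w) {p : R[X]} {r : ℤ} (hp : ∀ j : ℕ, φ (p.coeff j) ∈ G (r - w * j)) :
    p.eval₂ φ x ∈ G r := by
  rw [eval₂_eq_sum_range]
  refine sum_mem fun j _ => ?_
  have h := SetLike.mul_mem_graded (hp j) (SetLike.pow_mem_graded j hx)
  rwa [nsmul_eq_mul, mul_comm (j : ℤ), sub_add_cancel] at h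

lemma taylor_mem_coeffFiltration [SetLike.GradedMonoid F] {a : R} (ha : a ∈ F w) {p : R[X]} {r : ℤ}
    (hp : p ∈ coeffFiltration w F r) : taylor a p ∈ coeffFiltration w F r := by
  rw [taylor_apply]
  exact eval₂_mem_of_forall_coeff C (add_mem X_mem_coeffFiltration (C_mem_coeffFiltration ha))
    fun j => C_mem_coeffFiltration (hp j)

/-- The filtration of `R` pulled back from `S` by `φ`. -/
def comapFiltration (φ : R →+* S) (G : ℤ → AddSubgroup S) (r : ℤ) : AddSubgroup R :=
  (G r).comap φ.toAddMonoidHom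

lemma mem_comapFiltration {φ : R →+* S} {G : ℤ → AddSubgroup S} {r : ℤ} {a : R} :
    a ∈ comapFiltration φ G r ↔ φ a ∈ G r := Iff.rfl

instance {φ : R →+* S} {G : ℤ → AddSubgroup S} [SetLike.GradedMonoid G] :
    SetLike.GradedMonoid (comapFiltration φ G) where
  one_mem := by simpa [mem_comapFiltration] using SetLike.one_mem_graded G
  mul_mem r s a b ha hb := by
    simpa [mem_comapFiltration] using SetLike.mul_mem_graded (A := G) ha hb

/-- The polynomials of degree at most `r`. -/
noncomputable abbrev degreeFiltration (R : Type*) [CommRing R] : ℤ → AddSubgroup R[X] :=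
  coeffFiltration 1 (constDegree R)

/-- The polynomials in two variables of total degree at most `r`. -/
noncomputable abbrev totalDegreeFiltration (R : Type*) [CommRing R] : ℤ → AddSubgroup R[X][X] :=
  coeffFiltration 1 (degreeFiltration R)

lemma mem_degreeFiltration {d : ℕ} {p : R[X]} : p ∈ degreeFiltration R d ↔ p.natDegree ≤ d := by
  simp [mem_coeffFiltration, mem_constDegree, natDegree_le_iff_coeff_eq_zero]

lemma C_mem_degreeFiltration (a : R) : C a ∈ degreeFiltration R 0 :=
  mem_degreeFiltration.2 (natDegree_C a).le

lemma degreeFiltration_mono : Monotone (degreeFiltration R) :=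
  coeffFiltration_mono constDegree_mono

lemma mem_totalDegreeFiltration {D : ℕ} {p : R[X][X]} :
    p ∈ totalDegreeFiltration R D ↔ ∀ k i, D < i + k → (p.coeff k).coeff i = 0 := by
  simp only [mem_coeffFiltration, mem_constDegree, one_mul]
  exact forall₂_congr fun k i => imp_congr_left (by omega)

end Filtration

/-! ### Weighted order along a lifted line -/

section LineShift

variable {R : Type*} [CommRing R]

/-- The polynomial `m x + c`, whose graph `y = m x + c` is a line of the affine plane. -/
noncomputable def linePoly (m c : R) : R[X] := C m * X + C c

/-- The substitution `t ↦ t + m` on `R[x][y][t]`. -/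
noncomputable def slopeShift (m : R) : R[X][X][X] →+* R[X][X][X] :=
  (taylorAlgHom (C (C m) : R[X][X])).toRingHom

/-- The substitution `y ↦ y + m x + c` on `R[x][y]`. -/
noncomputable def lineTranslate (m c : R) : R[X][X] →+* R[X][X] :=
  (taylorAlgHom (linePoly m c)).toRingHom

/-- The substitution `y ↦ y + m x + c`, `t ↦ t + m` on `R[x][y][t]`. It introduces coordinates
`z = y - m x - c` and `τ = t - m` transverse to the line `y = m x + c` lifted to the flag variety,
whose points are pairs of a point `(x, y)` and a direction of slope `t`. -/
noncomputable def lineShift (m c : R) : R[X][X][X] →+* R[X][X][X] :=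
  (mapRingHom (lineTranslate m c)).comp (slopeShift m)

/-- The coefficient of `z ^ i * τ ^ j` in coordinates `z = y - m x - c` and `τ = t - m` transverse
to the lifted line `y = m x + c`. -/
noncomputable def lineCoeff (m c : R) (i j : ℕ) (f : R[X][X][X]) : R[X] :=
  ((lineShift m c f).coeff j).coeff i

/-- The polynomial `f` has order at least `r` along the lifted line `y = m x + c`, when `z` has
weight `M` and `τ` has weight `a`. -/
def LineOrderGE (m c : R) (M a : ℕ) (f : R[X][X][X]) (r : ℕ) : Prop :=
  ∀ i j, M * i + a * j < r → lineCoeff m c i j f = 0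

lemma slopeShift_apply (m : R) (f : R[X][X][X]) : slopeShift m f = taylor (C (C m)) f := rfl

lemma lineTranslate_apply (m c : R) (p : R[X][X]) :
    lineTranslate m c p = taylor (linePoly m c) p := rfl

lemma lineShift_coeff (m c : R) (f : R[X][X][X]) (j : ℕ) :
    (lineShift m c f).coeff j = lineTranslate m c ((slopeShift m f).coeff j) := by
  simp [lineShift]

lemma natDegree_linePoly_le (m c : R) : (linePoly m c).natDegree ≤ 1 := natDegree_linear_le

lemma slopeShift_injective (m : R) : Function.Injective (slopeShift m) := taylor_injective _

lemma lineTranslate_injective (m c : R) : Function.Injective (lineTranslate m c) :=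
  taylor_injective _

lemma lineShift_injective (m c : R) : Function.Injective (lineShift m c) :=
  (map_injective _ (lineTranslate_injective m c)).comp (slopeShift_injective m)

/-- The substitution giving the variables of `R[z][τ]` the weights `M` and `a`: it multiplies them
by powers of a new variable `s`, so that the order in `s` of the result is the weighted order. -/
noncomputable def weightScaling (R : Type*) [CommRing R] (M a : ℕ) : R[X][X] →+* R[X][X][X] :=
  eval₂RingHom (eval₂RingHom ((C.comp C).comp C) (C (C X) * X ^ M)) (C X * X ^ a)

lemma weightScaling_monomial (M a : ℕ) (i j : ℕ) (r : R) :
    weightScaling R M a (monomial j (monomial i r)) =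
      monomial (M * i + a * j) (monomial j (monomial i r)) := by
  simp only [← C_mul_X_pow_eq_monomial, map_mul, map_pow, pow_add, weightScaling, coe_eval₂RingHom,
    eval₂_C, eval₂_X, RingHom.comp_apply]
  ring

lemma coeff_weightScaling (M a : ℕ) (h : R[X][X]) (s i j : ℕ) :
    (((weightScaling R M a h).coeff s).coeff j).coeff i =
      if M * i + a * j = s then (h.coeff j).coeff i else 0 := by
  induction h using Polynomial.induction_on' with
  | add p q hp hq => simp only [map_add, coeff_add, hp, hq]; split_ifs <;> simp
  | monomial j₀ p =>
    induction p using Polynomial.induction_on' with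
    | add p q hp hq => simp only [map_add, coeff_add, hp, hq]; split_ifs <;> simp
    | monomial i₀ r =>
      rw [weightScaling_monomial, coeff_monomial]
      have h0 : i₀ ≠ i ∨ j₀ ≠ j →
          ((monomial j₀ (monomial i₀ r) : R[X][X]).coeff j).coeff i = 0 := by
        rintro (h | h)
        · rw [coeff_monomial]; split_ifs <;> simp [coeff_monomial, h]
        · rw [coeff_monomial, if_neg h, coeff_zero]
      by_cases hij : i₀ = i ∧ j₀ = j
      · obtain ⟨rfl, rfl⟩ := hij
        split_ifs <;> simp
      · rw [h0 (by tauto), ite_self]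
        split_ifs
        · exact h0 (by tauto)
        · simp

lemma X_pow_dvd_weightScaling_iff {M a r : ℕ} {h : R[X][X]} :
    X ^ r ∣ weightScaling R M a h ↔ ∀ i j, M * i + a * j < r → (h.coeff j).coeff i = 0 := by
  rw [X_pow_dvd_iff]
  refine ⟨fun H i j hij => ?_, fun H s hs => ?_⟩
  · simpa [H _ hij] using (coeff_weightScaling M a h (M * i + a * j) i j).symm
  · ext j i
    rw [coeff_weightScaling]
    split_ifs with hij
    · simpa using H i j (hij ▸ hs)
    · simp

lemma weightScaling_injective (M a : ℕ) : Function.Injective (weightScaling R M a) := by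
  rw [injective_iff_map_eq_zero]
  intro h hh
  ext j i
  simpa [hh] using (coeff_weightScaling M a h (M * i + a * j) i j).symm

lemma lineOrderGE_iff {m c : R} {M a r : ℕ} {f : R[X][X][X]} :
    LineOrderGE m c M a f r ↔ X ^ r ∣ weightScaling R[X] M a (lineShift m c f) :=
  X_pow_dvd_weightScaling_iff.symm

lemma exists_lineOrderGE_of_mul [IsDomain R] {m c : R} {M a : ℕ} {f g : R[X][X][X]}
    (hf : f ≠ 0) (hg : g ≠ 0) {r : ℕ} (h : LineOrderGE m c M a (f * g) r) :
    ∃ r₁ r₂, r ≤ r₁ + r₂ ∧ LineOrderGE m c M a f r₁ ∧ LineOrderGE m c M a g r₂ := by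
  have hne : ∀ f : R[X][X][X], f ≠ 0 → weightScaling R[X] M a (lineShift m c f) ≠ 0 := fun f hf =>
    (map_ne_zero_iff _ (weightScaling_injective M a)).2
      ((map_ne_zero_iff _ (lineShift_injective m c)).2 hf)
  have hdvd : ∀ p : R[X][X][X][X], X ^ p.natTrailingDegree ∣ p := fun p =>
    X_pow_dvd_iff.2 fun s hs => coeff_eq_zero_of_lt_natTrailingDegree hs
  refine ⟨_, _, ?_, lineOrderGE_iff.2 (hdvd _), lineOrderGE_iff.2 (hdvd _)⟩
  rw [← natTrailingDegree_mul (hne f hf) (hne g hg), ← map_mul, ← map_mul]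
  exact le_natTrailingDegree (hne _ (mul_ne_zero hf hg)) fun s hs =>
    X_pow_dvd_iff.1 (lineOrderGE_iff.1 h) s hs

end LineShift

/-! ### Degree along lifted lines -/

section LineDegree

variable {R : Type*} [CommRing R]

lemma flagRingHom_ext {S : Type*} [Semiring S] {f g : R[X][X][X] →+* S}
    (hc : ∀ r, f (C (C (C r))) = g (C (C (C r)))) (hx : f (C (C X)) = g (C (C X)))
    (hy : f (C X) = g (C X)) (ht : f X = g X) : f = g :=
  ringHom_ext' (ringHom_ext' (ringHom_ext' (RingHom.ext hc) hx) hy) ht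

/-- The inclusion `R ⊆ R[x][y][t]`. -/
noncomputable abbrev constHom (R : Type*) [CommRing R] : R →+* R[X][X][X] := (C.comp C).comp C

/-- The substitution `x ↦ x`, `y ↦ u + t x`, `t ↦ t` from `R[x][y][t]` to `R[t][u][x]`: a point of
the flag variety is also given by its line `y = t x + u` and the position `x` on it. -/
noncomputable def toDualChart (R : Type*) [CommRing R] : R[X][X][X] →+* R[X][X][X] :=
  eval₂RingHom (eval₂RingHom (eval₂RingHom (constHom R) X) (C X + C (C X) * X)) (C (C X))

/-- The inverse `t ↦ t`, `u ↦ y - x t`, `x ↦ x` of `toDualChart`. -/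
noncomputable def ofDualChart (R : Type*) [CommRing R] : R[X][X][X] →+* R[X][X][X] :=
  eval₂RingHom (eval₂RingHom (eval₂RingHom (constHom R) X) (C X - X * C (C X))) (C (C X))

/-- The isomorphism between the coordinate rings `R[x][y][t]` and `R[t][u][x]`, where
`y = u + t x`. -/
noncomputable def dualChart (R : Type*) [CommRing R] : R[X][X][X] ≃+* R[X][X][X] :=
  RingEquiv.ofRingHom (toDualChart R) (ofDualChart R)
    (flagRingHom_ext (by simp [toDualChart, ofDualChart]) (by simp [toDualChart, ofDualChart])
      (by simp [toDualChart, ofDualChart]) (by simp [toDualChart, ofDualChart]))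
    (flagRingHom_ext (by simp [toDualChart, ofDualChart]) (by simp [toDualChart, ofDualChart])
      (by simp [toDualChart, ofDualChart]) (by simp [toDualChart, ofDualChart]))

lemma dualChart_apply (f : R[X][X][X]) : dualChart R f = toDualChart R f := rfl

lemma dualChart_symm_apply (f : R[X][X][X]) : (dualChart R).symm f = ofDualChart R f := rfl

/-- The degree of `f ∈ R[x][y][t]` on the lifts `{(x, t x + u, t)}` of lines, that is, its degree
in `x` after the substitution `y = u + t x`. -/
noncomputable def lineDegree (f : R[X][X][X]) : ℕ := (dualChart R f).natDegree

lemma lineDegree_ofDualChart (p : R[X][X][X]) : lineDegree (ofDualChart R p) = p.natDegree := by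
  rw [lineDegree, ← dualChart_symm_apply, RingEquiv.apply_symm_apply]

lemma lineDegree_mul [IsDomain R] {f g : R[X][X][X]} (hf : f ≠ 0) (hg : g ≠ 0) :
    lineDegree (f * g) = lineDegree f + lineDegree g := by
  simp only [lineDegree, map_mul]
  exact natDegree_mul (by simpa) (by simpa)

/-- The substitution `f(x, y, t) ↦ f(x, l x, l + τ)`, restricting `f` to the line `y = l x`. -/
noncomputable def radialRestrict (l : R) : R[X][X][X] →+* R[X][X] :=
  (mapRingHom (evalRingHom (C l * X : R[X]))).comp (slopeShift l)

lemma coeff_radialRestrict (l : R) (f : R[X][X][X]) (j : ℕ) :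
    (radialRestrict l f).coeff j = ((slopeShift l f).coeff j).eval (C l * X) := by
  simp [radialRestrict]

lemma radialRestrict_C (l : R) (p : R[X][X]) : radialRestrict l (C p) = C (p.eval (C l * X)) := by
  simp [radialRestrict, slopeShift_apply]

lemma radialRestrict_X (l : R) : radialRestrict l X = X + C (C l) := by
  simp [radialRestrict, slopeShift_apply]

lemma radialRestrict_ofDualChart_eq_eval₂ (l : R) (p : R[X][X][X]) :
    radialRestrict l (ofDualChart R p) =
      p.eval₂ (eval₂RingHom (eval₂RingHom (S := R[X][X]) (C.comp C) (X + C (C l)))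
        (-(C X * X))) (C X) := by
  have h : (radialRestrict l).comp (ofDualChart R) =
      eval₂RingHom (eval₂RingHom (eval₂RingHom (S := R[X][X]) (C.comp C) (X + C (C l)))
        (-(C X * X))) (C X) := by
    refine flagRingHom_ext (fun r => ?_) ?_ ?_ ?_
    · simp [ofDualChart, radialRestrict_C]
    · simp [ofDualChart, radialRestrict_X]
    · simp only [ofDualChart, RingHom.comp_apply, coe_eval₂RingHom, eval₂_C, eval₂_X, map_sub,
        map_mul, radialRestrict_C, radialRestrict_X, eval_X, eval_C]
      ring
    · simp [ofDualChart, radialRestrict_C]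
  exact congr($h p)

-- The weight `-1` of `τ` gives `u = -x τ` degree `0`.
lemma radialRestrict_mem_coeffFiltration (l : R) (f : R[X][X][X]) :
    radialRestrict l f ∈ coeffFiltration (-1) (degreeFiltration R) (lineDegree f) := by
  set G := coeffFiltration (-1) (degreeFiltration R)
  have hG : Monotone G := coeffFiltration_mono degreeFiltration_mono
  have hX : (C X : R[X][X]) ∈ G 1 := C_mem_coeffFiltration X_mem_coeffFiltration
  have hT : (X : R[X][X]) ∈ G (-1) := X_mem_coeffFiltration
  have hC (a : R) : C (C a) ∈ G 0 := C_mem_coeffFiltration (C_mem_degreeFiltration a)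
  have hu : -(C X * X : R[X][X]) ∈ G 0 := neg_mem (by simpa using SetLike.mul_mem_graded hX hT)
  have ht : X + C (C l) ∈ G 0 := add_mem (hG (by norm_num) hT) (hC l)
  obtain ⟨p, rfl⟩ : ∃ p, ofDualChart R p = f := (dualChart R).symm.surjective f
  rw [lineDegree_ofDualChart, radialRestrict_ofDualChart_eq_eval₂]
  refine eval₂_mem_of_forall_coeff (w := 1) _ hX fun k => ?_
  rcases le_or_gt k p.natDegree with hk | hk
  · refine hG (by simpa using hk) (eval₂_mem_of_forall_coeff (w := 0) (r := 0) _ hu fun i => ?_)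
    exact eval₂_mem_of_forall_coeff (w := 0) _ ht fun j => by simpa using hC _
  · rw [coeff_eq_zero_of_natDegree_lt hk, map_zero]
    exact zero_mem _

lemma natDegree_eval_coeff_slopeShift_le (f : R[X][X][X]) (l : R) (j : ℕ) :
    (((slopeShift l f).coeff j).eval (C l * X)).natDegree ≤ lineDegree f + j := by
  rw [← coeff_radialRestrict, ← mem_degreeFiltration]
  exact degreeFiltration_mono (by simp) (radialRestrict_mem_coeffFiltration l f j)

end LineDegree

/-! ### Polynomials with prescribed orders along lines -/

section LineEquation

lemma coeff_eval_C_mul_X {R : Type*} [CommRing R] (p : R[X][X]) (l : R) (N : ℕ) :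
    (p.eval (C l * X)).coeff N =
      (∑ k ∈ Finset.range (N + 1), monomial k ((p.coeff k).coeff (N - k))).eval l := by
  have hterm (k : ℕ) : (p.coeff k * (C (l ^ k) * X ^ k)).coeff N =
      if k ≤ N then (p.coeff k).coeff (N - k) * l ^ k else 0 := by
    rw [mul_comm (C _), ← mul_assoc, coeff_mul_C, coeff_mul_X_pow']
    split_ifs <;> simp
  rw [eval_eq_sum_range' (n := p.natDegree + N + 1) (by omega), finsetSum_coeff]
  simp only [mul_pow, ← C_pow, eval_finsetSum, eval_monomial, hterm]
  rw [← Finset.sum_filter]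
  exact Finset.sum_congr (by grind) fun _ _ => rfl

variable {K : Type*} [Field K]

lemma mem_totalDegreeFiltration_of_natDegree_eval_le [Infinite K] {p : K[X][X]} {D : ℕ}
    (h : ∀ l : K, (p.eval (C l * X)).natDegree ≤ D) : p ∈ totalDegreeFiltration K D := by
  rw [mem_totalDegreeFiltration]
  intro k i hik
  have h0 : ∑ j ∈ Finset.range (i + k + 1), monomial j ((p.coeff j).coeff (i + k - j)) = 0 := by
    refine funext fun l => ?_
    rw [eval_zero]
    refine (coeff_eval_C_mul_X p l (i + k)).symm.trans ?_
    exact coeff_eq_zero_of_natDegree_lt ((h l).trans_lt hik)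
  simpa [finsetSum_coeff, coeff_monomial] using congr(($h0).coeff k)

/-- The equation `y - m x - c` of a line. -/
noncomputable def lineEquation (m c : K) : K[X][X] := X - C (linePoly m c)

lemma prime_lineEquation (m c : K) : Prime (lineEquation m c) := prime_X_sub_C _

lemma eval_lineEquation (m c l : K) :
    (lineEquation m c).eval (C l * X) = C (l - m) * X - C c := by
  simp only [lineEquation, linePoly, eval_sub, eval_X, eval_add, eval_mul, eval_C, map_add, map_sub,
    map_mul]
  ring

lemma natDegree_eval_lineEquation {m l : K} (c : K) (h : l ≠ m) :
    ((lineEquation m c).eval (C l * X)).natDegree = 1 := by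
  rw [eval_lineEquation, natDegree_sub_C, natDegree_C_mul_X _ (sub_ne_zero.2 h)]

lemma isRelPrime_lineEquation {m m' c c' : K} (h : m ≠ m') :
    IsRelPrime (lineEquation m c) (lineEquation m' c') := by
  rw [(prime_lineEquation _ _).irreducible.isRelPrime_iff_not_dvd]
  intro hd
  have heq : lineEquation m c = lineEquation m' c' :=
    eq_of_monic_of_associated (monic_X_sub_C _) (monic_X_sub_C _)
      ((prime_lineEquation m c).associated_of_dvd (prime_lineEquation m' c') hd)
  have hlin : linePoly m c = linePoly m' c' := C_injective (sub_right_injective heq)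
  exact h (by simpa [linePoly] using congr(($hlin).coeff 1))

lemma prod_lineEquation_pow_dvd {ι : Type*} {s : Finset ι} {m : ι → K} (c : ι → K)
    (hm : Set.InjOn m s) {o : ι → ℕ} {p : K[X][X]}
    (h : ∀ i ∈ s, lineEquation (m i) (c i) ^ o i ∣ p) :
    ∏ i ∈ s, lineEquation (m i) (c i) ^ o i ∣ p :=
  Finset.prod_dvd_of_isRelPrime
    (fun _ hi _ hj hij => (isRelPrime_lineEquation (hm.ne hi hj hij)).pow) h

lemma exists_notMem_eval_ne_zero [Infinite K] {p : K[X][X]} (hp : p ≠ 0) (s : Finset K) :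
    ∃ l ∉ s, p.eval (C l * X) ≠ 0 := by
  by_contra! h
  have hinj : Function.Injective fun l : K => C l * X := fun a b hab => by
    simpa using congr(coeff $hab 1)
  refine hp (eq_zero_of_infinite_isRoot p (Set.Infinite.mono ?_
    (s.finite_toSet.infinite_compl.image hinj.injOn)))
  rintro _ ⟨l, hl, rfl⟩
  exact h l hl

lemma sum_order_le_of_lineEquation_pow_dvd [Infinite K] {ι : Type*} {s : Finset ι} {m : ι → K}
    (c : ι → K) (hm : Set.InjOn m s) {o : ι → ℕ} {p : K[X][X]} (hp : p ≠ 0)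
    (h : ∀ i ∈ s, lineEquation (m i) (c i) ^ o i ∣ p) {N : ℕ}
    (hN : ∀ l : K, (p.eval (C l * X)).natDegree ≤ N) : ∑ i ∈ s, o i ≤ N := by
  classical
  obtain ⟨l, hl, hpl⟩ := exists_notMem_eval_ne_zero hp (s.image m)
  have hlm : ∀ i ∈ s, l ≠ m i := fun i hi h => hl (Finset.mem_image.2 ⟨i, hi, h.symm⟩)
  have hne : ∀ i ∈ s, (lineEquation (m i) (c i)).eval (C l * X) ^ o i ≠ 0 := fun i hi =>
    pow_ne_zero _ (ne_zero_of_natDegree_gt (n := 0)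
      (by rw [natDegree_eval_lineEquation (c i) (hlm i hi)]; norm_num))
  calc ∑ i ∈ s, o i
      = ((∏ i ∈ s, lineEquation (m i) (c i) ^ o i).eval (C l * X)).natDegree := by
        simp only [eval_prod, eval_pow]
        rw [natDegree_prod _ _ hne]
        refine Finset.sum_congr rfl fun i hi => ?_
        rw [natDegree_pow, natDegree_eval_lineEquation (c i) (hlm i hi), mul_one]
    _ ≤ (p.eval (C l * X)).natDegree :=
        natDegree_le_of_dvd (eval_dvd (prod_lineEquation_pow_dvd c hm h)) hpl
    _ ≤ N := hN l

end LineEquation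

/-! ### Discriminants -/

section Discriminant

variable {R : Type*} [CommRing R]

lemma det_mem_of_forall_apply_mem {F : ℤ → AddSubgroup R} [SetLike.GradedMonoid F]
    {ι : Type*} [Fintype ι] [DecidableEq ι] {A : Matrix ι ι R} {u v : ι → ℤ}
    (h : ∀ i j, A i j ∈ F (u i + v j)) : A.det ∈ F (∑ i, u i + ∑ i, v i) := by
  rw [Matrix.det_apply]
  refine sum_mem fun σ _ => ?_
  have hprod : ∏ i, A (σ i) i ∈ F (∑ i, u i + ∑ i, v i) := by
    rw [← Equiv.sum_comp σ u, ← Finset.sum_add_distrib]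
    exact SetLike.prod_mem_graded F _ _ fun i _ => h (σ i) i
  exact zsmul_mem hprod _

/-- The weight of a column of the Sylvester matrix of `f.derivative` and `f` with `n = natDegree f`,
when the coefficient of `X ^ k` in `f` has weight `w - δ * k`. -/
def sylvesterColWeight (n : ℕ) (w δ : ℤ) : Fin (n - 1 + n) → ℤ :=
  Fin.append (fun j : Fin (n - 1) => w + δ * (j : ℕ)) (fun j : Fin n => w + δ * ((j : ℕ) - 1))

/-- The weight of a row of `sylvesterDeriv`, the Sylvester matrix of `f.derivative` and `f` with its
last row divided by the leading coefficient. -/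
def sylvesterDerivRowWeight (n : ℕ) (w δ : ℤ) (i : Fin (n - 1 + n)) : ℤ :=
  -δ * (i : ℕ) - if (i : ℕ) = 2 * n - 2 then w - n * δ else 0

lemma two_mul_sum_range_intCast (k : ℕ) : 2 * ∑ i ∈ Finset.range k, (i : ℤ) = k * (k - 1) := by
  induction k with
  | zero => simp
  | succ k ih => rw [Finset.sum_range_succ, mul_add, ih]; push_cast; ring

lemma sum_sylvesterWeights {n : ℕ} (hn : 0 < n) (w δ : ℤ) :
    ∑ i, sylvesterDerivRowWeight n w δ i + ∑ j, sylvesterColWeight n w δ j =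
      (2 * n - 2) * w - n * (n - 1) * δ := by
  obtain ⟨k, rfl⟩ : ∃ k, n = k + 1 := ⟨n - 1, by omega⟩
  have hrow : ∑ i, sylvesterDerivRowWeight (k + 1) w δ i =
      -δ * ∑ i ∈ Finset.range (2 * k + 1), (i : ℤ) - (w - (k + 1) * δ) := by
    simp only [sylvesterDerivRowWeight, Finset.sum_sub_distrib, ← Finset.mul_sum]
    rw [Fin.sum_univ_eq_sum_range (fun i => (i : ℤ)), Fin.sum_univ_eq_sum_range
      (fun i => if i = 2 * (k + 1) - 2 then w - ((k + 1 : ℕ) : ℤ) * δ else 0),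
      Finset.sum_ite_eq', if_pos (by simp; omega)]
    push_cast
    congr 4
    omega
  have hcol : ∑ j, sylvesterColWeight (k + 1) w δ j =
      k * w + δ * ∑ i ∈ Finset.range k, (i : ℤ) +
        ((k + 1) * w + δ * (∑ i ∈ Finset.range (k + 1), (i : ℤ) - (k + 1))) := by
    rw [sylvesterColWeight, Fin.sum_univ_add]
    simp only [Fin.append_left, Fin.append_right, Finset.sum_add_distrib, ← Finset.mul_sum,
      Finset.sum_sub_distrib, Fin.sum_univ_eq_sum_range (fun i => (i : ℤ))]
    simp
  rw [hrow, hcol]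
  have h₁ := two_mul_sum_range_intCast (2 * k + 1)
  have h₂ := two_mul_sum_range_intCast k
  have h₃ := two_mul_sum_range_intCast (k + 1)
  refine mul_left_cancel₀ (two_ne_zero : (2 : ℤ) ≠ 0) ?_
  push_cast at h₁ h₂ h₃ ⊢
  linear_combination (-δ) * h₁ + δ * h₂ + δ * h₃

variable {F : ℤ → AddSubgroup R} [SetLike.GradedMonoid F]

lemma natCast_mem_zero (F : ℤ → AddSubgroup R) [SetLike.GradedMonoid F] (k : ℕ) :
    (k : R) ∈ F 0 := by
  simpa using (F 0).nsmul_mem SetLike.GradedOne.one_mem k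

lemma sylvester_derivative_apply_mem {f : R[X]} {w δ : ℤ} (hf : f ∈ coeffFiltration δ F w)
    (i j : Fin (f.natDegree - 1 + f.natDegree)) :
    f.derivative.sylvester f (f.natDegree - 1) f.natDegree i j ∈
      F (-δ * (i : ℕ) + sylvesterColWeight f.natDegree w δ j) := by
  rw [sylvester, Matrix.of_apply, sylvesterColWeight]
  induction j using Fin.addCases with
  | left j =>
    rw [Fin.addCases_left, Fin.append_left]
    split_ifs with h
    · convert hf (i - j) using 2
      rw [Nat.cast_sub (Set.mem_Icc.1 h).1]
      ring
    · exact zero_mem _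
  | right j =>
    rw [Fin.addCases_right, Fin.append_right]
    split_ifs with h
    · rw [coeff_derivative]
      convert SetLike.mul_mem_graded (hf (i - j + 1)) (natCast_mem_zero F (i - j + 1)) using 2
      · push_cast [Nat.cast_sub (Set.mem_Icc.1 h).1]
        ring
      · push_cast
        ring
    · exact zero_mem _

lemma sylvesterDeriv_apply_mem {f : R[X]} (hn : 2 ≤ f.natDegree) {w δ : ℤ}
    (hf : f ∈ coeffFiltration δ F w) (i j : Fin (f.natDegree - 1 + f.natDegree)) :
    f.sylvesterDeriv i j ∈
      F (sylvesterDerivRowWeight f.natDegree w δ i + sylvesterColWeight f.natDegree w δ j) := by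
  rw [sylvesterDeriv, dif_neg (by omega), Matrix.updateRow_apply, sylvesterDerivRowWeight]
  have hn' : ((f.natDegree - 1 : ℕ) : ℤ) = f.natDegree - 1 := by omega
  by_cases hi : (i : ℕ) = 2 * f.natDegree - 2
  · have hi' : (i : ℤ) = 2 * f.natDegree - 2 := by omega
    rw [if_pos (Fin.ext hi), if_pos hi, sylvesterColWeight, hi']
    induction j using Fin.addCases with
    | left j =>
      rw [Fin.append_left, Fin.val_castAdd]
      split_ifs with hj hj
      · convert SetLike.one_mem_graded F using 2
        have hj' : (j : ℤ) = f.natDegree - 2 := by omega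
        rw [hj']
        ring
      · omega
      · exact zero_mem _
    | right j =>
      rw [Fin.append_right, Fin.val_natAdd, if_neg (by omega)]
      split_ifs with hj
      · convert natCast_mem_zero F f.natDegree using 2
        have hj' : (j : ℤ) = f.natDegree - 1 := by omega
        rw [hj']
        ring
      · exact zero_mem _
  · rw [if_neg hi, if_neg (fun h => hi (by rw [h])), sub_zero]
    exact sylvester_derivative_apply_mem hf i j

lemma discr_mem_of_mem_coeffFiltration {f : R[X]} (hn : 2 ≤ f.natDegree) {w δ : ℤ}
    (hf : f ∈ coeffFiltration δ F w) :
    f.discr ∈ F ((2 * f.natDegree - 2) * w - f.natDegree * (f.natDegree - 1) * δ) := by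
  have hdet := det_mem_of_forall_apply_mem (sylvesterDeriv_apply_mem hn hf)
  rw [sum_sylvesterWeights (by omega)] at hdet
  rw [discr]
  rcases neg_one_pow_eq_or R (f.natDegree * (f.natDegree - 1) / 2) with h | h <;> rw [h]
  · simpa using hdet
  · simpa using hdet

variable [IsDomain R] [CharZero R]

lemma discr_taylor {f : R[X]} (hf : 0 < f.natDegree) (r : R) : (taylor r f).discr = f.discr := by
  have hder : taylor r (derivative f) = derivative (taylor r f) := by
    simp [taylor_apply, derivative_comp]
  have hlead : f.leadingCoeff ≠ 0 := leadingCoeff_ne_zero.2 (ne_zero_of_natDegree_gt hf)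
  have h := resultant_taylor f f.derivative r
  rw [hder, natDegree_derivative, natDegree_derivative, resultant_deriv, resultant_deriv,
    natDegree_taylor, leadingCoeff_taylor] at h
  · exact mul_left_cancel₀ (mul_ne_zero (pow_ne_zero _ (by simp)) hlead) h
  · rwa [← natDegree_pos_iff_degree_pos]
  · rwa [← natDegree_pos_iff_degree_pos, natDegree_taylor]

lemma discr_ne_zero_of_prime [UniqueFactorizationMonoid R] {f : R[X]} (hf : 0 < f.natDegree)
    (hp : Prime f) : f.discr ≠ 0 := by
  classical
  let _ : StrongNormalizationMonoid R := UniqueFactorizationMonoid.strongNormalizationMonoid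
  let _ : NormalizedGCDMonoid R := UniqueFactorizationMonoid.toNormalizedGCDMonoid R
  have hinj := IsFractionRing.injective R (FractionRing R)
  have : CharZero (FractionRing R) := charZero_of_injective_algebraMap hinj
  have hirr : Irreducible (f.map (algebraMap R (FractionRing R))) :=
    ((hp.irreducible.isPrimitive hf.ne').irreducible_iff_irreducible_map_fraction_map).1
      hp.irreducible
  intro h0
  have hres := resultant_deriv (natDegree_pos_iff_degree_pos.1 hf)
  rw [h0, mul_zero] at hres
  apply resultant_ne_zero _ _ hirr.separable
  rw [derivative_map, natDegree_map_eq_of_injective hinj, natDegree_map_eq_of_injective hinj,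
    natDegree_derivative, resultant_map_map, hres, map_zero]

end Discriminant

/-! ### Orders along several lines -/

section LineCoeffZero

variable {R : Type*} [CommRing R]

lemma lineCoeff_zero_zero (m c : R) (f : R[X][X][X]) :
    lineCoeff m c 0 0 f = (f.eval (C (C m))).eval (linePoly m c) := by
  simp [lineCoeff, lineShift_coeff, slopeShift_apply, lineTranslate_apply, taylor_coeff_zero]

lemma lineCoeff_zero_zero_eq_map (m c : R) (f : R[X][X][X]) :
    lineCoeff m c 0 0 f =
      (dualChart R f).map ((evalRingHom m).comp (evalRingHom (C c))) := by
  have h : (evalRingHom (linePoly m c)).comp (evalRingHom (C (C m))) =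
      (mapRingHom ((evalRingHom m).comp (evalRingHom (C c)))).comp (toDualChart R) :=
    flagRingHom_ext (fun r => by simp [toDualChart]) (by simp [toDualChart])
      (by simp [toDualChart, linePoly, add_comm]) (by simp [toDualChart])
  rw [lineCoeff_zero_zero]
  exact congr($h f)

lemma natDegree_lineCoeff_zero_zero_le (m c : R) (f : R[X][X][X]) :
    (lineCoeff m c 0 0 f).natDegree ≤ lineDegree f := by
  rw [lineCoeff_zero_zero_eq_map]
  exact natDegree_map_le

end LineCoeffZero

section LineOrder

variable {K : Type*} [Field K]

lemma lineTranslate_neg_lineTranslate (m c : K) (p : K[X][X]) :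
    lineTranslate (-m) (-c) (lineTranslate m c p) = p := by
  have h : linePoly (-m) (-c) + linePoly m c = 0 := by
    simp only [linePoly, map_neg]
    ring
  rw [lineTranslate_apply, lineTranslate_apply, taylor_taylor, h, taylor_zero]

lemma lineTranslate_lineEquation (m c : K) : lineTranslate m c (lineEquation m c) = X := by
  simp [lineTranslate_apply, lineEquation]

lemma lineEquation_pow_dvd_iff {m c : K} {p : K[X][X]} {k : ℕ} :
    lineEquation m c ^ k ∣ p ↔ ∀ i < k, (lineTranslate m c p).coeff i = 0 := by
  rw [← X_pow_dvd_iff]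
  constructor <;> intro h
  · simpa [lineTranslate_lineEquation] using map_dvd (lineTranslate m c) h
  · have hX : lineTranslate (-m) (-c) X = lineEquation m c := by
      rw [← lineTranslate_lineEquation m c, lineTranslate_neg_lineTranslate]
    simpa [lineTranslate_neg_lineTranslate, hX] using map_dvd (lineTranslate (-m) (-c)) h

/-- The filtration of `K[x][y]` by the order along the line `y = m x + c`, the equation of the line
having weight `M`. -/
noncomputable abbrev lineFiltration (m c : K) (M : ℕ) : ℤ → AddSubgroup K[X][X] :=
  comapFiltration (lineTranslate m c) (coeffFiltration M (constOrder K[X]))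

lemma mem_lineFiltration {m c : K} {M : ℕ} {r : ℤ} {p : K[X][X]} :
    p ∈ lineFiltration m c M r ↔ ∀ k : ℕ, M * k < r → (lineTranslate m c p).coeff k = 0 := by
  simp [mem_comapFiltration, mem_coeffFiltration, mem_constOrder]

lemma LineOrderGE.coeff_slopeShift_mem {m c : K} {M a : ℕ} {f : K[X][X][X]} {r : ℕ}
    (h : LineOrderGE m c M a f r) :
    slopeShift m f ∈ coeffFiltration a (lineFiltration m c M) r := by
  intro j
  rw [mem_lineFiltration]
  intro k hk
  rw [← lineShift_coeff]
  exact h k j (by zify; linarith)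

lemma slopeShift_mem_coeffFiltration_lineDegree (l : K) (f : K[X][X][X]) :
    slopeShift l f ∈ coeffFiltration (-1)
      (comapFiltration (evalRingHom (C l * X)) (degreeFiltration K)) (lineDegree f) := by
  intro j
  rw [mem_comapFiltration, coe_evalRingHom, ← coeff_radialRestrict]
  exact radialRestrict_mem_coeffFiltration l f j

variable [Infinite K] {ι : Type*} [Fintype ι] {m : ι → K} (c : ι → K) {M : ℕ}

lemma sum_order_le_mul_of_mem_lineFiltration (hm : Function.Injective m) (hM : 0 < M)
    {p : K[X][X]} (hp : p ≠ 0) {r : ι → ℤ} (hr : ∀ i, p ∈ lineFiltration (m i) (c i) M (r i))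
    {N : ℕ} (hN : ∀ l : K, (p.eval (C l * X)).natDegree ≤ N) : ∑ i, r i ≤ M * N := by
  have hM' : (0 : ℚ) < M := by exact_mod_cast hM
  have hsum : ∑ i, ⌈(r i / M : ℚ)⌉₊ ≤ N := by
    refine sum_order_le_of_lineEquation_pow_dvd c hm.injOn hp (fun i _ => ?_) hN
    refine lineEquation_pow_dvd_iff.2 fun k hk => mem_lineFiltration.1 (hr i) k ?_
    rw [Nat.lt_ceil, lt_div_iff₀' hM'] at hk
    exact_mod_cast hk
  have hle (i : ι) : r i ≤ M * (⌈(r i / M : ℚ)⌉₊ : ℤ) := by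
    have h := (div_le_iff₀' hM').1 (Nat.le_ceil (r i / M : ℚ))
    exact_mod_cast h
  calc ∑ i, r i ≤ ∑ i, M * (⌈(r i / M : ℚ)⌉₊ : ℤ) := Finset.sum_le_sum fun i _ => hle i
    _ = M * ∑ i, (⌈(r i / M : ℚ)⌉₊ : ℤ) := by rw [Finset.mul_sum]
    _ ≤ M * N := mul_le_mul_of_nonneg_left (by exact_mod_cast hsum) (by positivity)

variable {a : ι → ℕ} {f : K[X][X][X]} {r : ι → ℕ}

lemma sum_lineOrder_le_of_natDegree_eq_zero (hm : Function.Injective m) (hM : 0 < M) (hf : f ≠ 0)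
    (hd : f.natDegree = 0) (hr : ∀ i, LineOrderGE (m i) (c i) M (a i) f (r i)) :
    ∑ i, r i ≤ M * lineDegree f := by
  obtain ⟨q, rfl⟩ := natDegree_eq_zero.1 hd
  have hC (l : K) : (slopeShift l (C q)).coeff 0 = q := by simp [slopeShift_apply]
  have h := sum_order_le_mul_of_mem_lineFiltration c hm hM (by simpa using hf)
    (r := fun i => (r i : ℤ)) (N := lineDegree (C q))
    (fun i => by simpa [hC] using (hr i).coeff_slopeShift_mem 0)
    (fun l => by simpa [hC] using natDegree_eval_coeff_slopeShift_le (C q) l 0)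
  exact_mod_cast h

-- The discriminant of `f` in `t` is bounded in degree and divisible by the line equations.
lemma two_mul_sum_lineOrder_le_of_prime [CharZero K] (hm : Function.Injective m) (hM : 0 < M)
    (hf : Prime f) (hd : 2 ≤ f.natDegree) (hr : ∀ i, LineOrderGE (m i) (c i) M (a i) f (r i)) :
    2 * ∑ i, r i ≤ 2 * M * lineDegree f + (M + ∑ i, a i) * f.natDegree := by
  set n := f.natDegree
  have hdiscr (l : K) : (slopeShift l f).discr = f.discr := discr_taylor (two_pos.trans_le hd) _
  have hdeg (l : K) : (slopeShift l f).natDegree = n := natDegree_taylor _ _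
  have hcast : (((2 * n - 2) * lineDegree f + n * (n - 1) : ℕ) : ℤ) =
      (2 * n - 2) * lineDegree f + n * (n - 1) := by
    push_cast [Nat.cast_sub (show 2 ≤ 2 * n by omega), Nat.cast_sub (show 1 ≤ n by omega)]
    ring
  have hsum := sum_order_le_mul_of_mem_lineFiltration c hm hM
    (discr_ne_zero_of_prime (two_pos.trans_le hd) hf)
    (r := fun i => (2 * n - 2) * (r i : ℤ) - n * (n - 1) * a i)
    (N := (2 * n - 2) * lineDegree f + n * (n - 1)) (fun i => ?_) (fun l => ?_)
  · rw [Finset.sum_sub_distrib, ← Finset.mul_sum, ← Finset.mul_sum, hcast] at hsum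
    have h : ((n : ℤ) - 1) * (2 * ∑ i, (r i : ℤ)) ≤
        (n - 1) * (2 * M * lineDegree f + (M + ∑ i, (a i : ℤ)) * n) := by linarith
    exact_mod_cast le_of_mul_le_mul_left h (by omega)
  · simpa only [hdiscr, hdeg] using discr_mem_of_mem_coeffFiltration
      (by rw [hdeg]; exact hd) (hr i).coeff_slopeShift_mem
  · have h := discr_mem_of_mem_coeffFiltration (by rw [hdeg]; exact hd)
      (slopeShift_mem_coeffFiltration_lineDegree l f)
    rw [hdiscr, hdeg, mem_comapFiltration, coe_evalRingHom] at h
    rw [← mem_degreeFiltration, hcast]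
    convert h using 2
    ring

end LineOrder

/-! ### Weights of lines and subspaces of the dual space -/

section LineCovector

variable {K : Type*} [Field K]

lemma sum_finrank_eigenspace_le {V : Type*} [AddCommGroup V] [Module K V] [FiniteDimensional K V]
    (f : Module.End K V) (s : Finset K) :
    ∑ μ ∈ s, Module.finrank K (f.eigenspace μ) ≤ Module.finrank K V := by
  classical
  have hindep := f.eigenspaces_iSupIndep.comp (f := fun μ : s => (μ : K)) Subtype.val_injective
  rw [← Finset.sum_coe_sort, ← Module.finrank_directSum]
  exact LinearMap.finrank_le_finrank_of_injective hindep.dfinsupp_lsum_injective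

/-- The coordinates, dual to `(1, x, y)`, of the equation of the line `y = m x + c`. -/
def lineCovector (m c : K) : Fin 3 → K := ![c, m, -1]

lemma linearIndependent_lineCovector {m m' : K} (h : m ≠ m') (c c' : K) :
    LinearIndependent K ![lineCovector m c, lineCovector m' c'] := by
  refine LinearIndependent.pair_iff.2 fun s t hst => ?_
  have h1 : s * m + t * m' = 0 := by simpa [lineCovector] using congr($hst 1)
  have h2 : s * -1 + t * -1 = 0 := by simpa [lineCovector] using congr($hst 2)
  have ht : t * (m' - m) = 0 := by linear_combination h1 + m * h2
  have ht0 : t = 0 := (mul_eq_zero.1 ht).resolve_right (sub_ne_zero.2 h.symm)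
  exact ⟨by linear_combination -h2 - ht0, ht0⟩

variable {ι : Type*} {m : ι → K} {c : ι → K} {M : ℕ} {a : ι → ℕ}

lemma card_le_finrank_of_lineCovector_mem (hm : Function.Injective m)
    {W : Submodule K (Fin 3 → K)} {s : Finset ι} (hs : ∀ i ∈ s, lineCovector (m i) (c i) ∈ W)
    (hW : Module.finrank K W ≤ 1) : s.card ≤ Module.finrank K W := by
  by_contra! h
  obtain hW0 | hW1 : Module.finrank K W = 0 ∨ Module.finrank K W = 1 := by omega
  · obtain ⟨i, hi⟩ := Finset.card_pos.1 (hW0 ▸ h)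
    have h0 : lineCovector (m i) (c i) = 0 := by
      simpa [Submodule.finrank_eq_zero.1 hW0] using hs i hi
    simpa [lineCovector] using congr($h0 2)
  · obtain ⟨i, hi, j, hj, hij⟩ := Finset.one_lt_card.1 (hW1 ▸ h)
    have hle := LinearIndependent.fintype_card_le_finrank (R := K) (M := W)
      (b := ![⟨_, hs i hi⟩, ⟨_, hs j hj⟩]) (LinearIndependent.of_comp W.subtype (by
        convert linearIndependent_lineCovector (hm.ne hij) (c i) (c j) using 1
        ext k l; fin_cases k <;> rfl))
    simp only [Fintype.card_fin] at hle
    omega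

lemma sum_le_two_mul_of_dual_eq_zero (hm : Function.Injective m) (ha : ∀ i, a i ≤ M)
    (hpt : ∀ x y : K, ∀ s : Finset ι, (∀ i ∈ s, y = m i * x + c i) → ∑ i ∈ s, a i ≤ 2 * M)
    {v : Fin 3 → K} (hv : v ≠ 0) {s : Finset ι}
    (hs : ∀ i ∈ s, lineCovector (m i) (c i) ⬝ᵥ v = 0) : ∑ i ∈ s, a i ≤ 2 * M := by
  replace hs : ∀ i ∈ s, c i * v 0 + m i * v 1 - v 2 = 0 := fun i hi => by
    simpa [lineCovector, dotProduct, Fin.sum_univ_three, sub_eq_add_neg] using hs i hi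
  by_cases h0 : v 0 = 0
  · by_cases h1 : v 1 = 0
    · obtain rfl : s = ∅ := Finset.eq_empty_of_forall_notMem fun i hi => hv <| by
        ext k
        fin_cases k
        · exact h0
        · exact h1
        · simpa [h0, h1] using hs i hi
      simp
    · have hcard : s.card ≤ 1 := Finset.card_le_one.2 fun i hi j hj => hm <|
        mul_right_cancel₀ h1 (by linear_combination hs i hi - hs j hj + (c j - c i) * h0)
      calc ∑ i ∈ s, a i ≤ s.card • M := Finset.sum_le_card_nsmul _ _ _ fun i _ => ha i
        _ ≤ 2 * M := by rw [smul_eq_mul]; gcongr; omega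
  · refine hpt (v 1 / v 0) (v 2 / v 0) s fun i hi => ?_
    field_simp
    linear_combination -hs i hi

lemma sum_le_mul_finrank_of_lineCovector_mem (hm : Function.Injective m) (ha : ∀ i, a i ≤ M)
    (hpt : ∀ x y : K, ∀ s : Finset ι, (∀ i ∈ s, y = m i * x + c i) → ∑ i ∈ s, a i ≤ 2 * M)
    {W : Submodule K (Fin 3 → K)} (hW : W ≠ ⊤) {s : Finset ι}
    (hs : ∀ i ∈ s, lineCovector (m i) (c i) ∈ W) :
    ∑ i ∈ s, a i ≤ M * Module.finrank K W := by
  rcases Nat.lt_or_ge 1 (Module.finrank K W) with h | h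
  · obtain ⟨φ, hφ, hφW⟩ := Submodule.exists_le_ker_of_lt_top W (lt_top_iff_ne_top.2 hW)
    obtain ⟨v, rfl⟩ := (dotProductEquiv K (Fin 3)).surjective φ
    calc ∑ i ∈ s, a i ≤ 2 * M := sum_le_two_mul_of_dual_eq_zero hm ha hpt (by simpa using hφ)
          fun i hi => by simpa [dotProduct_comm] using hφW (hs i hi)
      _ ≤ M * Module.finrank K W := by rw [mul_comm]; gcongr; omega
  · calc ∑ i ∈ s, a i ≤ s.card • M := Finset.sum_le_card_nsmul _ _ _ fun i _ => ha i
      _ ≤ M * Module.finrank K W := by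
        rw [smul_eq_mul, mul_comm]
        gcongr
        exact card_le_finrank_of_lineCovector_mem hm hs h

lemma sum_le_three_mul_of_eigenvector (hm : Function.Injective m) (ha : ∀ i, a i ≤ M)
    (hpt : ∀ x y : K, ∀ s : Finset ι, (∀ i ∈ s, y = m i * x + c i) → ∑ i ∈ s, a i ≤ 2 * M)
    {f : Module.End K (Fin 3 → K)} (hf : ∀ μ, f.eigenspace μ ≠ ⊤) {s : Finset ι} {ev : ι → K}
    (hs : ∀ i ∈ s, lineCovector (m i) (c i) ∈ f.eigenspace (ev i)) : ∑ i ∈ s, a i ≤ 3 * M := by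
  classical
  calc ∑ i ∈ s, a i = ∑ μ ∈ s.image ev, ∑ i ∈ s with ev i = μ, a i :=
        (Finset.sum_fiberwise_of_maps_to (fun i hi => Finset.mem_image_of_mem _ hi) _).symm
    _ ≤ ∑ μ ∈ s.image ev, M * Module.finrank K (f.eigenspace μ) :=
        Finset.sum_le_sum fun μ _ =>
          sum_le_mul_finrank_of_lineCovector_mem hm ha hpt (hf μ) fun i hi => by
            obtain ⟨his, rfl⟩ := Finset.mem_filter.1 hi
            exact hs i his
    _ ≤ M * Module.finrank K (Fin 3 → K) := by
        rw [← Finset.mul_sum]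
        gcongr
        exact sum_finrank_eigenspace_le f _
    _ = 3 * M := by rw [Module.finrank_fin_fun, mul_comm]

end LineCovector

/-! ### Sections of degree one -/

section TotalDegree

variable {K : Type*} [Field K]

lemma slopeShift_neg_slopeShift (l : K) (f : K[X][X][X]) :
    slopeShift (-l) (slopeShift l f) = f := by
  have h : (C (C (-l)) + C (C l) : K[X][X]) = 0 := by simp
  rw [slopeShift_apply, slopeShift_apply, taylor_taylor, h, taylor_zero]

lemma natDegree_slopeShift (l : K) (f : K[X][X][X]) :
    (slopeShift l f).natDegree = f.natDegree := natDegree_taylor _ _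

lemma coeff_mem_totalDegreeFiltration [Infinite K] (f : K[X][X][X]) (j : ℕ) :
    f.coeff j ∈ totalDegreeFiltration K ↑(lineDegree f + f.natDegree) := by
  refine mem_totalDegreeFiltration_of_natDegree_eval_le fun l => ?_
  set F := comapFiltration (evalRingHom (C l * X : K[X])) (degreeFiltration K)
  have hshift : slopeShift l f ∈ coeffFiltration 0 F ↑(lineDegree f + f.natDegree) := by
    intro k
    rw [mem_comapFiltration, zero_mul, sub_zero, mem_degreeFiltration, coe_evalRingHom]
    rcases le_or_gt k f.natDegree with hk | hk
    · exact (natDegree_eval_coeff_slopeShift_le f l k).trans (by omega)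
    · rw [coeff_eq_zero_of_natDegree_lt (by rwa [natDegree_slopeShift]), eval_zero, natDegree_zero]
      exact Nat.zero_le _
  have hC : (C (C (-l)) : K[X][X]) ∈ F 0 := by
    simpa [F, mem_comapFiltration] using C_mem_degreeFiltration (-l)
  have h := taylor_mem_coeffFiltration hC hshift j
  rw [← slopeShift_apply, slopeShift_neg_slopeShift, zero_mul, sub_zero] at h
  exact mem_degreeFiltration.1 h

lemma exists_eq_of_mem_totalDegreeFiltration_two {p : K[X][X]}
    (h : p ∈ totalDegreeFiltration K (2 : ℕ)) : ∃ a₀₀ a₁₀ a₂₀ a₀₁ a₁₁ a₀₂ : K,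
      p = C (C a₀₀ + C a₁₀ * X + C a₂₀ * X ^ 2) + C (C a₀₁ + C a₁₁ * X) * X +
        C (C a₀₂) * X ^ 2 := by
  rw [mem_totalDegreeFiltration] at h
  refine ⟨(p.coeff 0).coeff 0, (p.coeff 0).coeff 1, (p.coeff 0).coeff 2, (p.coeff 1).coeff 0,
    (p.coeff 1).coeff 1, (p.coeff 2).coeff 0, ?_⟩
  ext k i
  by_cases hki : 2 < i + k
  · rw [h k i hki]
    rcases k with _ | _ | _ | k <;> rcases i with _ | _ | _ | i <;>
      simp [-map_pow, -map_mul, -map_add, coeff_X, coeff_C, coeff_X_pow] at hki ⊢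
  · have hk : k ≤ 2 := by omega
    have hi : i ≤ 2 := by omega
    interval_cases k <;> interval_cases i <;>
      simp [-map_pow, -map_mul, -map_add, coeff_X, coeff_C, coeff_X_pow] at hki ⊢

end TotalDegree

section FlagForm

variable {K : Type*} [Field K]

/-- The polynomial `(u, t, -1) N (1, x, y)ᵀ` with `u = y - t x`, pairing the covector of a line
`y = t x + u` with the image under `N` of a point of it. -/
noncomputable def flagForm (N : Matrix (Fin 3) (Fin 3) K) : K[X][X][X] :=
  ![C X - X * C (C X), X, -1] ⬝ᵥ (N.map (constHom K)) *ᵥ ![1, C (C X), C X]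

lemma lineCoeff_zero_zero_flagForm (N : Matrix (Fin 3) (Fin 3) K) (m c : K) :
    lineCoeff m c 0 0 (flagForm N) =
      C ((lineCovector m c ᵥ* N) 0 + (lineCovector m c ᵥ* N) 2 * c) +
        C ((lineCovector m c ᵥ* N) 1 + (lineCovector m c ᵥ* N) 2 * m) * X := by
  simp only [lineCoeff_zero_zero, flagForm, linePoly, lineCovector, Matrix.vecMul, Matrix.mulVec,
    dotProduct, Fin.sum_univ_three, Matrix.cons_val, Matrix.map_apply, RingHom.comp_apply, eval_add,
    eval_mul, eval_sub, eval_neg, eval_one, eval_C, eval_X, map_add, map_mul, map_neg,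
    map_one]
  ring

lemma vecMul_lineCovector_eq_smul {N : Matrix (Fin 3) (Fin 3) K} {m c : K}
    (h : lineCoeff m c 0 0 (flagForm N) = 0) :
    lineCovector m c ᵥ* N = -(lineCovector m c ᵥ* N) 2 • lineCovector m c := by
  rw [lineCoeff_zero_zero_flagForm] at h
  have h0 := congr(($h).coeff 0)
  have h1 := congr(($h).coeff 1)
  simp only [coeff_add, coeff_C_zero, coeff_C_mul, coeff_X_zero, coeff_X_one, coeff_zero,
    coeff_C_succ] at h0 h1
  ext k
  fin_cases k <;> simp only [lineCovector, Pi.smul_apply, smul_eq_mul, Fin.zero_eta, Fin.mk_one,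
    Fin.reduceFinMk, Matrix.cons_val] at h0 h1 ⊢
  · linear_combination h0
  · linear_combination h1
  · ring

lemma apply_two_eq_zero_of_lineDegree_eq_zero [CharZero K] {N : Matrix (Fin 3) (Fin 3) K}
    (h : lineDegree (flagForm N) = 0) : N 0 2 = 0 ∧ N 1 2 = 0 := by
  have hcoeff (m c : K) : (lineCovector m c ᵥ* N) 1 + (lineCovector m c ᵥ* N) 2 * m = 0 := by
    have hdeg := natDegree_lineCoeff_zero_zero_le m c (flagForm N)
    rw [h, lineCoeff_zero_zero_flagForm] at hdeg
    simpa [-map_add, -map_mul, coeff_C] using coeff_eq_zero_of_natDegree_lt (hdeg.trans_lt one_pos)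
  simp only [lineCovector, Matrix.vecMul, dotProduct, Fin.sum_univ_three, Matrix.cons_val] at hcoeff
  have h00 := hcoeff 0 0
  have h01 := hcoeff 0 1
  have h10 := hcoeff 1 0
  have h11 := hcoeff 1 1
  have h20 := hcoeff (-1) 0
  exact ⟨by linear_combination h11 - h10 - h01 + h00, by linear_combination (h10 + h20) / 2 - h00⟩

lemma exists_eq_flagForm [CharZero K] {p : K[X][X][X]} (hd : p.natDegree ≤ 1)
    (hD : lineDegree p ≤ 1) : ∃ N, p = flagForm N := by
  have htotal (j : ℕ) : p.coeff j ∈ totalDegreeFiltration K (2 : ℕ) :=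
    coeffFiltration_mono degreeFiltration_mono (by omega) (coeff_mem_totalDegreeFiltration p j)
  obtain ⟨a₀₀, a₁₀, a₂₀, a₀₁, a₁₁, a₀₂, hA⟩ :=
    exists_eq_of_mem_totalDegreeFiltration_two (htotal 1)
  obtain ⟨b₀₀, b₁₀, b₂₀, b₀₁, b₁₁, b₀₂, hB⟩ :=
    exists_eq_of_mem_totalDegreeFiltration_two (htotal 0)
  have hp := eq_X_add_C_of_natDegree_le_one hd
  rw [hA, hB] at hp
  -- The restrictions to lines through the origin have no quadratic term.
  have hquad (m : K) : m * (a₂₀ + a₁₁ * m + a₀₂ * m ^ 2) + b₂₀ + b₁₁ * m + b₀₂ * m ^ 2 = 0 := by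
    have h := natDegree_lineCoeff_zero_zero_le m 0 p
    have hrestrict : lineCoeff m 0 0 0 p =
        C (m * (a₂₀ + a₁₁ * m + a₀₂ * m ^ 2) + b₂₀ + b₁₁ * m + b₀₂ * m ^ 2) * X ^ 2 +
          C (m * (a₁₀ + a₀₁ * m) + b₁₀ + b₀₁ * m) * X + C (m * a₀₀ + b₀₀) := by
      rw [lineCoeff_zero_zero, hp]
      simp only [linePoly, map_zero, map_add, map_mul, map_pow, eval_add, eval_mul, eval_pow,
        eval_C, eval_X]
      ring
    rw [hrestrict] at h
    simpa [-map_add, -map_mul, -map_pow, coeff_X, coeff_C] using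
      coeff_eq_zero_of_natDegree_lt (h.trans_lt (Nat.lt_succ_of_le hD))
  have hm0 := hquad 0
  have hm1 := hquad 1
  have hm2 := hquad (-1)
  have hm3 := hquad 2
  obtain rfl : b₂₀ = 0 := by linear_combination hm0
  obtain rfl : a₀₂ = 0 := by linear_combination (hm3 - 3 * hm1 - hm2) / 6
  obtain rfl : b₀₂ = -a₁₁ := by linear_combination (hm1 + hm2) / 2
  obtain rfl : b₁₁ = -a₂₀ := by linear_combination (hm1 - hm2) / 2
  refine ⟨!![0, -a₂₀, -a₁₁; a₀₀, a₁₀, a₀₁; -b₀₀, -b₁₀, -b₀₁], hp.trans ?_⟩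
  simp only [flagForm, Matrix.mulVec, dotProduct, Fin.sum_univ_three, Matrix.of_apply,
    Matrix.cons_val, Matrix.map_apply, RingHom.comp_apply, map_add, map_mul, map_pow, map_neg,
    map_zero]
  ring

lemma flagForm_scalar (μ : K) : flagForm (Matrix.scalar (Fin 3) μ) = 0 := by
  simp only [flagForm, Matrix.mulVec, dotProduct, Fin.sum_univ_three, Matrix.scalar_apply,
    Matrix.diagonal_apply, Matrix.cons_val, Matrix.map_apply, RingHom.comp_apply, Fin.reduceEq,
    ↓reduceIte, map_zero]
  ring

lemma eigenspace_vecMulLinear_ne_top {N : Matrix (Fin 3) (Fin 3) K} (h : flagForm N ≠ 0) (μ : K) :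
    Module.End.eigenspace (N.vecMulLinear : Module.End K (Fin 3 → K)) μ ≠ ⊤ := by
  rintro htop
  have hN : N = Matrix.scalar (Fin 3) μ := by
    ext i j
    have hi : Pi.single i 1 ∈
        Module.End.eigenspace (N.vecMulLinear : Module.End K (Fin 3 → K)) μ := htop ▸ trivial
    simpa [Matrix.diagonal_apply, Pi.single_apply, eq_comm] using
      congr($(Module.End.mem_eigenspace_iff.1 hi) j)
  exact h (hN ▸ flagForm_scalar μ)

variable [CharZero K] {ι : Type*} {m : ι → K} {c : ι → K} {M : ℕ} {a : ι → ℕ}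

-- The lines in question are eigenvectors of the matrix defining `p`.
lemma sum_weight_le_of_lineCoeff_zero_zero_eq_zero (hm : Function.Injective m)
    (ha : ∀ i, a i ≤ M)
    (hpt : ∀ x y : K, ∀ s : Finset ι, (∀ i ∈ s, y = m i * x + c i) → ∑ i ∈ s, a i ≤ 2 * M)
    {p : K[X][X][X]} (hp : p ≠ 0) (hd : p.natDegree ≤ 1) (hD : lineDegree p ≤ 1) {s : Finset ι}
    (hs : ∀ i ∈ s, lineCoeff (m i) (c i) 0 0 p = 0) : ∑ i ∈ s, a i ≤ (2 + lineDegree p) * M := by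
  obtain ⟨N, rfl⟩ := exists_eq_flagForm hd hD
  have htop := eigenspace_vecMulLinear_ne_top hp
  have heigen : ∀ i ∈ s, lineCovector (m i) (c i) ∈ Module.End.eigenspace
      (N.vecMulLinear : Module.End K (Fin 3 → K)) (-(lineCovector (m i) (c i) ᵥ* N) 2) :=
    fun i hi => Module.End.mem_eigenspace_iff.2 (vecMul_lineCovector_eq_smul (hs i hi))
  obtain h0 | h1 : lineDegree (flagForm N) = 0 ∨ lineDegree (flagForm N) = 1 := by omega
  · obtain ⟨hN0, hN1⟩ := apply_two_eq_zero_of_lineDegree_eq_zero h0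
    have hN (i : ι) : -(lineCovector (m i) (c i) ᵥ* N) 2 = N 2 2 := by
      simp [lineCovector, Matrix.vecMul, dotProduct, Fin.sum_univ_three, hN0, hN1]
    have hlt := Submodule.finrank_lt (htop (N 2 2))
    rw [Module.finrank_fin_fun] at hlt
    calc ∑ i ∈ s, a i ≤ M * _ :=
          sum_le_mul_finrank_of_lineCovector_mem hm ha hpt (htop (N 2 2)) fun i hi =>
            hN i ▸ heigen i hi
      _ ≤ (2 + lineDegree (flagForm N)) * M := by rw [mul_comm]; gcongr; omega
  · rw [h1]
    exact sum_le_three_mul_of_eigenvector hm ha hpt htop heigen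

end FlagForm

/-! ### Semistability -/

section Semistable

variable {K : Type*} [Field K]

lemma lineOrder_le_of_prime {m c : K} {M a r : ℕ} {p : K[X][X][X]} (hp : Prime p)
    (hd : p.natDegree = 1) (h : LineOrderGE m c M a p r) : r ≤ a := by
  by_contra! hlt
  have hcoeff (j : ℕ) : lineEquation m c ∣ (slopeShift m p).coeff j := by
    rcases le_or_gt j 1 with hj | hj
    · rw [← pow_one (lineEquation m c), lineEquation_pow_dvd_iff]
      intro i hi
      rw [← lineShift_coeff]
      exact h i j (by interval_cases i; interval_cases j <;> omega)
    · rw [coeff_eq_zero_of_natDegree_lt (by rwa [natDegree_slopeShift, hd])]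
      exact dvd_zero _
  obtain ⟨g, hg⟩ : C (lineEquation m c) ∣ p := by
    have := map_dvd (slopeShift (-m)) ((C_dvd_iff_dvd_coeff _ _).2 hcoeff)
    rwa [slopeShift_neg_slopeShift, slopeShift_apply, taylor_C] at this
  rcases hp.irreducible.isUnit_or_isUnit hg with hu | hu
  · exact (prime_lineEquation m c).not_isUnit (isUnit_C.1 hu)
  · have hle : p.natDegree ≤ 0 := hg ▸ natDegree_mul_le.trans
      (by rw [natDegree_C, natDegree_eq_zero_of_isUnit hu])
    omega

variable [CharZero K] {ι : Type*} [Fintype ι] {m : ι → K} (c : ι → K) {M : ℕ} {a : ι → ℕ}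

lemma two_mul_sum_lineOrder_le_of_natDegree_eq_one (hm : Function.Injective m) (ha : ∀ i, a i ≤ M)
    (hpt : ∀ x y : K, ∀ s : Finset ι, (∀ i ∈ s, y = m i * x + c i) → ∑ i ∈ s, a i ≤ 2 * M)
    (hle : 3 * M ≤ ∑ i, a i) (hge : ∑ i, a i ≤ 5 * M) {p : K[X][X][X]} (hp : Prime p)
    (hd : p.natDegree = 1) {r : ι → ℕ} (hr : ∀ i, LineOrderGE (m i) (c i) M (a i) p (r i)) :
    2 * ∑ i, r i ≤ 2 * M * lineDegree p + (M + ∑ i, a i) := by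
  classical
  set s : Finset ι := {i | lineCoeff (m i) (c i) 0 0 p = 0} with hs
  have hsum : ∑ i, r i ≤ ∑ i ∈ s, a i := by
    rw [hs, Finset.sum_filter]
    refine Finset.sum_le_sum fun i _ => ?_
    split_ifs with h
    · exact lineOrder_le_of_prime hp hd (hr i)
    · by_contra hpos
      exact h (hr i 0 0 (by omega))
  rcases Nat.lt_or_ge (lineDegree p) 2 with h | h
  · have hbound := sum_weight_le_of_lineCoeff_zero_zero_eq_zero hm ha hpt hp.ne_zero hd.le
      (by omega) (s := s) fun i hi => (Finset.mem_filter.1 hi).2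
    interval_cases lineDegree p <;> omega
  · have hmono : ∑ i ∈ s, a i ≤ ∑ i, a i := Finset.sum_le_sum_of_subset (Finset.subset_univ s)
    nlinarith

theorem two_mul_sum_lineOrder_le (hm : Function.Injective m) (hM : 0 < M) (ha : ∀ i, a i ≤ M)
    (hpt : ∀ x y : K, ∀ s : Finset ι, (∀ i ∈ s, y = m i * x + c i) → ∑ i ∈ s, a i ≤ 2 * M)
    (hle : 3 * M ≤ ∑ i, a i) (hge : ∑ i, a i ≤ 5 * M) {f : K[X][X][X]} (hf : f ≠ 0) {r : ι → ℕ}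
    (hr : ∀ i, LineOrderGE (m i) (c i) M (a i) f (r i)) :
    2 * ∑ i, r i ≤ 2 * M * lineDegree f + (M + ∑ i, a i) * f.natDegree := by
  induction f using UniqueFactorizationMonoid.induction_on_prime generalizing r with
  | h₁ => exact absurd rfl hf
  | h₂ f hu =>
    have h := sum_lineOrder_le_of_natDegree_eq_zero c hm hM hf (natDegree_eq_zero_of_isUnit hu) hr
    rw [mul_assoc]
    omega
  | h₃ g p hg hp ih =>
    choose r₁ r₂ hr₁₂ hr₁ hr₂ using fun i => exists_lineOrderGE_of_mul hp.ne_zero hg (hr i)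
    have hp_le : 2 * ∑ i, r₁ i ≤ 2 * M * lineDegree p + (M + ∑ i, a i) * p.natDegree := by
      obtain h0 | h1 | h2 : p.natDegree = 0 ∨ p.natDegree = 1 ∨ 2 ≤ p.natDegree := by omega
      · have h := sum_lineOrder_le_of_natDegree_eq_zero c hm hM hp.ne_zero h0 hr₁
        rw [mul_assoc]
        omega
      · simpa only [h1, mul_one] using
          two_mul_sum_lineOrder_le_of_natDegree_eq_one c hm ha hpt hle hge hp h1 hr₁
      · exact two_mul_sum_lineOrder_le_of_prime c hm hM hp h2 hr₁
    have hsum : ∑ i, r i ≤ ∑ i, r₁ i + ∑ i, r₂ i := by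
      rw [← Finset.sum_add_distrib]
      exact Finset.sum_le_sum fun i _ => hr₁₂ i
    rw [lineDegree_mul hp.ne_zero hg, natDegree_mul hp.ne_zero hg, mul_add, mul_add]
    have hg_le := ih hg hr₂
    omega

end Semistable

/-! ### Coefficients of low order at the origin -/

section LowIdeal

variable {R : Type*} [CommRing R]

/-- The ideal `(x ^ e, y ^ e)` of `R[x][y]`, described by the vanishing of coefficients. -/
def lowIdeal (R : Type*) [CommRing R] (e : ℕ) : Ideal R[X][X] where
  carrier := {p | ∀ k < e, ∀ i < e, (p.coeff k).coeff i = 0}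
  zero_mem' k _ i _ := by simp
  add_mem' hp hq k hk i hi := by rw [coeff_add, coeff_add, hp k hk i hi, hq k hk i hi, add_zero]
  smul_mem' r p hp k hk i hi := by
    rw [smul_eq_mul, coeff_mul, finsetSum_coeff]
    refine Finset.sum_eq_zero fun x hx => ?_
    rw [coeff_mul]
    refine Finset.sum_eq_zero fun y hy => ?_
    have h₁ := Finset.HasAntidiagonal.mem_antidiagonal.1 hx
    have h₂ := Finset.HasAntidiagonal.mem_antidiagonal.1 hy
    rw [hp _ (by omega) _ (by omega), mul_zero]

lemma exists_forall_coeff_eq {n : ℕ} {a : ℕ → R} (ha : ∀ j, n < j → a j = 0) :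
    ∃ p : R[X], ∀ j, p.coeff j = a j := by
  refine ⟨∑ j ∈ Finset.range (n + 1), monomial j (a j), fun j => ?_⟩
  simp only [finsetSum_coeff, coeff_monomial, Finset.sum_ite_eq', Finset.mem_range]
  exact ite_eq_left_iff.2 fun h => (ha j (by omega)).symm

lemma exists_eq_add_of_mem_lowIdeal {e D : ℕ} {p : R[X][X]} (hp : p ∈ lowIdeal R e)
    (hD : p ∈ totalDegreeFiltration R (e + D : ℕ)) :
    ∃ p₁ ∈ totalDegreeFiltration R D, ∃ p₂ ∈ totalDegreeFiltration R D,
      p = C (X ^ e) * p₁ + X ^ e * p₂ := by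
  rw [mem_totalDegreeFiltration] at hD
  choose! q hq using fun k hk => X_pow_dvd_iff.2 (hp k hk)
  have hqcoeff : ∀ k < e, ∀ i, (q k).coeff i = (p.coeff k).coeff (i + e) := fun k hk i => by
    rw [hq k hk, coeff_X_pow_mul]
  have hbig : ∀ k, D + e < k → p.coeff k = 0 := fun k hk => by
    ext i
    exact hD k i (by omega)
  obtain ⟨p₁, hp₁⟩ := exists_forall_coeff_eq (n := e) (a := fun k => if k < e then q k else 0)
    fun k hk => if_neg (by omega)
  obtain ⟨p₂, hp₂⟩ := exists_forall_coeff_eq (n := D) (a := fun k => p.coeff (k + e))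
    fun k hk => hbig _ (by omega)
  refine ⟨p₁, ?_, p₂, ?_, ?_⟩
  · rw [mem_totalDegreeFiltration]
    intro k i hik
    rw [hp₁]
    split_ifs with hk
    · rw [hqcoeff k hk, hD k _ (by omega)]
    · exact coeff_zero i
  · rw [mem_totalDegreeFiltration]
    intro k i hik
    rw [hp₂, hD _ _ (by omega)]
  · ext1 k
    rw [coeff_add, coeff_C_mul, coeff_X_pow_mul', hp₁]
    split_ifs with h₁ h₂ h₂
    · omega
    · rw [← hq k h₁, add_zero]
    · rw [hp₂, Nat.sub_add_cancel h₂, mul_zero, zero_add]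
    · omega

lemma exists_eq_add_of_forall_coeff_mem_lowIdeal {e D : ℕ} {f : R[X][X][X]}
    (hf : ∀ j, f.coeff j ∈ lowIdeal R e)
    (hD : ∀ j, f.coeff j ∈ totalDegreeFiltration R (e + D : ℕ)) :
    ∃ s₁ s₂ : R[X][X][X], f = C (C X) ^ e * s₁ + C X ^ e * s₂ ∧
      (s₁.natDegree ≤ f.natDegree ∧ ∀ j, s₁.coeff j ∈ totalDegreeFiltration R D) ∧
      (s₂.natDegree ≤ f.natDegree ∧ ∀ j, s₂.coeff j ∈ totalDegreeFiltration R D) := by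
  choose p₁ hp₁ p₂ hp₂ hp using fun j => exists_eq_add_of_mem_lowIdeal (hf j) (hD j)
  have hcut (p : ℕ → R[X][X]) (hp : ∀ j, p j ∈ totalDegreeFiltration R D) :
      ∃ s : R[X][X][X], (∀ j, s.coeff j = if j ≤ f.natDegree then p j else 0) ∧
        s.natDegree ≤ f.natDegree ∧ ∀ j, s.coeff j ∈ totalDegreeFiltration R D := by
    obtain ⟨s, hs⟩ := exists_forall_coeff_eq (a := fun j => if j ≤ f.natDegree then p j else 0)
      fun j (hj : f.natDegree < j) => if_neg hj.not_ge
    refine ⟨s, hs, natDegree_le_iff_coeff_eq_zero.2 fun j hj => by rw [hs, if_neg hj.not_ge],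
      fun j => ?_⟩
    rw [hs]
    split_ifs
    · exact hp j
    · exact zero_mem _
  obtain ⟨s₁, hs₁, h₁⟩ := hcut p₁ hp₁
  obtain ⟨s₂, hs₂, h₂⟩ := hcut p₂ hp₂
  refine ⟨s₁, s₂, ?_, h₁, h₂⟩
  ext1 j
  rw [coeff_add, ← C_pow, ← C_pow, ← C_pow, coeff_C_mul, coeff_C_mul, hs₁, hs₂]
  split_ifs with hj
  · exact hp j
  · rw [coeff_eq_zero_of_natDegree_lt (not_le.1 hj), mul_zero, mul_zero, add_zero]

lemma eq_zero_of_add_X_pow_mul_eq_zero {e : ℕ} {p q : R[X]} (hp : p.natDegree < e)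
    (h : p + X ^ e * q = 0) : p = 0 ∧ q = 0 := by
  have hq : q = 0 := by
    ext i
    have := congr(($h).coeff (i + e))
    rwa [coeff_add, coeff_X_pow_mul, coeff_eq_zero_of_natDegree_lt (by omega), zero_add] at this
  exact ⟨by rwa [hq, mul_zero, add_zero] at h, hq⟩

lemma natDegree_coeff_coeff_dualChart_le {s : R[X][X][X]} {D : ℕ}
    (hs : ∀ j, s.coeff j ∈ totalDegreeFiltration R D) (i j : ℕ) :
    (((dualChart R s).coeff i).coeff j).natDegree ≤ D + s.natDegree := by
  set G := coeffFiltration 0 (coeffFiltration 0 (degreeFiltration R))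
  have hmono : Monotone G := coeffFiltration_mono (coeffFiltration_mono degreeFiltration_mono)
  have hT : (C (C X) : R[X][X][X]) ∈ G 1 :=
    C_mem_coeffFiltration (C_mem_coeffFiltration X_mem_coeffFiltration)
  have hx : (X : R[X][X][X]) ∈ G 0 := X_mem_coeffFiltration
  have hu : (C X : R[X][X][X]) ∈ G 0 := C_mem_coeffFiltration X_mem_coeffFiltration
  have hy : C X + C (C X) * X ∈ G 1 :=
    add_mem (hmono zero_le_one hu) (by simpa using SetLike.mul_mem_graded hT hx)
  have hconst (r : R) : constHom R r ∈ G 0 :=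
    C_mem_coeffFiltration (C_mem_coeffFiltration (C_mem_degreeFiltration r))
  suffices h : dualChart R s ∈ G ↑(D + s.natDegree) by
    rw [← mem_degreeFiltration]
    exact degreeFiltration_mono (by simp) (h i j)
  rw [dualChart_apply]
  refine eval₂_mem_of_forall_coeff (w := 1) _ hT fun j => ?_
  rcases le_or_gt j s.natDegree with hj | hj
  · refine hmono (a := D) (by push_cast; omega) ?_
    refine eval₂_mem_of_forall_coeff (w := 1) _ hy fun k => ?_
    rcases le_or_gt k D with hk | hk
    · refine hmono (a := 0) (by omega) ?_
      exact eval₂_mem_of_forall_coeff (w := 0) _ hx fun i => by simpa using hconst _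
    · have hzero : (s.coeff j).coeff k = 0 := by
        ext i
        exact mem_totalDegreeFiltration.1 (hs j) k i (by omega)
      rw [hzero, map_zero]
      exact zero_mem _
  · rw [coeff_eq_zero_of_natDegree_lt hj, map_zero]
    exact zero_mem _

-- The innermost degrees of the two summands of the top coefficient do not overlap.
lemma lineDegree_le_of_eq_add {f s₁ s₂ : R[X][X][X]} {D e k : ℕ}
    (hf : f = C (C X) ^ e * s₁ + C X ^ e * s₂)
    (h₁ : ∀ j, s₁.coeff j ∈ totalDegreeFiltration R D)
    (he : D + s₁.natDegree < e) (hdeg : lineDegree f ≤ e + k) :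
    lineDegree s₁ ≤ k ∧ lineDegree s₂ ≤ k := by
  rw [← max_le_iff]
  set d := max (lineDegree s₁) (lineDegree s₂)
  by_contra! hlt
  set y : R[X][X][X] := C X + C (C X) * X
  have hy : y.natDegree ≤ 1 := (congrArg natDegree (add_comm _ _)).trans_le natDegree_linear_le
  have hye : (y ^ e).natDegree ≤ e := by simpa using natDegree_pow_le_of_le e hy
  have hycoeff : (y ^ e).coeff e = C (X ^ e) := by
    simpa [y] using coeff_pow_of_natDegree_le hy (m := e)
  have hdual : dualChart R f = X ^ e * dualChart R s₁ + y ^ e * dualChart R s₂ := by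
    have hx' : toDualChart R (C (C X)) = X := by simp [toDualChart]
    have hy' : toDualChart R (C X) = y := by simp [toDualChart, y]
    simp only [hf, dualChart_apply, map_add, map_mul, map_pow, hx', hy']
  have hs₂ : (dualChart R s₂).natDegree ≤ d := le_max_right _ _
  have htop : (dualChart R s₁).coeff d + C (X ^ e) * (dualChart R s₂).coeff d = 0 := by
    have h : (dualChart R f).coeff (e + d) = 0 :=
      coeff_eq_zero_of_natDegree_lt (hdeg.trans_lt (by omega))
    rwa [hdual, coeff_add, coeff_mul_add_eq_of_natDegree_le hye hs₂, hycoeff,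
      add_comm e d, coeff_X_pow_mul] at h
  have hzero (j : ℕ) :
      ((dualChart R s₁).coeff d).coeff j = 0 ∧ ((dualChart R s₂).coeff d).coeff j = 0 :=
    eq_zero_of_add_X_pow_mul_eq_zero
      ((natDegree_coeff_coeff_dualChart_le h₁ d j).trans_lt he)
      (by simpa only [coeff_add, coeff_C_mul, coeff_zero] using congr(($htop).coeff j))
  have hne (s : R[X][X][X]) (hs : lineDegree s = d) : (dualChart R s).coeff d ≠ 0 := by
    rw [← hs, lineDegree, coeff_natDegree, leadingCoeff_ne_zero]
    rintro h
    rw [lineDegree, h, natDegree_zero] at hs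
    omega
  rcases max_choice (lineDegree s₁) (lineDegree s₂) with h | h
  · exact hne s₁ (by omega) (by ext1 j; exact (hzero j).1)
  · exact hne s₂ (by omega) (by ext1 j; exact (hzero j).2)

end LowIdeal

section LowSections

variable {K : Type*} [Field K] {m c : K} {f s₁ s₂ : K[X][X][X]} {D e : ℕ}

lemma coeff_lineShift_mem_totalDegreeFiltration
    (hf : ∀ j, f.coeff j ∈ totalDegreeFiltration K D) (j : ℕ) :
    (lineShift m c f).coeff j ∈ totalDegreeFiltration K D := by
  have hC : (C (C m) : K[X][X]) ∈ totalDegreeFiltration K 0 :=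
    C_mem_coeffFiltration (C_mem_degreeFiltration m)
  have h : slopeShift m f ∈ coeffFiltration 0 (totalDegreeFiltration K) D :=
    taylor_mem_coeffFiltration hC fun j => by simpa using hf j
  rw [lineShift_coeff]
  refine taylor_mem_coeffFiltration ?_ (by simpa using h j)
  exact_mod_cast mem_degreeFiltration.2 (natDegree_linePoly_le m c)

lemma natDegree_lineCoeff_le (hf : ∀ j, f.coeff j ∈ totalDegreeFiltration K D) (i j : ℕ) :
    (lineCoeff m c i j f).natDegree ≤ D :=
  mem_degreeFiltration.1 <|
    degreeFiltration_mono (by simp) (coeff_lineShift_mem_totalDegreeFiltration hf j i)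

lemma lineCoeff_eq_add (hf : f = C (C X) ^ e * s₁ + C X ^ e * s₂) (i j : ℕ) :
    lineCoeff m c i j f = X ^ e * lineCoeff m c i j s₁ +
      ∑ x ∈ Finset.HasAntidiagonal.antidiagonal i,
        ((X + C (linePoly m c) : K[X][X]) ^ e).coeff x.1 * lineCoeff m c x.2 j s₂ := by
  have hx : lineShift m c (C (C X)) = C (C X) := by
    simp [lineShift, slopeShift_apply, lineTranslate_apply]
  have hy : lineShift m c (C X) = C (X + C (linePoly m c)) := by
    simp [lineShift, slopeShift_apply, lineTranslate_apply]
  rw [lineCoeff, hf, map_add, map_mul, map_mul, map_pow, map_pow, hx, hy, coeff_add, coeff_add,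
    ← C_pow, ← C_pow, ← C_pow, coeff_C_mul, coeff_C_mul, coeff_C_mul, coeff_mul]
  rfl

lemma isCoprime_X_linePoly (m : K) (hc : c ≠ 0) : IsCoprime X (linePoly m c) := by
  refine ⟨-C (c⁻¹ * m), C c⁻¹, ?_⟩
  have h : (C c⁻¹ * C c : K[X]) = 1 := by rw [← C_mul, inv_mul_cancel₀ hc, C_1]
  rw [linePoly, C_mul]
  linear_combination h

-- The lines avoid the origin, so `x` and `y` are coprime on them.
lemma lineOrderGE_of_eq_add (hf : f = C (C X) ^ e * s₁ + C X ^ e * s₂)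
    (h₂ : ∀ j, s₂.coeff j ∈ totalDegreeFiltration K D) (he : D < e) (hc : c ≠ 0)
    {M a r : ℕ} (hM : 0 < M) (h : LineOrderGE m c M a f r) :
    LineOrderGE m c M a s₁ r ∧ LineOrderGE m c M a s₂ r := by
  have key (j i : ℕ) :
      M * i + a * j < r → lineCoeff m c i j s₁ = 0 ∧ lineCoeff m c i j s₂ = 0 := by
    induction i using Nat.strong_induction_on with
    | _ i ih =>
      intro hij
      have hlower : ∀ x ∈ Finset.HasAntidiagonal.antidiagonal i, x ≠ (0, i) →
          ((X + C (linePoly m c) : K[X][X]) ^ e).coeff x.1 * lineCoeff m c x.2 j s₂ = 0 := by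
        rintro ⟨x, y⟩ hxy hne
        have hsum := Finset.HasAntidiagonal.mem_antidiagonal.1 hxy
        have hlt : y < i := by
          contrapose! hne
          ext <;> simp at hsum ⊢ <;> omega
        have hM' := Nat.mul_lt_mul_of_pos_left hlt hM
        rw [(ih y hlt (by omega)).2, mul_zero]
      have hsum : X ^ e * lineCoeff m c i j s₁ + linePoly m c ^ e * lineCoeff m c i j s₂ = 0 := by
        have h0 := Finset.sum_eq_single (0, i) hlower fun hmem =>
          absurd (Finset.HasAntidiagonal.mem_antidiagonal.2 (by simp)) hmem
        rw [← h i j hij, lineCoeff_eq_add hf, h0, coeff_zero_eq_eval_zero]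
        simp
      have hdvd : X ^ e ∣ lineCoeff m c i j s₂ :=
        (isCoprime_X_linePoly m hc).pow.dvd_of_dvd_mul_left
          ((dvd_add_right (dvd_mul_right _ _)).1 (hsum ▸ dvd_zero _))
      have hs₂ : lineCoeff m c i j s₂ = 0 := by
        by_contra hne
        have hle := natDegree_le_of_dvd hdvd hne
        have hdeg := natDegree_lineCoeff_le (m := m) (c := c) h₂ i j
        rw [natDegree_X_pow] at hle
        omega
      rw [hs₂, mul_zero, add_zero] at hsum
      exact ⟨(mul_eq_zero.1 hsum).resolve_left (pow_ne_zero _ X_ne_zero), hs₂⟩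
  exact ⟨fun i j hij => (key j i hij).1, fun i j hij => (key j i hij).2⟩

end LowSections

section LowSectionsVanish

variable {K : Type*} [Field K] [Infinite K] {ι : Type*} {m c : ι → K} {M : ℕ} {a r : ι → ℕ}

lemma eq_zero_of_forall_coeff_mem_lowIdeal (hM : 0 < M) (hc : ∀ i, c i ≠ 0) {n k e : ℕ}
    (hzero : ∀ f : K[X][X][X], f.natDegree ≤ n → lineDegree f ≤ k →
      (∀ i, LineOrderGE (m i) (c i) M (a i) f (r i)) → f = 0)
    (he : k + 2 * n < e) {f : K[X][X][X]} (hn : f.natDegree ≤ n) (hd : lineDegree f ≤ e + k)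
    (hr : ∀ i, LineOrderGE (m i) (c i) M (a i) f (r i))
    (hlow : ∀ j, f.coeff j ∈ lowIdeal K e) : f = 0 := by
  have htotal (j : ℕ) : f.coeff j ∈ totalDegreeFiltration K ↑(e + (k + n)) :=
    coeffFiltration_mono degreeFiltration_mono (by push_cast; omega)
      (coeff_mem_totalDegreeFiltration f j)
  obtain ⟨s₁, s₂, hf, ⟨hn₁, h₁⟩, hn₂, h₂⟩ :=
    exists_eq_add_of_forall_coeff_mem_lowIdeal hlow htotal
  obtain ⟨hd₁, hd₂⟩ := lineDegree_le_of_eq_add hf h₁ (by omega) hd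
  have horder (i : ι) := lineOrderGE_of_eq_add hf h₂ (by omega) (hc i) hM (hr i)
  rw [hf, hzero s₁ (hn₁.trans hn) hd₁ fun i => (horder i).1,
    hzero s₂ (hn₂.trans hn) hd₂ fun i => (horder i).2, mul_zero, mul_zero, add_zero]

end LowSectionsVanish

/-! ### The apolar pairing -/

section ApolarPairing

variable {A : Type*} [CommRing A]

/-- The invariant bilinear form on polynomials of degree at most `n`, with the parity of `n`. -/
noncomputable def apolarPairing (A : Type*) [CommRing A] (n : ℕ) : A[X] →ₗ[A] A[X] →ₗ[A] A :=
  ∑ j ∈ Finset.range (n + 1), ((-1) ^ j * (j.factorial * (n - j).factorial : A)) •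
    (LinearMap.mul A A).compl₁₂ (lcoeff A j) (lcoeff A (n - j))

lemma apolarPairing_apply (n : ℕ) (f g : A[X]) :
    apolarPairing A n f g = ∑ j ∈ Finset.range (n + 1),
      (-1) ^ j * (j.factorial * (n - j).factorial : A) * (f.coeff j * g.coeff (n - j)) := by
  simp [apolarPairing, LinearMap.sum_apply]

lemma apolarPairing_monomial {n j : ℕ} (hj : j ≤ n) (f : A[X]) (q : A) :
    apolarPairing A n f (monomial (n - j) q) =
      (-1) ^ j * (j.factorial * (n - j).factorial : A) * (f.coeff j * q) := by
  rw [apolarPairing_apply, Finset.sum_eq_single_of_mem j (Finset.mem_range.2 (by omega))]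
  · rw [coeff_monomial, if_pos rfl]
  · intro i hi hij
    rw [coeff_monomial, if_neg (by have := Finset.mem_range.1 hi; omega), mul_zero, mul_zero]

lemma factorial_mul_coeff_taylor (r : A) (f : A[X]) (j : ℕ) :
    j.factorial * (taylor r f).coeff j = (derivative^[j] f).eval r := by
  rw [taylor_coeff, ← factorial_smul_hasseDeriv]
  simp

lemma apolarPairing_taylor_eq_eval (n : ℕ) (r : A) (f g : A[X]) :
    apolarPairing A n (taylor r f) (taylor r g) =
      (∑ j ∈ Finset.range (n + 1),
        (-1) ^ j * (derivative^[j] f * derivative^[n - j] g)).eval r := by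
  rw [apolarPairing_apply, eval_finsetSum]
  refine Finset.sum_congr rfl fun j _ => ?_
  rw [eval_mul, eval_mul, ← factorial_mul_coeff_taylor, ← factorial_mul_coeff_taylor]
  simp only [eval_pow, eval_neg, eval_one]
  ring

lemma derivative_sum_range_iterate_mul {n : ℕ} (f : A[X]) {g : A[X]} (hg : g.natDegree ≤ n) {N : ℕ}
    (hN : N ≤ n) :
    derivative (∑ j ∈ Finset.range (N + 1), (-1) ^ j * (derivative^[j] f * derivative^[n - j] g)) =
      (-1) ^ N * (derivative^[N + 1] f * derivative^[n - N] g) := by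
  induction N with
  | zero =>
    have h : derivative (derivative^[n] g) = 0 := by
      rw [← Function.iterate_succ_apply' derivative n g]
      exact iterate_derivative_eq_zero (by omega)
    simp [h]
  | succ N ih =>
    have hsign : derivative ((-1 : A[X]) ^ (N + 1)) = 0 := by
      rw [← C_1, ← C_neg, ← C_pow, derivative_C]
    rw [Finset.sum_range_succ, derivative_add, ih (by omega), derivative_mul, hsign, derivative_mul,
      ← Function.iterate_succ_apply' derivative (N + 1) f,
      ← Function.iterate_succ_apply' derivative (n - (N + 1)) g,
      show (n - (N + 1)).succ = n - N by omega]
    ring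

-- The derivative of the pairing of the Taylor shifts with respect to the shift telescopes.
lemma apolarPairing_taylor [IsDomain A] [CharZero A] {n : ℕ} (r : A) {f g : A[X]}
    (hf : f.natDegree ≤ n) (hg : g.natDegree ≤ n) :
    apolarPairing A n (taylor r f) (taylor r g) = apolarPairing A n f g := by
  have hconst := derivative_eq_zero.1 <|
    (derivative_sum_range_iterate_mul f hg le_rfl).trans
      (by rw [iterate_derivative_eq_zero (by omega : f.natDegree < n + 1), zero_mul, mul_zero])
  have h0 := apolarPairing_taylor_eq_eval n 0 f g
  rw [taylor_zero, taylor_zero] at h0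
  rw [apolarPairing_taylor_eq_eval, h0, eq_C_of_natDegree_eq_zero hconst, eval_C, eval_C]

lemma apolarPairing_mem {F : ℤ → AddSubgroup A} [SetLike.GradedMonoid F] {w r s : ℤ} {n : ℕ}
    {f g : A[X]} (hf : f ∈ coeffFiltration w F r) (hg : g ∈ coeffFiltration w F s) :
    apolarPairing A n f g ∈ F (r + s - w * n) := by
  rw [apolarPairing_apply]
  refine sum_mem fun j hj => ?_
  have hsign : (-1 : A) ^ j * (j.factorial * (n - j).factorial : A) ∈ F 0 := by
    have hone : (-1 : A) ∈ F 0 := neg_mem (SetLike.one_mem_graded F)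
    have h := SetLike.mul_mem_graded (SetLike.pow_mem_graded j hone)
      (natCast_mem_zero F (j.factorial * (n - j).factorial))
    simpa using h
  have h := SetLike.mul_mem_graded hsign (SetLike.mul_mem_graded (hf j) (hg (n - j)))
  have hjn : j ≤ n := Nat.lt_succ_iff.1 (Finset.mem_range.1 hj)
  convert h using 2
  push_cast [hjn]
  ring

end ApolarPairing

/-! ### Residues at the origin -/

section Residue

variable {K : Type*} [Field K] {e : ℕ}

lemma mem_lowIdeal_of_forall_coeff_mul_eq_zero {p : K[X][X]}
    (h : ∀ q : K[X][X], ((p * q).coeff (e - 1)).coeff (e - 1) = 0) : p ∈ lowIdeal K e := by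
  intro k hk i hi
  have h0 := h (C (X ^ (e - 1 - i)) * X ^ (e - 1 - k))
  rwa [mul_left_comm, coeff_C_mul, coeff_mul_X_pow', if_pos (by omega), coeff_X_pow_mul',
    if_pos (by omega), show e - 1 - (e - 1 - k) = k by omega,
    show e - 1 - (e - 1 - i) = i by omega] at h0

lemma X_pow_mem_lowIdeal : (X ^ e : K[X][X]) ∈ lowIdeal K e := fun k hk i _ => by
  rw [coeff_X_pow, if_neg hk.ne, coeff_zero]

lemma C_X_pow_mem_lowIdeal : (C (X ^ e) : K[X][X]) ∈ lowIdeal K e := fun k _ i hi => by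
  rw [coeff_C]
  split_ifs
  · rw [coeff_X_pow, if_neg hi.ne]
  · exact coeff_zero i

lemma isUnit_mk_lineEquation (e : ℕ) (m : K) {c : K} (hc : c ≠ 0) :
    IsUnit (Ideal.Quotient.mk (lowIdeal K e) (lineEquation m c)) := by
  set φ := Ideal.Quotient.mk (lowIdeal K e)
  have hx : IsNilpotent (φ (C X)) :=
    ⟨e, by rw [← map_pow, ← C_pow, Ideal.Quotient.eq_zero_iff_mem]; exact C_X_pow_mem_lowIdeal⟩
  have hy : IsNilpotent (φ X) :=
    ⟨e, by rw [← map_pow, Ideal.Quotient.eq_zero_iff_mem]; exact X_pow_mem_lowIdeal⟩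
  have hu : IsUnit (φ (C (C (-c)))) :=
    (((neg_ne_zero.2 hc).isUnit.map C).map C).map φ
  have heq : φ (lineEquation m c) = (φ X - φ (C (C m)) * φ (C X)) + φ (C (C (-c))) := by
    rw [← map_mul, ← map_sub, ← map_add]
    congr 1
    simp only [lineEquation, linePoly, map_add, map_mul, map_neg]
    ring
  rw [heq]
  exact ((Commute.all _ _).isNilpotent_sub hy
    ((Commute.all _ _).isNilpotent_mul_left hx)).isUnit_add_right_of_commute hu (Commute.all _ _)

lemma exists_mul_sub_one_mem_of_isUnit_mk {R : Type*} [CommRing R] {I : Ideal R} {p : R}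
    (hp : IsUnit (Ideal.Quotient.mk I p)) : ∃ u, p * u - 1 ∈ I := by
  obtain ⟨v, hv⟩ := hp.exists_right_inv
  obtain ⟨u, rfl⟩ := Ideal.Quotient.mk_surjective v
  exact ⟨u, by rw [← Ideal.Quotient.eq_zero_iff_mem, map_sub, map_mul, hv, map_one, sub_self]⟩

lemma exists_prod_lineEquation_pow_mul_sub_one_mem {ι : Type*} [Fintype ι] (m : ι → K) {c : ι → K}
    (e : ℕ) (hc : ∀ i, c i ≠ 0) (o : ι → ℕ) :
    ∃ u, (∏ i, lineEquation (m i) (c i) ^ o i) * u - 1 ∈ lowIdeal K e := by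
  refine exists_mul_sub_one_mem_of_isUnit_mk ?_
  rw [map_prod, IsUnit.prod_univ_iff]
  exact fun i => by simpa using (isUnit_mk_lineEquation e (m i) (hc i)).pow _

lemma mem_totalDegreeFiltration_of_lineEquation_mul_mem {m c : K} {q : K[X][X]} {r : ℤ}
    (h : lineEquation m c * q ∈ totalDegreeFiltration K (r + 1)) :
    q ∈ totalDegreeFiltration K r := by
  have hline : linePoly m c ∈ degreeFiltration K 1 :=
    mem_degreeFiltration (d := 1).2 (natDegree_linePoly_le m c)
  have hrec (k : ℕ) : q.coeff k = (lineEquation m c * q).coeff (k + 1) +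
      linePoly m c * q.coeff (k + 1) := by
    rw [lineEquation, sub_mul, coeff_sub, coeff_X_mul, coeff_C_mul, sub_add_cancel]
  have key (i k : ℕ) (hik : q.natDegree < k + i) : q.coeff k ∈ degreeFiltration K (r - 1 * k) := by
    induction i generalizing k with
    | zero => rw [coeff_eq_zero_of_natDegree_lt (by omega)]; exact zero_mem _
    | succ i ih =>
      rw [hrec]
      refine add_mem ?_ ?_
      · have hk := h (k + 1)
        convert hk using 2
        push_cast; ring
      · have hk := SetLike.mul_mem_graded hline (ih (k + 1) (by omega))
        convert hk using 2
        push_cast; ring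
  exact fun k => key (q.natDegree + 1) k (by omega)

lemma mem_totalDegreeFiltration_of_prod_lineEquation_pow_mul_mem {ι : Type*} {s : Finset ι}
    {m c : ι → K} {o : ι → ℕ} {q : K[X][X]} {r : ℤ}
    (h : (∏ i ∈ s, lineEquation (m i) (c i) ^ o i) * q ∈
      totalDegreeFiltration K (r + ∑ i ∈ s, (o i : ℤ))) :
    q ∈ totalDegreeFiltration K r := by
  have hpow (i : ι) (n : ℕ) {q : K[X][X]} {r : ℤ} (h : lineEquation (m i) (c i) ^ n * q ∈
      totalDegreeFiltration K (r + n)) : q ∈ totalDegreeFiltration K r := by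
    induction n generalizing r with
    | zero => simpa using h
    | succ n ih =>
      refine ih (mem_totalDegreeFiltration_of_lineEquation_mul_mem (m := m i) (c := c i) ?_)
      rw [← mul_assoc, ← pow_succ']
      convert h using 2
      push_cast; ring
  classical
  induction s using Finset.induction_on generalizing r with
  | empty => simpa using h
  | insert i s hi ih =>
    rw [Finset.prod_insert hi, Finset.sum_insert hi, mul_assoc, add_comm (o i : ℤ),
      ← add_assoc] at h
    exact ih (hpow i _ h)

end Residue

/-! ### Sections and their dimension -/

section Sections

variable {K : Type*} [Field K]

lemma smul_eq_constHom_mul (r : K) (f : K[X][X][X]) : r • f = constHom K r * f := by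
  ext j k i; simp

lemma lineDegree_add_le {f g : K[X][X][X]} {d : ℕ} (hf : lineDegree f ≤ d) (hg : lineDegree g ≤ d) :
    lineDegree (f + g) ≤ d := by
  rw [lineDegree, map_add]
  exact natDegree_add_le_of_degree_le hf hg

lemma lineDegree_smul_le (r : K) (f : K[X][X][X]) : lineDegree (r • f) ≤ lineDegree f := by
  rw [lineDegree, smul_eq_constHom_mul, map_mul]
  refine natDegree_mul_le.trans ?_
  simp [dualChart_apply, toDualChart, lineDegree]

lemma lineCoeff_add (m c : K) (i j : ℕ) (f g : K[X][X][X]) :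
    lineCoeff m c i j (f + g) = lineCoeff m c i j f + lineCoeff m c i j g := by
  simp [lineCoeff]

lemma lineCoeff_smul (m c : K) (i j : ℕ) (r : K) (f : K[X][X][X]) :
    lineCoeff m c i j (r • f) = r • lineCoeff m c i j f := by
  have h : lineShift m c (constHom K r) = constHom K r := by
    simp [lineShift, slopeShift_apply, lineTranslate_apply]
  rw [lineCoeff, smul_eq_constHom_mul, map_mul, h, ← smul_eq_constHom_mul, coeff_smul, coeff_smul,
    lineCoeff]

/-- The global sections of the line bundle on the flag variety of `ℙ²` that has degree `n` on the
pencils of lines through a point and degree `d` on the pencils of points on a line, in the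
coordinates `x`, `y`, `t = dy / dx`. -/
noncomputable def flagSections (K : Type*) [Field K] (n d : ℕ) : Submodule K K[X][X][X] where
  carrier := {f | f.natDegree ≤ n ∧ lineDegree f ≤ d}
  zero_mem' := by simp [lineDegree]
  add_mem' hf hg := ⟨natDegree_add_le_of_degree_le hf.1 hg.1, lineDegree_add_le hf.2 hg.2⟩
  smul_mem' r f hf := ⟨(natDegree_smul_le r f).trans hf.1, (lineDegree_smul_le r f).trans hf.2⟩

/-- The polynomials of weighted order at least `r` along the lift of the line `y = m x + c`. -/
noncomputable def lineOrderSubmodule (m c : K) (M a r : ℕ) : Submodule K K[X][X][X] where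
  carrier := {f | LineOrderGE m c M a f r}
  zero_mem' i j _ := by simp [lineCoeff]
  add_mem' hf hg i j h := by rw [lineCoeff_add, hf i j h, hg i j h, add_zero]
  smul_mem' r f hf i j h := by rw [lineCoeff_smul, hf i j h, smul_zero]

/-- The sections of the `n`-th symmetric power of the parabolic tangent bundle of `ℙ²` with weight
`a i / M` along the line `y = m i * x + c i`, twisted so as to have degree `d`. -/
noncomputable def parabolicSections {ι : Type*} (m c : ι → K) (M : ℕ) (a : ι → ℕ) (n d : ℕ) :
    Submodule K K[X][X][X] :=
  flagSections K n d ⊓ ⨅ i, lineOrderSubmodule (m i) (c i) M (a i) (n * a i)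

lemma mem_parabolicSections {ι : Type*} {m c : ι → K} {M : ℕ} {a : ι → ℕ} {n d : ℕ}
    {f : K[X][X][X]} :
    f ∈ parabolicSections m c M a n d ↔ (f.natDegree ≤ n ∧ lineDegree f ≤ d) ∧
      ∀ i, LineOrderGE (m i) (c i) M (a i) f (n * a i) := by
  rw [parabolicSections, Submodule.mem_inf, Submodule.mem_iInf]
  rfl

end Sections

/-! ### The residue pairing -/

section ResiduePairing

variable {K : Type*} [Field K]

lemma two_mul_finrank_le_of_isotropic {A W : Type*} [AddCommGroup A] [Module K A] [AddCommGroup W]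
    [Module K W] [FiniteDimensional K W] {B : A →ₗ[K] A →ₗ[K] K} {T : A →ₗ[K] W}
    {V : Submodule K A} (hB : ∀ f g, T g = 0 → B f g = 0) (hT : ∀ f ∈ V, T f = 0 → f = 0)
    (hnondeg : ∀ f ∈ V, (∀ g, B f g = 0) → f = 0) (hiso : ∀ f ∈ V, ∀ g ∈ V, B f g = 0) :
    FiniteDimensional K V ∧ 2 * Module.finrank K V ≤ Module.finrank K W := by
  obtain ⟨s, hs⟩ := T.rangeRestrict.exists_rightInverse_of_surjective T.range_rangeRestrict
  have hBs (f g : A) : B f (s (T.rangeRestrict g)) = B f g := by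
    rw [← sub_eq_zero, ← map_sub]
    refine hB _ _ ?_
    have h : T.rangeRestrict (s (T.rangeRestrict g)) = T.rangeRestrict g :=
      LinearMap.congr_fun hs _
    rw [map_sub, sub_eq_zero]
    exact congr(($h : W))
  have hinj : Function.Injective (T.rangeRestrict.comp V.subtype) :=
    (injective_iff_map_eq_zero _).2 fun f hf => Subtype.ext (hT f f.2 congr(($hf : W)))
  let Ψ : V →ₗ[K] Module.Dual K T.range := (LinearMap.lcomp K K s).comp (B.comp V.subtype)
  have hΨ (f : V) :
      Ψ f ∈ (LinearMap.range (T.rangeRestrict.comp V.subtype)).dualAnnihilator := by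
    rw [Submodule.mem_dualAnnihilator]
    rintro _ ⟨g, rfl⟩
    exact (hBs f g).trans (hiso f f.2 g g.2)
  have hinjΨ : Function.Injective (Ψ.codRestrict _ hΨ) := by
    rw [LinearMap.injective_codRestrict_iff, injective_iff_map_eq_zero]
    refine fun f hf => Subtype.ext (hnondeg f f.2 fun g => ?_)
    rw [← hBs]
    exact LinearMap.congr_fun hf _
  refine ⟨FiniteDimensional.of_injective _ hinj, ?_⟩
  have hle := LinearMap.finrank_le_finrank_of_injective hinjΨ
  have hadd := Subspace.finrank_add_finrank_dualAnnihilator_eq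
    (LinearMap.range (T.rangeRestrict.comp V.subtype))
  rw [LinearMap.finrank_range_of_inj hinj] at hadd
  have hrange := Submodule.finrank_le T.range
  omega

/-- The residue at the origin of the apolar pairing of two sections, multiplied by `u` and divided
by `(x * y) ^ e`. -/
noncomputable def residuePairing (n e : ℕ) (u : K[X][X]) :
    K[X][X][X] →ₗ[K] K[X][X][X] →ₗ[K] K :=
  LinearMap.mk₂ K (fun f g => ((apolarPairing K[X][X] n f g * u).coeff (e - 1)).coeff (e - 1))
    (fun f f' g => by simp [add_mul])
    (fun r f g => by rw [LinearMap.map_smul_of_tower]; simp)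
    (fun f g g' => by simp [add_mul])
    (fun r f g => by rw [LinearMap.map_smul_of_tower]; simp)

lemma residuePairing_apply (n e : ℕ) (u : K[X][X]) (f g : K[X][X][X]) :
    residuePairing n e u f g = ((apolarPairing K[X][X] n f g * u).coeff (e - 1)).coeff (e - 1) :=
  rfl

/-- The class of a polynomial of degree at most `n` in `t` modulo `(x ^ e, y ^ e)`, given by its
coefficients of exponents less than `e` in `x` and `y`. -/
noncomputable def lowCoeffs (K : Type*) [Field K] (n e : ℕ) :
    K[X][X][X] →ₗ[K] (Fin (n + 1) × Fin e × Fin e → K) where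
  toFun f x := ((f.coeff x.1).coeff x.2.1).coeff x.2.2
  map_add' f g := by ext; simp
  map_smul' r f := by ext; simp

lemma lowCoeffs_eq_zero_iff {n e : ℕ} {f : K[X][X][X]} :
    lowCoeffs K n e f = 0 ↔ ∀ j ≤ n, f.coeff j ∈ lowIdeal K e :=
  ⟨fun h j hj k hk i hi => congrFun h (⟨j, by omega⟩, ⟨k, hk⟩, ⟨i, hi⟩),
    fun h => _root_.funext fun x => h x.1 (by omega) x.2.1 x.2.1.2 x.2.2 x.2.2.2⟩

variable {n e : ℕ} {p u : K[X][X]}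

lemma residuePairing_eq_zero_of_lowCoeffs_eq_zero (he : 0 < e) (f : K[X][X][X]) {g : K[X][X][X]}
    (hg : lowCoeffs K n e g = 0) : residuePairing n e u f g = 0 := by
  have h : apolarPairing K[X][X] n f g ∈ lowIdeal K e := by
    rw [apolarPairing_apply]
    exact sum_mem fun j _ => Ideal.mul_mem_left _ _
      (Ideal.mul_mem_left _ _ (lowCoeffs_eq_zero_iff.1 hg _ (by omega)))
  exact Ideal.mul_mem_right u _ h (e - 1) (by omega) (e - 1) (by omega)

lemma lowCoeffs_eq_zero_of_residuePairing_eq_zero [CharZero K] (hu : p * u - 1 ∈ lowIdeal K e)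
    {f : K[X][X][X]} (h : ∀ g, residuePairing n e u f g = 0) : lowCoeffs K n e f = 0 := by
  rw [lowCoeffs_eq_zero_iff]
  intro j hj
  have hfu : f.coeff j * u ∈ lowIdeal K e := by
    refine mem_lowIdeal_of_forall_coeff_mul_eq_zero fun q => ?_
    have hconst : ((-1) ^ j * (j.factorial * (n - j).factorial : K[X][X])) =
        C (C ((-1) ^ j * (j.factorial * (n - j).factorial : K))) := by simp
    have hne : (-1) ^ j * (j.factorial * (n - j).factorial : K) ≠ 0 :=
      mul_ne_zero (by simp) (mul_ne_zero (Nat.cast_ne_zero.2 (Nat.factorial_ne_zero _))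
        (Nat.cast_ne_zero.2 (Nat.factorial_ne_zero _)))
    have h0 := h (monomial (n - j) q)
    rw [residuePairing_apply, apolarPairing_monomial hj, hconst, mul_assoc, coeff_C_mul,
      coeff_C_mul] at h0
    rw [mul_right_comm]
    exact (mul_eq_zero.1 h0).resolve_left hne
  have heq : f.coeff j = p * (f.coeff j * u) - f.coeff j * (p * u - 1) := by ring
  rw [heq]
  exact sub_mem (Ideal.mul_mem_left _ _ hfu) (Ideal.mul_mem_left _ _ hu)

end ResiduePairing

section ParabolicSections

variable {K : Type*} [Field K] [CharZero K] {ι : Type*} [Fintype ι] {m c : ι → K} {M : ℕ}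
  {a : ι → ℕ} {n r e k : ℕ}

lemma apolarPairing_mem_totalDegreeFiltration {f g : K[X][X][X]} {d : ℕ}
    (hf : f ∈ flagSections K n d) (hg : g ∈ flagSections K n d) :
    apolarPairing K[X][X] n f g ∈ totalDegreeFiltration K (2 * d + n) := by
  refine mem_totalDegreeFiltration_of_natDegree_eval_le (D := 2 * d + n) fun l => ?_
  rw [← mem_degreeFiltration, ← coe_evalRingHom, ← mem_comapFiltration,
    ← apolarPairing_taylor (C (C l)) hf.1 hg.1]
  have h := apolarPairing_mem (n := n) (slopeShift_mem_coeffFiltration_lineDegree l f)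
    (slopeShift_mem_coeffFiltration_lineDegree l g)
  exact degreeFiltration_mono (by push_cast; have := hf.2; have := hg.2; omega) h

lemma residuePairing_eq_zero_of_mem_parabolicSections {d : ℕ} (hm : Function.Injective m)
    (hM : 0 < M) (hn : n = 2 * M * r) (hd : 2 * d + n < (2 * e - 2) + ∑ i, 2 * r * a i)
    {u : K[X][X]}
    (hu : (∏ i, lineEquation (m i) (c i) ^ (2 * r * a i)) * u - 1 ∈ lowIdeal K e)
    {f g : K[X][X][X]} (hf : f ∈ parabolicSections m c M a n d)
    (hg : g ∈ parabolicSections m c M a n d) (he : 0 < e) : residuePairing n e u f g = 0 := by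
  obtain ⟨hf₀, hf⟩ := mem_parabolicSections.1 hf
  obtain ⟨hg₀, hg⟩ := mem_parabolicSections.1 hg
  have horder (i : ι) : lineEquation (m i) (c i) ^ (2 * r * a i) ∣ apolarPairing K[X][X] n f g := by
    rw [lineEquation_pow_dvd_iff, ← apolarPairing_taylor (C (C (m i))) hf₀.1 hg₀.1]
    intro k hk
    refine mem_lineFiltration.1 (apolarPairing_mem (n := n)
      (hf i).coeff_slopeShift_mem (hg i).coeff_slopeShift_mem) k ?_
    have hk' : M * k < M * (2 * r * a i) := Nat.mul_lt_mul_of_pos_left hk hM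
    rw [hn]
    zify at hk'
    push_cast
    linarith
  obtain ⟨q, hq⟩ := prod_lineEquation_pow_dvd c hm.injOn (s := Finset.univ) fun i _ => horder i
  have hqdeg : q ∈ totalDegreeFiltration K (2 * d + n - ∑ i, ((2 * r * a i : ℕ) : ℤ)) := by
    refine mem_totalDegreeFiltration_of_prod_lineEquation_pow_mul_mem (s := Finset.univ)
      (m := m) (c := c) (o := fun i => 2 * r * a i) ?_
    rw [← hq, sub_add_cancel]
    exact apolarPairing_mem_totalDegreeFiltration hf₀ hg₀
  have hqcoeff : (q.coeff (e - 1)).coeff (e - 1) = 0 := by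
    refine mem_constDegree.1 (hqdeg (e - 1) (e - 1)) ?_
    have hcast : ∑ i, ((2 * r * a i : ℕ) : ℤ) = (∑ i, 2 * r * a i : ℕ) := by push_cast; rfl
    rw [hcast]
    omega
  have heq : apolarPairing K[X][X] n f g * u =
      q + q * ((∏ i, lineEquation (m i) (c i) ^ (2 * r * a i)) * u - 1) := by
    rw [hq]; ring
  rw [residuePairing_apply, heq, coeff_add, coeff_add, hqcoeff, zero_add]
  exact Ideal.mul_mem_left _ q hu (e - 1) (by omega) (e - 1) (by omega)

lemma eq_zero_of_mem_parabolicSections (hm : Function.Injective m) (hM : 0 < M)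
    (ha : ∀ i, a i ≤ M)
    (hpt : ∀ x y : K, ∀ s : Finset ι, (∀ i ∈ s, y = m i * x + c i) → ∑ i ∈ s, a i ≤ 2 * M)
    (hle : 3 * M ≤ ∑ i, a i) (hge : ∑ i, a i ≤ 5 * M) (hn : n = 2 * M * r)
    (hk : k + r * M < r * ∑ i, a i) {f : K[X][X][X]} (hf : f ∈ parabolicSections m c M a n k) :
    f = 0 := by
  obtain ⟨⟨hdeg, hline⟩, horder⟩ := mem_parabolicSections.1 hf
  by_contra hne
  have h := two_mul_sum_lineOrder_le c hm hM ha hpt hle hge hne horder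
  rw [← Finset.mul_sum] at h
  have h₁ := Nat.mul_le_mul_left (2 * M) hline
  have h₂ := Nat.mul_le_mul_left (M + ∑ i, a i) hdeg
  have h₃ := Nat.mul_lt_mul_of_pos_left hk (show 0 < 2 * M by omega)
  subst hn
  nlinarith

/-- The space of sections injects into that of `lowCoeffs` as an isotropic subspace for the residue
pairing. -/
theorem two_mul_finrank_parabolicSections_le (hm : Function.Injective m) (hc : ∀ i, c i ≠ 0)
    (hM : 0 < M) (ha : ∀ i, a i ≤ M)
    (hpt : ∀ x y : K, ∀ s : Finset ι, (∀ i ∈ s, y = m i * x + c i) → ∑ i ∈ s, a i ≤ 2 * M)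
    (hle : 3 * M ≤ ∑ i, a i) (hge : ∑ i, a i ≤ 5 * M) (hn : n = 2 * M * r)
    (hk : k + 2 + r * M = r * ∑ i, a i) (he : k + 2 * n < e) :
    FiniteDimensional K (parabolicSections m c M a n (e + k)) ∧
      2 * Module.finrank K (parabolicSections m c M a n (e + k)) ≤ (n + 1) * (e * e) := by
  obtain ⟨u, hu⟩ := exists_prod_lineEquation_pow_mul_sub_one_mem m e hc fun i => 2 * r * a i
  have hzero : ∀ f ∈ parabolicSections m c M a n (e + k), lowCoeffs K n e f = 0 → f = 0 := by
    intro f hf hlow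
    obtain ⟨⟨hdeg, hline⟩, horder⟩ := mem_parabolicSections.1 hf
    refine eq_zero_of_forall_coeff_mem_lowIdeal hM hc (fun g h₁ h₂ h₃ => ?_) he hdeg hline horder
      fun j => ?_
    · exact eq_zero_of_mem_parabolicSections hm hM ha hpt hle hge hn (by omega)
        (mem_parabolicSections.2 ⟨⟨h₁, h₂⟩, h₃⟩)
    · rcases le_or_gt j n with hj | hj
      · exact lowCoeffs_eq_zero_iff.1 hlow j hj
      · rw [coeff_eq_zero_of_natDegree_lt (by omega)]
        exact zero_mem _
  have hbound : 2 * (e + k) + n < (2 * e - 2) + ∑ i, 2 * r * a i := by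
    rw [← Finset.mul_sum, mul_assoc, ← hk, hn, mul_assoc 2 M r, mul_comm M r]
    omega
  simpa using two_mul_finrank_le_of_isotropic (B := residuePairing n e u)
    (fun f g => residuePairing_eq_zero_of_lowCoeffs_eq_zero (by omega) f) hzero
    (fun f hf h => hzero f hf (lowCoeffs_eq_zero_of_residuePairing_eq_zero hu h))
    fun f hf g hg => residuePairing_eq_zero_of_mem_parabolicSections hm hM hn hbound hu hf hg
      (by omega)

end ParabolicSections

/-! ### Counting sections and vanishing conditions -/

section LinearAlgebra

variable {K V W : Type*} [Field K] [AddCommGroup V] [Module K V] [AddCommGroup W] [Module K W]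

lemma finrank_le_finrank_inf_ker_add (S : Submodule K V) [FiniteDimensional K S] (L : V →ₗ[K] W)
    (U : Submodule K W) [FiniteDimensional K U] (h : ∀ f ∈ S, L f ∈ U) :
    Module.finrank K S ≤ Module.finrank K ↥(S ⊓ LinearMap.ker L) + Module.finrank K U := by
  have hrange : Module.finrank K (LinearMap.range (L.domRestrict S)) ≤ Module.finrank K U := by
    refine Submodule.finrank_mono ?_
    rintro _ ⟨f, rfl⟩
    exact h f f.2
  have hker : (LinearMap.ker (L.domRestrict S)).map S.subtype = S ⊓ LinearMap.ker L := by
    rw [LinearMap.ker_domRestrict]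
    exact Submodule.map_comap_subtype _ _
  have hadd := LinearMap.finrank_range_add_finrank_ker (L.domRestrict S)
  have heq := (Submodule.equivMapOfInjective S.subtype S.injective_subtype
    (LinearMap.ker (L.domRestrict S))).finrank_eq
  rw [hker] at heq
  omega

lemma linearIndependent_of_triangular {ι : Type*} {v : ι → V} (φ : ι → V →ₗ[K] K) (ρ : ι → ℕ)
    (hdiag : ∀ i, φ i (v i) ≠ 0) (hoff : ∀ i j, j ≠ i → ρ i ≤ ρ j → φ i (v j) = 0) :
    LinearIndependent K v := by
  rw [linearIndependent_iff']
  intro s w hw i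
  induction hN : ρ i using Nat.strong_induction_on generalizing i with
  | _ N ih =>
    intro hi
    have h := congr(φ i $hw)
    rw [map_sum, map_zero, Finset.sum_eq_single_of_mem i hi, map_smul, smul_eq_mul] at h
    · exact (mul_eq_zero.1 h).resolve_right (hdiag i)
    · intro j hj hji
      rw [map_smul]
      rcases lt_or_ge (ρ j) (ρ i) with hlt | hge
      · rw [ih _ (hN ▸ hlt) j rfl hj, zero_smul]
      · rw [hoff i j hji hge, smul_zero]

end LinearAlgebra

section FlagMonomials

variable {K : Type*} [Field K]

/-- The section `x ^ (d - α) * y ^ min α β * (y - t x) ^ (β - α) * t ^ (n - c)`. As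
`u = y - t x`, its degree in `x` in the coordinates `x, u, t` is at most `d`; its lowest coefficient
in `t` is `x ^ (d - α) * y ^ β`. -/
noncomputable def flagMonomial (K : Type*) [Field K] (n d c α β : ℕ) : K[X][X][X] :=
  C (C X) ^ (d - α) * C X ^ min α β * (C X - X * C (C X)) ^ (β - α) * X ^ (n - c)

lemma flagMonomial_mem_flagSections {n d c α β : ℕ} (hc : c ≤ n) (hα : α ≤ d) (hβ : β ≤ c + α) :
    flagMonomial K n d c α β ∈ flagSections K n d := by
  constructor
  · have hu : (C X - X * C (C X) : K[X][X][X]).natDegree ≤ 1 := by compute_degree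
    have hu' := natDegree_pow_le_of_le (β - α) hu
    rw [flagMonomial, ← C_pow, ← C_pow (n := d - α), ← C_pow, ← C_mul, mul_assoc]
    refine (natDegree_C_mul_le _ _).trans (natDegree_mul_le.trans ?_)
    rw [natDegree_X_pow]
    omega
  · have hf : dualChart K (flagMonomial K n d c α β) =
        X ^ (d - α) * (C X + C (C X) * X) ^ min α β * C (X ^ (β - α) * C (X ^ (n - c))) := by
      simp only [flagMonomial, map_mul, map_pow, map_sub, dualChart_apply, toDualChart,
        coe_eval₂RingHom, eval₂_C, eval₂_X]
      ring
    have hy : (C X + C (C X) * X : K[X][X][X]).natDegree ≤ 1 := by compute_degree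
    have hy' := natDegree_pow_le_of_le (min α β) hy
    rw [lineDegree, hf]
    refine (natDegree_mul_C_le _ _).trans (natDegree_mul_le.trans ?_)
    rw [natDegree_X_pow]
    omega

lemma coeff_flagMonomial {n d c α β j : ℕ} (hj : j ≤ n - c) :
    (flagMonomial K n d c α β).coeff j =
      if j = n - c then monomial β (monomial (d - α) 1) else 0 := by
  rw [flagMonomial, coeff_mul_X_pow']
  rcases hj.eq_or_lt with rfl | hlt
  · rw [if_pos le_rfl, if_pos rfl, Nat.sub_self, coeff_zero_eq_eval_zero]
    simp only [eval_mul, eval_pow, eval_sub, eval_C, eval_X, zero_mul, sub_zero, mul_assoc,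
      ← pow_add]
    rw [show min α β + (β - α) = β by omega, ← C_pow, C_mul_X_pow_eq_monomial, X_pow_eq_monomial]
  · rw [if_neg (by omega), if_neg (by omega)]

lemma two_mul_sum_range_sum_range (n d : ℕ) :
    2 * ∑ c ∈ Finset.range (n + 1), ∑ α ∈ Finset.range (d + 1), (c + α + 1) =
      (n + 1) * (d + 1) * (n + d + 2) := by
  have hinner (c : ℕ) :
      2 * ∑ α ∈ Finset.range (d + 1), (c + α + 1) = (d + 1) * (2 * c + d + 2) := by
    induction d with
    | zero =>
      rw [Finset.sum_range_one]
      ring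
    | succ d ih => rw [Finset.sum_range_succ, mul_add, ih]; ring
  induction n with
  | zero => rw [Finset.sum_range_one, hinner]; ring
  | succ n ih => rw [Finset.sum_range_succ, mul_add, ih, hinner]; ring

lemma exists_le_flagSections_two_mul_finrank_eq (K : Type*) [Field K] (n d : ℕ) :
    ∃ S ≤ flagSections K n d, FiniteDimensional K S ∧
      2 * Module.finrank K S = (n + 1) * (d + 1) * (n + d + 2) := by
  let ι := Σ c : Fin (n + 1), Σ α : Fin (d + 1), Fin (c + α + 1)
  let v : ι → K[X][X][X] := fun x => flagMonomial K n d x.1 x.2.1 x.2.2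
  let φ : ι → K[X][X][X] →ₗ[K] K := fun x => lcoeff K (d - x.2.1) ∘ₗ
    (lcoeff K[X] x.2.2).restrictScalars K ∘ₗ (lcoeff K[X][X] (n - x.1)).restrictScalars K
  have hφ (x : ι) (f : K[X][X][X]) :
      φ x f = ((f.coeff (n - x.1)).coeff x.2.2).coeff (d - x.2.1) := rfl
  have hv : LinearIndependent K v := by
    refine linearIndependent_of_triangular φ (fun x => n - x.1) (fun x => ?_) ?_
    · rw [hφ, coeff_flagMonomial le_rfl]
      simp
    · rintro ⟨c, α, β⟩ ⟨c', α', β'⟩ hne hle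
      rw [hφ, coeff_flagMonomial hle]
      split_ifs with hc
      · obtain rfl : c = c' := by dsimp only at hc; omega
        rw [coeff_monomial]
        split_ifs with hβ
        · rw [coeff_monomial, if_neg]
          intro hα
          obtain rfl : α = α' := by dsimp only at hα; omega
          obtain rfl : β' = β := Fin.ext hβ
          exact hne rfl
        · simp
      · simp
  refine ⟨Submodule.span K (Set.range v), Submodule.span_le.2 ?_,
    FiniteDimensional.span_of_finite K (Set.finite_range v), ?_⟩
  · rintro _ ⟨⟨c, α, β⟩, rfl⟩
    exact flagMonomial_mem_flagSections (by omega) (by omega) (by omega)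
  · rw [finrank_span_eq_card hv, ← two_mul_sum_range_sum_range]
    simp [ι, Fintype.card_sigma, Finset.sum_range]

end FlagMonomials

section PointOrder

variable {R : Type*} [CommRing R]

/-- The polynomials in two variables vanishing to order at least `r` at the origin. -/
noncomputable abbrev originFiltration (R : Type*) [CommRing R] : ℤ → AddSubgroup R[X][X] :=
  coeffFiltration 1 (coeffFiltration 1 (constOrder R))

/-- The substitution `x ↦ x + x₀`, `y ↦ y + y₀` on `R[x][y]`. -/
noncomputable def pointTranslate (x₀ y₀ : R) : R[X][X] →+* R[X][X] :=
  (mapRingHom (taylorAlgHom x₀).toRingHom).comp (taylorAlgHom (C y₀)).toRingHom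

/-- The polynomials in two variables vanishing to order at least `r` at `(x₀, y₀)`. -/
noncomputable abbrev pointFiltration (x₀ y₀ : R) : ℤ → AddSubgroup R[X][X] :=
  comapFiltration (pointTranslate x₀ y₀) (originFiltration R)

lemma mem_originFiltration {r : ℕ} {p : R[X][X]} :
    p ∈ originFiltration R r ↔ ∀ k i, i + k < r → (p.coeff k).coeff i = 0 := by
  simp only [mem_coeffFiltration, mem_constOrder, one_mul]
  exact forall₂_congr fun k i => imp_congr_left (by omega)

lemma pointTranslate_apply (x₀ y₀ : R) (p : R[X][X]) :
    pointTranslate x₀ y₀ p = (taylor (C y₀) p).map (taylorAlgHom x₀).toRingHom := rfl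

lemma map_taylor_lineTranslate {x₀ y₀ m c : R} (hy : y₀ = m * x₀ + c) (p : R[X][X]) :
    (lineTranslate m c p).map (taylorAlgHom x₀).toRingHom =
      taylor (C m * X) (pointTranslate x₀ y₀ p) := by
  have h : (mapRingHom (taylorAlgHom x₀).toRingHom).comp (lineTranslate m c) =
      (taylorAlgHom (C m * X : R[X])).toRingHom.comp (pointTranslate x₀ y₀) := by
    refine ringHom_ext' (ringHom_ext' (RingHom.ext fun r => ?_) ?_) ?_
    · simp [lineTranslate_apply, pointTranslate_apply]
    · simp [lineTranslate_apply, pointTranslate_apply]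
    · simp only [RingHom.comp_apply, coe_mapRingHom, lineTranslate_apply, pointTranslate_apply,
        linePoly, hy, taylor_X, taylor_C, Polynomial.map_add, Polynomial.map_mul, map_X, map_C,
        map_add, map_mul, AlgHom.toRingHom_eq_coe, RingHom.coe_coe, taylorAlgHom_apply]
      ring
  exact congr($h p)

lemma mem_pointFiltration_zero (x₀ y₀ : R) (p : R[X][X]) : p ∈ pointFiltration x₀ y₀ 0 := by
  rw [mem_comapFiltration, ← Nat.cast_zero, mem_originFiltration]
  simp

lemma X_sub_C_pow_dvd_coeff_lineTranslate {x₀ y₀ m c : R} (hy : y₀ = m * x₀ + c) {r : ℕ}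
    {p : R[X][X]} (hp : p ∈ pointFiltration x₀ y₀ r) (i : ℕ) :
    (X - C x₀) ^ (r - i) ∣ (lineTranslate m c p).coeff i := by
  have hm : C m * X ∈ coeffFiltration 1 (constOrder R) 1 := by
    intro j
    rw [mem_constOrder, coeff_C_mul_X]
    intro hj
    rw [if_neg (by omega)]
  have h : taylor (C m * X) (pointTranslate x₀ y₀ p) ∈ originFiltration R r :=
    taylor_mem_coeffFiltration hm hp
  rw [← map_taylor_lineTranslate hy, mem_originFiltration] at h
  rw [X_sub_C_pow_dvd_iff, ← taylor_apply, X_pow_dvd_iff]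
  intro k hk
  simpa using h i k (by omega)

lemma pointTranslate_smul (x₀ y₀ s : R) (p : R[X][X]) :
    pointTranslate x₀ y₀ (s • p) = s • pointTranslate x₀ y₀ p := by
  have hs (q : R[X][X]) : s • q = C (C s) * q := by ext; simp
  rw [hs, hs, map_mul]
  simp [pointTranslate_apply]

/-- The polynomials vanishing to order at least `r` along the fibre over the point `(x₀, y₀)`. -/
noncomputable def pointOrderSubmodule (x₀ y₀ : R) (r : ℕ) : Submodule R R[X][X][X] where
  carrier := {f | ∀ j, f.coeff j ∈ pointFiltration x₀ y₀ r}
  zero_mem' _ := by simp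
  add_mem' hf hg j := by simpa using add_mem (hf j) (hg j)
  smul_mem' s f hf j := by
    rw [coeff_smul, mem_comapFiltration, pointTranslate_smul, mem_originFiltration]
    intro k i hik
    rw [coeff_smul, coeff_smul, mem_originFiltration.1 (mem_comapFiltration.1 (hf j)) k i hik,
      smul_zero]

lemma X_sub_C_pow_dvd_lineCoeff {x₀ y₀ m c : R} (hy : y₀ = m * x₀ + c) {r : ℕ} {f : R[X][X][X]}
    (hf : f ∈ pointOrderSubmodule x₀ y₀ r) (i j : ℕ) :
    (X - C x₀) ^ (r - i) ∣ lineCoeff m c i j f := by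
  have h : slopeShift m f ∈ coeffFiltration 0 (pointFiltration x₀ y₀) r :=
    taylor_mem_coeffFiltration (mem_pointFiltration_zero x₀ y₀ _) fun j => by simpa using hf j
  rw [lineCoeff, lineShift_coeff]
  exact X_sub_C_pow_dvd_coeff_lineTranslate hy (by simpa using h j) i

lemma two_mul_finrank_le_inf_pointOrderSubmodule {K : Type*} [Field K]
    (S : Submodule K K[X][X][X]) [FiniteDimensional K S] {n : ℕ} (hS : ∀ f ∈ S, f.natDegree ≤ n)
    (x₀ y₀ : K) (r : ℕ) :
    2 * Module.finrank K S ≤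
      2 * Module.finrank K ↥(S ⊓ pointOrderSubmodule x₀ y₀ r) + (n + 1) * (r * (r + 1)) := by
  let T : K[X][X] →ₗ[K] K[X][X] :=
    { pointTranslate x₀ y₀ with map_smul' := pointTranslate_smul x₀ y₀ }
  let ι := Fin (n + 1) × Σ i : Fin r, Fin (i + 1)
  let L : K[X][X][X] →ₗ[K] ι → K := LinearMap.pi fun x => lcoeff K (r - 1 - x.2.1) ∘ₗ
    (lcoeff K[X] x.2.2).restrictScalars K ∘ₗ T ∘ₗ (lcoeff K[X][X] x.1).restrictScalars K
  have hL (f : K[X][X][X]) (x : ι) : L f x =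
      ((pointTranslate x₀ y₀ (f.coeff x.1)).coeff x.2.2).coeff (r - 1 - x.2.1) := rfl
  have hle : S ⊓ LinearMap.ker L ≤ S ⊓ pointOrderSubmodule x₀ y₀ r := by
    refine fun f hf => ⟨hf.1, fun j => ?_⟩
    rcases le_or_gt j n with hj | hj
    · rw [mem_comapFiltration, mem_originFiltration]
      intro k i hik
      have h := congr($(LinearMap.mem_ker.1 hf.2)
        (⟨j, by omega⟩, ⟨⟨r - 1 - i, by omega⟩, ⟨k, by dsimp only; omega⟩⟩))
      rwa [hL, show r - 1 - (r - 1 - i) = i by omega] at h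
    · rw [coeff_eq_zero_of_natDegree_lt ((hS f hf.1).trans_lt hj)]
      exact zero_mem _
  have hcard : 2 * Module.finrank K (⊤ : Submodule K (ι → K)) = (n + 1) * (r * (r + 1)) := by
    rw [finrank_top, Module.finrank_fintype_fun_eq_card, Fintype.card_prod, Fintype.card_sigma]
    simp only [Fintype.card_fin]
    have hsum := Finset.sum_range_id_mul_two (r + 1)
    rw [Finset.sum_range_succ', add_zero, Nat.add_sub_cancel, mul_comm (r + 1)] at hsum
    rw [Fin.sum_univ_eq_sum_range (fun i => i + 1), ← hsum]
    ring
  have h := finrank_le_finrank_inf_ker_add S L ⊤ fun f _ => Submodule.mem_top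
  have hmono := Submodule.finrank_mono hle
  omega

end PointOrder

/-! ### Degrees of the leading coefficients along a line -/

section LineCoeffDegree

variable {R : Type*} [CommRing R]

lemma lineShift_ofDualChart (m c : R) (p : R[X][X][X]) :
    lineShift m c (ofDualChart R p) = ofDualChart R (p.map (pointTranslate m c)) := by
  have h : (lineShift m c).comp (ofDualChart R) =
      (ofDualChart R).comp (mapRingHom (pointTranslate m c)) := by
    refine flagRingHom_ext (fun r => ?_) ?_ ?_ ?_
    · simp [ofDualChart, lineShift, slopeShift_apply, lineTranslate_apply, pointTranslate_apply]
    · simp [ofDualChart, lineShift, slopeShift_apply, lineTranslate_apply, pointTranslate_apply]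
    · simp only [ofDualChart, lineShift, RingHom.comp_apply, coe_mapRingHom, coe_eval₂RingHom,
        eval₂_C, eval₂_X, slopeShift_apply, lineTranslate_apply, pointTranslate_apply, linePoly,
        taylor_C, taylor_X, Polynomial.map_add, map_X, map_C, map_sub, map_add, map_mul,
        AlgHom.toRingHom_eq_coe, RingHom.coe_coe, taylorAlgHom_apply]
      ring
    · simp [ofDualChart, lineShift, slopeShift_apply, lineTranslate_apply]
  exact congr($h p)

lemma lineDegree_lineShift_le (m c : R) (f : R[X][X][X]) :
    lineDegree (lineShift m c f) ≤ lineDegree f := by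
  obtain ⟨p, rfl⟩ : ∃ p, ofDualChart R p = f := (dualChart R).symm.surjective f
  rw [lineShift_ofDualChart, lineDegree_ofDualChart, lineDegree_ofDualChart]
  exact natDegree_map_le

/-- The substitution `f(x, y, t) ↦ f(x, (v + x) t, t)` from `R[x][y][t]` to `R[v][x][t]`, that is,
`u = v t` in the coordinates `x`, `u = y - t x`, `t`. -/
noncomputable def slopeBlowup (R : Type*) [CommRing R] : R[X][X][X] →+* R[X][X][X] :=
  eval₂RingHom (eval₂RingHom (C.comp (mapRingHom C)) (C (X + C X) * X)) X

lemma slopeBlowup_ofDualChart (p : R[X][X][X]) :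
    slopeBlowup R (ofDualChart R p) =
      p.eval₂ (eval₂RingHom (eval₂RingHom (constHom R) X) (C (C X) * X)) (C X) := by
  have h : (slopeBlowup R).comp (ofDualChart R) =
      eval₂RingHom (eval₂RingHom (eval₂RingHom (constHom R) X) (C (C X) * X)) (C X) := by
    refine flagRingHom_ext ?_ ?_ ?_ ?_ <;> simp [ofDualChart, slopeBlowup]
    ring
  exact congr($h p)

lemma natDegree_coeff_slopeBlowup_le (f : R[X][X][X]) (N : ℕ) :
    ((slopeBlowup R f).coeff N).natDegree ≤ lineDegree f := by
  let G := coeffFiltration 0 (degreeFiltration R[X])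
  have hG : Monotone G := coeffFiltration_mono degreeFiltration_mono
  have hC (a : R[X]) : C (C a) ∈ G 0 := C_mem_coeffFiltration (C_mem_degreeFiltration a)
  have ht : (X : R[X][X][X]) ∈ G 0 := X_mem_coeffFiltration
  suffices slopeBlowup R f ∈ G (lineDegree f) by
    rw [← mem_degreeFiltration]
    simpa using this N
  obtain ⟨p, rfl⟩ : ∃ p, ofDualChart R p = f := (dualChart R).symm.surjective f
  rw [lineDegree_ofDualChart, slopeBlowup_ofDualChart]
  refine eval₂_mem_of_forall_coeff (w := 1) _ (C_mem_coeffFiltration X_mem_coeffFiltration)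
    fun k => ?_
  rcases le_or_gt k p.natDegree with hk | hk
  · refine hG (by simpa using hk) (eval₂_mem_of_forall_coeff (w := 0) (r := 0) _ ?_ fun i => ?_)
    · simpa using SetLike.mul_mem_graded (hC X) ht
    · exact eval₂_mem_of_forall_coeff (w := 0) _ ht fun j => by simpa using hC _
  · rw [coeff_eq_zero_of_natDegree_lt hk, map_zero]
    exact zero_mem _

lemma coeff_eval₂_X {S : Type*} [CommRing S] (φ : R →+* S[X]) (p : R[X]) (N : ℕ) :
    (p.eval₂ φ X).coeff N =
      ∑ x ∈ Finset.HasAntidiagonal.antidiagonal N, (φ (p.coeff x.2)).coeff x.1 := by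
  induction p using Polynomial.induction_on' with
  | add p q hp hq => simp only [eval₂_add, coeff_add, hp, hq, map_add, Finset.sum_add_distrib]
  | monomial j a =>
    rw [eval₂_monomial, coeff_mul_X_pow']
    split_ifs with h
    · rw [Finset.sum_eq_single_of_mem (N - j, j)
        (Finset.HasAntidiagonal.mem_antidiagonal.2 (Nat.sub_add_cancel h))]
      · simp
      · rintro ⟨i, k⟩ hik hne
        have := Finset.HasAntidiagonal.mem_antidiagonal.1 hik
        rw [coeff_monomial_of_ne, map_zero, coeff_zero]
        grind
    · refine (Finset.sum_eq_zero ?_).symm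
      rintro ⟨i, k⟩ hik
      have := Finset.HasAntidiagonal.mem_antidiagonal.1 hik
      rw [coeff_monomial_of_ne, map_zero, coeff_zero]
      grind

lemma coeff_slopeBlowup (f : R[X][X][X]) (N : ℕ) :
    (slopeBlowup R f).coeff N = ∑ x ∈ Finset.HasAntidiagonal.antidiagonal N,
      ((f.coeff x.2).coeff x.1).map C * (X + C X) ^ x.1 := by
  rw [slopeBlowup, coe_eval₂RingHom, coeff_eval₂_X]
  refine Finset.sum_congr rfl fun x _ => ?_
  rw [coe_eval₂RingHom, ← eval₂_map, ← comp, comp_C_mul_X_coeff, coeff_map, coe_mapRingHom]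

/-- The contribution of the monomials `z ^ (i + k) * τ ^ (j - k)`, `k ≤ j`, to the coefficient of
`t ^ (i + j)` in `slopeBlowup R (lineShift m c f)`, divided by `(x + v) ^ i`. -/
noncomputable def blowupCofactor (m c : R) (i j : ℕ) (f : R[X][X][X]) : R[X][X] :=
  ∑ k ∈ Finset.range (j + 1), (lineCoeff m c (i + k) (j - k) f).map C * (X + C X) ^ k

lemma coeff_slopeBlowup_lineShift {m c : R} {i j : ℕ} {f : R[X][X][X]}
    (h0 : ∀ i' < i, lineCoeff m c i' (i + j - i') f = 0) :
    (slopeBlowup R (lineShift m c f)).coeff (i + j) =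
      (X + C X) ^ i * blowupCofactor m c i j f := by
  rw [coeff_slopeBlowup, Finset.Nat.sum_antidiagonal_eq_sum_range_succ fun a b =>
      (((lineShift m c f).coeff b).coeff a).map C * (X + C X : R[X][X]) ^ a,
    show (i + j).succ = i + (j + 1) from rfl, Finset.sum_range_add, Finset.sum_eq_zero, zero_add,
    blowupCofactor, Finset.mul_sum]
  · refine Finset.sum_congr rfl fun k _ => ?_
    rw [pow_add, Nat.add_sub_add_left, lineCoeff]
    ring
  · intro i' hi'
    rw [← lineCoeff, h0 i' (Finset.mem_range.1 hi'), Polynomial.map_zero, zero_mul]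

lemma blowupCofactor_mem_coeffFiltration (m c : R) (i j : ℕ) (f : R[X][X][X]) :
    blowupCofactor m c i j f ∈ coeffFiltration 0 (degreeFiltration R) j := by
  have hX : (X + C X : R[X][X]) ∈ coeffFiltration 0 (degreeFiltration R) 1 :=
    add_mem (coeffFiltration_mono degreeFiltration_mono zero_le_one X_mem_coeffFiltration)
      (C_mem_coeffFiltration X_mem_coeffFiltration)
  refine AddSubgroup.sum_mem _ fun k hk => ?_
  have hmap : (lineCoeff m c (i + k) (j - k) f).map C ∈
      coeffFiltration 0 (degreeFiltration R) 0 := fun l => by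
    rw [coeff_map, zero_mul, sub_zero]
    exact C_mem_degreeFiltration _
  refine coeffFiltration_mono degreeFiltration_mono ?_
    (SetLike.mul_mem_graded hmap (SetLike.pow_mem_graded k hX))
  have := Finset.mem_range.1 hk
  simp only [Int.nsmul_eq_mul, mul_one, zero_add, Nat.cast_le, ge_iff_le]
  omega

lemma eval₂_compRingHom_blowupCofactor (m c : R) (i j : ℕ) (f : R[X][X][X]) :
    (blowupCofactor m c i j f).eval₂ (compRingHom (-X)) X = lineCoeff m c i j f := by
  rw [blowupCofactor, eval₂_finsetSum, Finset.sum_eq_single_of_mem 0 (by simp)]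
  · have h : (compRingHom (-X : R[X])).comp C = C := by ext; simp
    simp [eval₂_map, h]
  · intro k _ hk
    simp [eval₂_mul, eval₂_pow, hk]

-- On `x + v = 0` only the coefficient of `z ^ i * τ ^ j` survives in the cofactor.
lemma natDegree_lineCoeff_le_sub_add [IsDomain R] {m c : R} {f : R[X][X][X]} {d i j : ℕ}
    (hf : lineDegree f ≤ d) (h0 : ∀ i' < i, lineCoeff m c i' (i + j - i') f = 0) :
    (lineCoeff m c i j f).natDegree ≤ d - i + j := by
  have hdeg : (blowupCofactor m c i j f).natDegree ≤ d - i := by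
    have hle := (natDegree_coeff_slopeBlowup_le (lineShift m c f) (i + j)).trans
      ((lineDegree_lineShift_le m c f).trans hf)
    rw [coeff_slopeBlowup_lineShift h0] at hle
    by_cases hz : blowupCofactor m c i j f = 0
    · simp [hz]
    rw [((monic_X_add_C X).pow i).natDegree_mul' hz, (monic_X_add_C X).natDegree_pow,
      natDegree_X_add_C] at hle
    omega
  rw [← eval₂_compRingHom_blowupCofactor, eval₂_eq_sum_range' _ (Nat.lt_succ_of_le hdeg)]
  refine natDegree_sum_le_of_forall_le _ _ fun k hk => natDegree_mul_le.trans ?_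
  have hcoeff : ((blowupCofactor m c i j f).coeff k).natDegree ≤ j := by
    rw [← mem_degreeFiltration]
    simpa using blowupCofactor_mem_coeffFiltration m c i j f k
  have hcomp : (compRingHom (-X) ((blowupCofactor m c i j f).coeff k)).natDegree ≤ j := by
    simpa [natDegree_comp] using hcoeff
  have hX := natDegree_X_pow_le (R := R) k
  have := Finset.mem_range.1 hk
  omega

end LineCoeffDegree

/-! ### Divisibility of the leading coefficients along a line -/

section BernsteinSum

variable {A : Type*} [CommRing A]

/-- The polynomial with coefficients `B 0, …, B n` in the basis `X ^ j * (X + κ) ^ (n - j)`. The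
coefficients of its expansions at the points `0` and `-κ` are triangular in the `B j`, from opposite
ends. -/
noncomputable def bernsteinSum (κ : A) (n : ℕ) (B : ℕ → A) : A[X] :=
  ∑ j ∈ Finset.range (n + 1), C (B j) * X ^ j * (X + C κ) ^ (n - j)

lemma bernsteinSum_succ (κ b : A) (n : ℕ) (B : ℕ → A) :
    bernsteinSum κ (n + 1) (fun j => Nat.casesOn j b B) =
      X * bernsteinSum κ n B + C b * (X + C κ) ^ (n + 1) := by
  rw [bernsteinSum, Finset.sum_range_succ', bernsteinSum, Finset.mul_sum]
  simp only [Nat.add_sub_add_right, Nat.sub_zero, pow_zero, mul_one]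
  congr 1
  exact Finset.sum_congr rfl fun j _ => by ring

lemma taylor_neg_bernsteinSum (κ : A) (n : ℕ) (B : ℕ → A) :
    taylor (-κ) (bernsteinSum κ n B) = bernsteinSum (-κ) n fun j => B (n - j) := by
  rw [bernsteinSum, map_sum, bernsteinSum, ← Finset.sum_range_reflect]
  refine Finset.sum_congr rfl fun j hj => ?_
  have hj := Finset.mem_range.1 hj
  rw [show n + 1 - 1 - j = n - j by omega, show n - (n - j) = j by omega]
  simp only [taylor_mul, taylor_pow, map_add, taylor_X, taylor_C, C_neg]
  ring

lemma exists_eq_bernsteinSum {κ : A} (hκ : IsUnit κ) {n : ℕ} {g : A[X]} (hg : g.natDegree ≤ n) :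
    ∃ B, g = bernsteinSum κ n B := by
  induction n generalizing g with
  | zero => exact ⟨fun _ => g.coeff 0, by
      simpa [bernsteinSum] using eq_C_of_natDegree_le_zero hg⟩
  | succ n ih =>
    obtain ⟨b, hb⟩ := (hκ.pow (n + 1)).dvd (a := g.coeff 0)
    obtain ⟨q, hq⟩ : X ∣ g - C b * (X + C κ) ^ (n + 1) := by
      rw [X_dvd_iff, coeff_sub, hb, coeff_zero_eq_eval_zero (C b * _)]
      simp [mul_comm]
    have hqn : q.natDegree ≤ n := by
      rw [natDegree_le_iff_coeff_eq_zero]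
      intro N hN
      have hdeg : (C b * (X + C κ) ^ (n + 1)).natDegree ≤ n + 1 := by compute_degree
      rw [← coeff_X_mul, ← hq, coeff_sub, coeff_eq_zero_of_natDegree_lt (by omega),
        coeff_eq_zero_of_natDegree_lt (by omega), sub_zero]
    obtain ⟨B, rfl⟩ := ih hqn
    exact ⟨fun j => Nat.casesOn j b B, by rw [bernsteinSum_succ, ← hq, sub_add_cancel]⟩

lemma coeff_bernsteinSum_sub_mem {κ : A} {n : ℕ} {B : ℕ → A} {I : Ideal A} {j : ℕ} (hj : j ≤ n)
    (hB : ∀ j' < j, B j' ∈ I) : (bernsteinSum κ n B).coeff j - κ ^ (n - j) * B j ∈ I := by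
  have hcoeff (l : ℕ) : (C (B l) * X ^ l * (X + C κ) ^ (n - l)).coeff j =
      B l * (X ^ l * (X + C κ) ^ (n - l)).coeff j := by rw [mul_assoc, coeff_C_mul]
  have hdiag : B j * (X ^ j * (X + C κ) ^ (n - j)).coeff j = κ ^ (n - j) * B j := by
    rw [coeff_X_pow_mul', if_pos le_rfl, Nat.sub_self, coeff_zero_eq_eval_zero]
    simp [mul_comm]
  rw [bernsteinSum, finsetSum_coeff, Finset.sum_congr rfl fun l _ => hcoeff l,
    ← Finset.add_sum_erase _ _ (Finset.mem_range.2 (Nat.lt_succ_of_le hj)), hdiag,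
    add_sub_cancel_left]
  refine Ideal.sum_mem _ fun l hl => ?_
  rcases lt_or_gt_of_ne (Finset.ne_of_mem_erase hl) with h | h
  · exact I.mul_mem_right _ (hB l h)
  · rw [coeff_X_pow_mul', if_neg (by omega), mul_zero]
    exact I.zero_mem

lemma mem_of_forall_coeff_bernsteinSum_mem {κ : A} (hκ : IsUnit κ) {n : ℕ} {B : ℕ → A}
    {I : ℕ → Ideal A} (hI : Monotone I) {j : ℕ} (hj : j ≤ n)
    (h : ∀ j' ≤ j, (bernsteinSum κ n B).coeff j' ∈ I j') : B j ∈ I j := by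
  induction j using Nat.strong_induction_on with
  | _ j ih =>
    have hlow : ∀ j' < j, B j' ∈ I j := fun j' hj' =>
      hI hj'.le (ih j' hj' (by omega) fun k hk => h k (by omega))
    have hmem := (I j).sub_mem (h j le_rfl) (coeff_bernsteinSum_sub_mem (κ := κ) hj hlow)
    rwa [sub_sub_cancel, Ideal.unit_mul_mem_iff_mem _ (hκ.pow _)] at hmem

lemma pow_dvd_coeff_of_X_sub_C_pow_dvd [IsDomain A] {p : A[X]} {r : A} (hr : r ≠ 0) {i e : ℕ}
    (hX : X ^ i ∣ p) (he : (X - C r) ^ e ∣ p) : r ^ e ∣ p.coeff i := by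
  obtain ⟨q, rfl⟩ := hX
  have hnd : ¬ X - C r ∣ X ^ i := fun h => hr (by
    simpa [dvd_iff_isRoot] using (prime_X_sub_C r).dvd_of_dvd_pow h)
  obtain ⟨s, rfl⟩ := (prime_X_sub_C r).pow_dvd_of_dvd_mul_left _ hnd he
  rw [coeff_X_pow_mul', if_pos le_rfl, Nat.sub_self, mul_coeff_zero, coeff_zero_eq_eval_zero,
    eval_pow, eval_sub, eval_X, eval_C, zero_sub, neg_pow, mul_assoc]
  exact (dvd_mul_right _ _).mul_left _

end BernsteinSum

section LineOrderDvd

lemma lineShift_lineShift {R : Type*} [CommRing R] (m c m' c' : R) (f : R[X][X][X]) :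
    lineShift m' c' (lineShift m c f) = lineShift (m + m') (c + c') f := by
  have h : (lineShift m' c').comp (lineShift m c) = lineShift (m + m') (c + c') := by
    refine flagRingHom_ext (fun r => ?_) ?_ ?_ ?_ <;>
      simp [lineShift, slopeShift_apply, lineTranslate_apply, linePoly]
    all_goals ring
  exact congr($h f)

lemma natDegree_lineShift_le {R : Type*} [CommRing R] (m c : R) (f : R[X][X][X]) :
    (lineShift m c f).natDegree ≤ f.natDegree :=
  natDegree_map_le.trans (natDegree_taylor _ _).le

variable {K : Type*} [Field K]

lemma lineEquation_pow_dvd_coeff_slopeShift {μ γ : K} {M b n : ℕ} (hM : 0 < M) {f : K[X][X][X]}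
    (h : LineOrderGE μ γ M b f (n * b)) (l : ℕ) :
    lineEquation μ γ ^ ((n - l) * b ⌈/⌉ M) ∣ (slopeShift μ f).coeff l := by
  refine lineEquation_pow_dvd_iff.2 fun i hi => ?_
  rw [← lineShift_coeff]
  refine h i l ?_
  rw [lt_iff_lt_of_le_iff_le (ceilDiv_le_iff_le_mul hM), Nat.sub_mul] at hi
  rw [mul_comm b l]
  omega

lemma linePoly_pow_dvd_coeff_coeff {μ γ : K} (hμ : μ ≠ 0) {M b n : ℕ} (hM : 0 < M)
    {f : K[X][X][X]} (hn : f.natDegree ≤ n) (hf : LineOrderGE μ γ M b f (n * b)) {i j : ℕ}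
    (hj : j ≤ n) (h0 : ∀ i' < i, ∀ j' ≤ j, (f.coeff j').coeff i' = 0)
    (h1 : ∀ j' < j, (f.coeff j').coeff i = 0) :
    linePoly μ γ ^ (j * b ⌈/⌉ M) ∣ (f.coeff j).coeff i := by
  have hunit : IsUnit (C (C μ) : K[X][X]) := isUnit_C.2 (isUnit_C.2 hμ.isUnit)
  obtain ⟨B, hB⟩ := exists_eq_bernsteinSum hunit.neg hn
  have hX : X ^ i ∣ B j := Ideal.mem_span_singleton.1 <|
    mem_of_forall_coeff_bernsteinSum_mem hunit.neg (I := fun _ => Ideal.span {X ^ i})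
      monotone_const hj fun j' hj' => by
        rw [← hB, Ideal.mem_span_singleton, X_pow_dvd_iff]
        exact fun i' hi' => h0 i' hi' j' hj'
  have hcoeff : (f.coeff j).coeff i = C (-μ) ^ (n - j) * (B j).coeff i := by
    have hlow : ∀ j' < j, B j' ∈ Ideal.span {X ^ (i + 1)} := fun j' hj' =>
      mem_of_forall_coeff_bernsteinSum_mem hunit.neg (I := fun _ => Ideal.span {X ^ (i + 1)})
        monotone_const (hj'.le.trans hj) fun k hk => by
          rw [← hB, Ideal.mem_span_singleton, X_pow_dvd_iff]
          intro i' hi'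
          rcases Nat.lt_succ_iff_lt_or_eq.1 hi' with h | rfl
          · exact h0 i' h k (by omega)
          · exact h1 k (by omega)
    have hmem := coeff_bernsteinSum_sub_mem hj hlow (κ := -C (C μ))
    rw [← hB, Ideal.mem_span_singleton, X_pow_dvd_iff] at hmem
    have h := hmem i i.lt_succ_self
    rwa [← C_neg, ← C_neg, ← C_pow, coeff_sub, coeff_C_mul, sub_eq_zero] at h
  have hline : lineEquation μ γ ^ (j * b ⌈/⌉ M) ∣ B j := by
    have htaylor : slopeShift μ f = bernsteinSum (C (C μ)) n fun l => B (n - l) := by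
      simpa [hB, slopeShift_apply] using taylor_neg_bernsteinSum (-C (C μ)) n B
    have hmem := mem_of_forall_coeff_bernsteinSum_mem hunit (j := n - j) (B := fun l => B (n - l))
      (I := fun l => Ideal.span {lineEquation μ γ ^ ((n - l) * b ⌈/⌉ M)}) (fun l l' hl => ?_)
      (n.sub_le j) fun l _ => by
        rw [← htaylor, Ideal.mem_span_singleton]
        exact lineEquation_pow_dvd_coeff_slopeShift hM hf l
    · simpa [Nat.sub_sub_self hj, Ideal.mem_span_singleton] using hmem
    · refine Ideal.span_singleton_le_span_singleton.2 (pow_dvd_pow _ ?_)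
      exact (gc_smul_ceilDiv hM).monotone_l (Nat.mul_le_mul_right _ (by omega))
  have hr : linePoly μ γ ≠ 0 := fun h => hμ (by simpa [linePoly] using congr(coeff $h 1))
  rw [hcoeff]
  exact (pow_dvd_coeff_of_X_sub_C_pow_dvd hr hX hline).mul_left _

lemma X_sub_C_pow_dvd_lineCoeff_of_lineOrderGE {m c m' c' x₀ : K} (hm : m ≠ m')
    (hx : m * x₀ + c = m' * x₀ + c') {M b n : ℕ} (hM : 0 < M) {f : K[X][X][X]}
    (hn : f.natDegree ≤ n) (hf : LineOrderGE m' c' M b f (n * b)) {i j : ℕ} (hj : j ≤ n)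
    (h0 : ∀ i' < i, ∀ j' ≤ j, lineCoeff m c i' j' f = 0)
    (h1 : ∀ j' < j, lineCoeff m c i j' f = 0) :
    (X - C x₀) ^ (j * b ⌈/⌉ M) ∣ lineCoeff m c i j f := by
  have hshift : LineOrderGE (m' - m) (c' - c) M b (lineShift m c f) (n * b) := fun k l hkl => by
    rw [lineCoeff, lineShift_lineShift, add_sub_cancel, add_sub_cancel]
    exact hf k l hkl
  have hdvd : X - C x₀ ∣ linePoly (m' - m) (c' - c) := by
    rw [dvd_iff_isRoot, IsRoot.def]
    simp only [linePoly, eval_add, eval_mul, eval_C, eval_X]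
    linear_combination -hx
  exact (pow_dvd_pow_of_dvd hdvd _).trans <| linePoly_pow_dvd_coeff_coeff (sub_ne_zero.2 hm.symm)
    hM ((natDegree_lineShift_le m c f).trans hn) hshift hj h0 h1

end LineOrderDvd

/-! ### The cost of the vanishing conditions along one line -/

section LineStep

variable {K : Type*} [Field K]

lemma finrank_le_finrank_inf_iInf_ker_add_sum {V W I α : Type*} [AddCommGroup V] [Module K V]
    [AddCommGroup W] [Module K W] [LinearOrder α] (key : I → α) (S : Submodule K V)
    [FiniteDimensional K S] (L : I → V →ₗ[K] W) (U : I → Submodule K W)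
    [∀ x, FiniteDimensional K (U x)] (T : Finset I)
    (h : ∀ x ∈ T, ∀ f ∈ S, (∀ y ∈ T, key y < key x → L y f = 0) → L x f ∈ U x) :
    Module.finrank K S ≤ Module.finrank K ↥(S ⊓ ⨅ x ∈ T, LinearMap.ker (L x)) +
      ∑ x ∈ T, Module.finrank K (U x) := by
  classical
  induction T using Finset.induction_on_max_value key with
  | empty =>
    rw [Finset.sum_empty, add_zero]
    exact Submodule.finrank_mono (le_inf le_rfl (by simp))
  | insert x T hx hmax ih =>
    have hcut := finrank_le_finrank_inf_ker_add (S ⊓ ⨅ x ∈ T, LinearMap.ker (L x)) (L x) (U x)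
      fun f hf => h x (T.mem_insert_self x) f hf.1 fun y hy hlt =>
        have hyT := Finset.mem_of_mem_insert_of_ne hy (by rintro rfl; exact hlt.false)
        LinearMap.mem_ker.1 ((Submodule.mem_iInf _).1 ((Submodule.mem_iInf _).1 hf.2 y) hyT)
    have ih := ih fun y hy f hf hlow => h y (Finset.mem_insert_of_mem hy) f hf fun z hz hlt =>
      hlow z (Finset.mem_of_mem_insert_of_ne hz (by
        rintro rfl; exact (hmax y hy).not_gt hlt)) hlt
    rw [Finset.sum_insert hx, Finset.iInf_insert, inf_comm (LinearMap.ker _), ← inf_assoc]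
    omega

/-- The multiples of `p` of degree at most `D`. -/
noncomputable def multiplesOfNatDegreeLE (p : K[X]) (D : ℕ) : Submodule K K[X] :=
  (degreeLT K (D + 1 - p.natDegree)).map (LinearMap.mulLeft K p)

instance (k : ℕ) : FiniteDimensional K (degreeLT K k) :=
  Module.Finite.equiv (degreeLTEquiv K k).symm

instance (p : K[X]) (D : ℕ) : FiniteDimensional K (multiplesOfNatDegreeLE p D) := by
  unfold multiplesOfNatDegreeLE; infer_instance

lemma finrank_multiplesOfNatDegreeLE_le (p : K[X]) (D : ℕ) :
    Module.finrank K (multiplesOfNatDegreeLE p D) ≤ D + 1 - p.natDegree :=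
  (Submodule.finrank_map_le _ _).trans (by simp [(degreeLTEquiv K _).finrank_eq])

lemma mem_multiplesOfNatDegreeLE {p q : K[X]} {D : ℕ} (hp : p.Monic) (hpq : p ∣ q)
    (hq : q.natDegree ≤ D) : q ∈ multiplesOfNatDegreeLE p D := by
  obtain ⟨g, rfl⟩ := hpq
  refine ⟨g, ?_, rfl⟩
  by_cases hg : g = 0
  · simp [hg]
  rw [hp.natDegree_mul' hg] at hq
  rw [SetLike.mem_coe, mem_degreeLT, degree_eq_natDegree hg]
  exact_mod_cast (by omega : g.natDegree < D + 1 - p.natDegree)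

/-- `lineCoeff` as a linear map. -/
noncomputable def lineCoeffHom (m c : K) (i j : ℕ) : K[X][X][X] →ₗ[K] K[X] where
  toFun := lineCoeff m c i j
  map_add' := lineCoeff_add m c i j
  map_smul' := lineCoeff_smul m c i j

/-- The pairs `(j, i)` of exponents of the monomials `z ^ i * τ ^ j` of weighted order less than
`n * a`, for the weights `M` of `z` and `a` of `τ`. -/
def lowExponents (M a n : ℕ) : Finset (Σ _ : ℕ, ℕ) :=
  (Finset.range n).sigma fun j => Finset.range ((n - j) * a ⌈/⌉ M)

lemma lt_ceilDiv_iff {M k l : ℕ} (hM : 0 < M) : l < k ⌈/⌉ M ↔ M * l < k :=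
  lt_iff_lt_of_le_iff_le (ceilDiv_le_iff_le_mul hM)

lemma mem_lowExponents {M a n i j : ℕ} (hM : 0 < M) :
    ⟨j, i⟩ ∈ lowExponents M a n ↔ M * i + a * j < n * a := by
  simp only [lowExponents, Finset.mem_sigma, Finset.mem_range, lt_ceilDiv_iff hM, Nat.sub_mul,
    mul_comm a j]
  refine ⟨by omega, fun h => ⟨?_, by omega⟩⟩
  by_contra! hnj
  have := Nat.mul_le_mul_right a hnj
  omega

lemma inf_iInf_ker_lineCoeffHom (S : Submodule K K[X][X][X]) (m c : K) {M a n : ℕ} (hM : 0 < M) :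
    (S ⊓ ⨅ x ∈ lowExponents M a n, LinearMap.ker (lineCoeffHom m c x.2 x.1)) =
      S ⊓ lineOrderSubmodule m c M a (n * a) := by
  congr 1
  ext f
  simp only [Submodule.mem_iInf, LinearMap.mem_ker]
  exact ⟨fun h i j hij => h ⟨j, i⟩ ((mem_lowExponents hM).2 hij),
    fun h x hx => h x.2 x.1 ((mem_lowExponents hM).1 hx)⟩

-- The coefficients are killed in the lexicographic order of the exponents `(i, j)`.
lemma finrank_le_finrank_inf_lineOrderSubmodule_add {m c : K} {M a n d : ℕ} (hM : 0 < M)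
    (ha : a ≤ M) (S : Submodule K K[X][X][X]) [FiniteDimensional K S]
    (hS : S ≤ flagSections K n d) {R : ℕ → ℕ → K[X]} (hR : ∀ i j, (R i j).Monic)
    (hdvd : ∀ f ∈ S, ∀ i, ∀ j < n, (∀ i' < i, ∀ j' ≤ j, lineCoeff m c i' j' f = 0) →
      (∀ j' < j, lineCoeff m c i j' f = 0) → R i j ∣ lineCoeff m c i j f) :
    Module.finrank K S ≤ Module.finrank K ↥(S ⊓ lineOrderSubmodule m c M a (n * a)) +
      ∑ j ∈ Finset.range n, ∑ i ∈ Finset.range ((n - j) * a ⌈/⌉ M),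
        (d - i + j + 1 - (R i j).natDegree) := by
  rw [← inf_iInf_ker_lineCoeffHom S m c hM, ← Finset.sum_sigma (Finset.range n) _
    fun x : Σ _ : ℕ, ℕ => d - x.2 + x.1 + 1 - (R x.2 x.1).natDegree]
  refine (finrank_le_finrank_inf_iInf_ker_add_sum (fun x => toLex (x.2, x.1)) S _
    (fun x => multiplesOfNatDegreeLE (R x.2 x.1) (d - x.2 + x.1)) (lowExponents M a n) ?_).trans
    (Nat.add_le_add_left (Finset.sum_le_sum fun x _ => finrank_multiplesOfNatDegreeLE_le _ _) _)
  rintro ⟨j, i⟩ hij f hf hvanish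
  have hj : j < n := Finset.mem_range.1 (Finset.mem_sigma.1 hij).1
  rw [mem_lowExponents hM] at hij
  have hlow {i' j' : ℕ} (hlt : i' < i ∨ i' = i ∧ j' < j)
      (hle : M * i' + a * j' ≤ M * i + a * j) : lineCoeff m c i' j' f = 0 :=
    hvanish ⟨j', i'⟩ ((mem_lowExponents hM).2 (hle.trans_lt hij)) (Prod.Lex.toLex_lt_toLex.2 hlt)
  refine mem_multiplesOfNatDegreeLE (hR i j) ?_ ?_
  · refine hdvd f hf i j hj (fun i' hi' j' hj' => hlow (.inl hi') ?_)
      fun j' hj' => hlow (.inr ⟨rfl, hj'⟩) ?_ <;> gcongr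
  · refine natDegree_lineCoeff_le_sub_add (hS hf).2 fun i' hi' => hlow (.inl hi') ?_
    obtain ⟨k, rfl⟩ := Nat.exists_eq_add_of_le hi'.le
    rw [show i' + k + j - i' = k + j by omega]
    have := Nat.mul_le_mul_right k ha
    linarith

end LineStep

section LineStepDivisor

variable {K : Type*} [Field K] {ι : Type*}

/-- The divisor of the coefficient of `z ^ i * τ ^ j` along a line forced by vanishing to order
`μ p` at the points `p ∈ Q` of the line and by the weights `a h / M` along the lines `h ∈ s`, which
meet the line at the abscissas `x h`. -/
noncomputable def forcedDivisor (M : ℕ) (a : ι → ℕ) (Q : Finset (K × K)) (μ : K × K → ℕ)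
    (s : Finset ι) (x : ι → K) (i j : ℕ) : K[X] :=
  (∏ p ∈ Q, (X - C p.1) ^ (μ p - i)) * ∏ h ∈ s, (X - C (x h)) ^ (j * a h ⌈/⌉ M)

lemma monic_prod_X_sub_C_pow {κ : Type*} (t : Finset κ) (y : κ → K) (e : κ → ℕ) :
    (∏ k ∈ t, (X - C (y k)) ^ e k).Monic :=
  monic_prod_of_monic _ _ fun _ _ => (monic_X_sub_C _).pow _

lemma natDegree_prod_X_sub_C_pow {κ : Type*} (t : Finset κ) (y : κ → K) (e : κ → ℕ) :
    (∏ k ∈ t, (X - C (y k)) ^ e k).natDegree = ∑ k ∈ t, e k := by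
  rw [natDegree_prod_of_monic _ _ fun _ _ => (monic_X_sub_C _).pow _]
  simp [(monic_X_sub_C _).natDegree_pow]

lemma monic_forcedDivisor (M : ℕ) (a : ι → ℕ) (Q : Finset (K × K)) (μ : K × K → ℕ)
    (s : Finset ι) (x : ι → K) (i j : ℕ) : (forcedDivisor M a Q μ s x i j).Monic :=
  (monic_prod_X_sub_C_pow Q Prod.fst _).mul (monic_prod_X_sub_C_pow s x _)

lemma natDegree_forcedDivisor (M : ℕ) (a : ι → ℕ) (Q : Finset (K × K)) (μ : K × K → ℕ)
    (s : Finset ι) (x : ι → K) (i j : ℕ) : (forcedDivisor M a Q μ s x i j).natDegree =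
      ∑ p ∈ Q, (μ p - i) + ∑ h ∈ s, j * a h ⌈/⌉ M := by
  rw [forcedDivisor, Monic.natDegree_mul (monic_prod_X_sub_C_pow Q Prod.fst _)
    (monic_prod_X_sub_C_pow s x _), natDegree_prod_X_sub_C_pow, natDegree_prod_X_sub_C_pow]

lemma isCoprime_X_sub_C_pow {x y : K} (h : x ≠ y) (k l : ℕ) :
    IsCoprime ((X - C x) ^ k) ((X - C y) ^ l) :=
  (isCoprime_X_sub_C_of_isUnit_sub (sub_ne_zero.2 h).isUnit).pow

/-- The number of coefficients to be killed for vanishing to weighted order `n * a l` along the line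
`l`, each being a polynomial of bounded degree divisible by its `forcedDivisor`. -/
def lineCost (M n d : ℕ) (a : ι → ℕ) (l : ι) (Q : Finset (K × K)) (μ : K × K → ℕ)
    (s : Finset ι) : ℕ :=
  ∑ j ∈ Finset.range n, ∑ i ∈ Finset.range ((n - j) * a l ⌈/⌉ M),
    (d - i + j + 1 - (∑ p ∈ Q, (μ p - i) + ∑ h ∈ s, j * a h ⌈/⌉ M))

theorem finrank_le_finrank_inf_lineOrderSubmodule_add_lineCost {m c : ι → K} {M n d : ℕ}
    (hM : 0 < M) {a : ι → ℕ} {l : ι} (ha : a l ≤ M) {Q : Finset (K × K)} {μ : K × K → ℕ}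
    {s : Finset ι} {x : ι → K} (hQ : ∀ p ∈ Q, p.2 = m l * p.1 + c l) (hm : ∀ h ∈ s, m l ≠ m h)
    (hx : ∀ h ∈ s, m l * x h + c l = m h * x h + c h) (hinj : Set.InjOn x s)
    (hdisj : ∀ h ∈ s, ∀ p ∈ Q, x h ≠ p.1) (S : Submodule K K[X][X][X]) [FiniteDimensional K S]
    (hS : S ≤ flagSections K n d) (hSQ : ∀ p ∈ Q, S ≤ pointOrderSubmodule p.1 p.2 (μ p))
    (hSs : ∀ h ∈ s, S ≤ lineOrderSubmodule (m h) (c h) M (a h) (n * a h)) :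
    Module.finrank K S ≤
      Module.finrank K ↥(S ⊓ lineOrderSubmodule (m l) (c l) M (a l) (n * a l)) +
        lineCost M n d a l Q μ s := by
  simp_rw [lineCost, ← natDegree_forcedDivisor M a Q μ s x]
  refine finrank_le_finrank_inf_lineOrderSubmodule_add hM ha S hS
    (monic_forcedDivisor M a Q μ s x) fun f hf i j hj h0 h1 => IsCoprime.mul_dvd ?_ ?_ ?_
  · exact IsCoprime.prod_left fun p hp => IsCoprime.prod_right fun h hh =>
      isCoprime_X_sub_C_pow (hdisj h hh p hp).symm _ _
  · refine Finset.prod_dvd_of_coprime (fun p hp p' hp' hne => isCoprime_X_sub_C_pow ?_ _ _)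
      fun p hp => X_sub_C_pow_dvd_lineCoeff (hQ p hp) (hSQ p hp hf) i j
    exact fun h => hne (Prod.ext h (by rw [hQ p hp, hQ p' hp', h]))
  · exact Finset.prod_dvd_of_coprime
      (fun h hh h' hh' hne => isCoprime_X_sub_C_pow (hinj.ne hh hh' hne) _ _) fun h hh =>
      X_sub_C_pow_dvd_lineCoeff_of_lineOrderGE (hm h hh) (hx h hh) hM (hS hf).1 (hSs h hh hf) hj.le
        h0 h1

end LineStepDivisor

section LineCostEstimate

lemma sum_range_natCast (n : ℕ) : ∑ j ∈ Finset.range n, (j : ℝ) = n * (n - 1) / 2 := by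
  induction n with
  | zero => simp
  | succ n ih => rw [Finset.sum_range_succ, ih]; push_cast; ring

lemma sum_range_natCast_sq (n : ℕ) :
    ∑ j ∈ Finset.range n, (j : ℝ) ^ 2 = n * (n - 1) * (2 * n - 1) / 6 := by
  induction n with
  | zero => simp
  | succ n ih => rw [Finset.sum_range_succ, ih]; push_cast; ring

lemma sum_range_quadratic (n : ℕ) (A B C D : ℝ) :
    ∑ j ∈ Finset.range n, (A * (n - j) + B * (j * (n - j)) + C * (n - j) ^ 2 + D) =
      A * (n * (n + 1) / 2) + B * ((n ^ 3 - n) / 6) + C * (n * (n + 1) * (2 * n + 1) / 6) +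
        D * n := by
  have expand (j : ℕ) : A * (n - j) + B * (j * (n - j)) + C * (n - j) ^ 2 + D =
      (A * n + C * n ^ 2 + D) + (B * n - A - 2 * C * n) * j + (C - B) * (j : ℝ) ^ 2 := by ring
  simp_rw [expand]
  rw [Finset.sum_add_distrib, Finset.sum_add_distrib, ← Finset.mul_sum, ← Finset.mul_sum,
    sum_range_natCast, sum_range_natCast_sq, Finset.sum_const, Finset.card_range, nsmul_eq_mul]
  ring

lemma div_le_cast_ceilDiv {M : ℕ} (hM : 0 < M) (k : ℕ) : (k / M : ℝ) ≤ (k ⌈/⌉ M : ℕ) := by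
  rw [div_le_iff₀' (by exact_mod_cast hM)]
  exact_mod_cast (ceilDiv_le_iff_le_mul hM).1 le_rfl

lemma cast_ceilDiv_le {M : ℕ} (hM : 0 < M) (k : ℕ) : ((k ⌈/⌉ M : ℕ) : ℝ) ≤ k / M + 1 := by
  have hM' : (0 : ℝ) < M := by exact_mod_cast hM
  rw [← sub_le_iff_le_add, le_div_iff₀' hM']
  rcases Nat.eq_zero_or_pos (k ⌈/⌉ M) with h | h
  · rw [h, Nat.cast_zero]
    nlinarith [k.cast_nonneg (α := ℝ)]
  · have := (lt_ceilDiv_iff hM).1 (Nat.sub_lt h one_pos)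
    rw [← Nat.cast_pred h]
    exact_mod_cast this.le

lemma mul_ceilDiv_le {M b : ℕ} (hM : 0 < M) (hb : b ≤ M) (j : ℕ) : j * b ⌈/⌉ M ≤ j := by
  rw [ceilDiv_le_iff_le_mul hM, mul_comm M]
  gcongr

lemma sum_range_affine_le {B E k y : ℝ} {I : ℕ} (hB : 0 ≤ B) (hE : 0 ≤ E) (hk : 0 ≤ k)
    (hy : 0 ≤ y) (hyI : y ≤ I) (hIy : I ≤ y + 1) :
    ∑ i ∈ Finset.range I, (B - E + (k - 1) * i) ≤
      y * (B - E) + B + (k - 1) / 2 * y ^ 2 + (k + 1) / 2 * y := by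
  have hB' : I * B ≤ (y + 1) * B := by gcongr
  have hE' : y * E ≤ I * E := by gcongr
  have hupper : (I : ℝ) * (I - 1) ≤ y ^ 2 + y := by nlinarith
  have hlower : y ^ 2 - y ≤ (I : ℝ) * (I - 1) := by
    rcases I.eq_zero_or_pos with rfl | hI
    · norm_num at hyI ⊢
      nlinarith
    · have : (1 : ℝ) ≤ I := by exact_mod_cast hI
      nlinarith
  have hk' : k * (I * (I - 1)) ≤ k * (y ^ 2 + y) := by gcongr
  rw [Finset.sum_add_distrib, ← Finset.mul_sum, sum_range_natCast, Finset.sum_const,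
    Finset.card_range, nsmul_eq_mul]
  linarith

variable {α ι : Type*} {M n d : ℕ} {a : ι → ℕ} {Q : Finset α} {μ : α → ℕ} {s : Finset ι}

lemma cast_sub_forced_le (hM : 0 < M) (ha : ∀ h ∈ s, a h ≤ M) (hμ : ∀ p ∈ Q, μ p ≤ n)
    (hd : (Q.card + s.card + 1) * n ≤ d) {i j : ℕ} (hi : i < n) (hj : j < n) :
    ((d - i + j + 1 - (∑ p ∈ Q, (μ p - i) + ∑ h ∈ s, j * a h ⌈/⌉ M) : ℕ) : ℝ) ≤
      (d + 1 + j) - (∑ p ∈ Q, (μ p : ℝ) + j * ∑ h ∈ s, (a h / M : ℝ)) + (Q.card - 1) * i := by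
  have hQ : ∑ p ∈ Q, (μ p - i) ≤ Q.card * n :=
    Finset.sum_le_card_nsmul _ _ _ fun p hp => (Nat.sub_le _ _).trans (hμ p hp)
  have hs : ∑ h ∈ s, j * a h ⌈/⌉ M ≤ s.card * n :=
    Finset.sum_le_card_nsmul _ _ _ fun h hh => (mul_ceilDiv_le hM (ha h hh) j).trans hj.le
  rw [add_mul, add_mul, one_mul] at hd
  have hQ' : ∑ p ∈ Q, (μ p : ℝ) - Q.card * i ≤ ∑ p ∈ Q, ((μ p - i : ℕ) : ℝ) := by
    rw [← nsmul_eq_mul, ← Finset.sum_const, ← Finset.sum_sub_distrib]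
    exact Finset.sum_le_sum fun p _ => sub_le_iff_le_add.2 (by exact_mod_cast le_tsub_add)
  have hs' : j * ∑ h ∈ s, (a h / M : ℝ) ≤ ∑ h ∈ s, ((j * a h ⌈/⌉ M : ℕ) : ℝ) := by
    rw [Finset.mul_sum]
    refine Finset.sum_le_sum fun h _ => ?_
    rw [← mul_div_assoc]
    exact_mod_cast div_le_cast_ceilDiv hM (j * a h)
  rw [Nat.cast_sub (by omega)]
  push_cast [Nat.cast_sub (by omega : i ≤ d)]
  linarith

lemma cast_sum_sub_forced_le (hM : 0 < M) (ha : ∀ h ∈ s, a h ≤ M) (hμ : ∀ p ∈ Q, μ p ≤ n)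
    (hd : (Q.card + s.card + 1) * n ≤ d) {b j : ℕ} (hb : b ≤ M) (hj : j < n) :
    ((∑ i ∈ Finset.range ((n - j) * b ⌈/⌉ M),
        (d - i + j + 1 - (∑ p ∈ Q, (μ p - i) + ∑ h ∈ s, j * a h ⌈/⌉ M)) : ℕ) : ℝ) ≤
      b / M * (d - ∑ p ∈ Q, (μ p : ℝ)) * (n - j) +
        b / M * (1 - ∑ h ∈ s, (a h / M : ℝ)) * (j * (n - j)) +
        (Q.card - 1) / 2 * (b / M) ^ 2 * (n - j) ^ 2 + (d + 2 * n + (Q.card + 1) / 2 * n) := by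
  have hjn : (j : ℝ) + 1 ≤ n := by exact_mod_cast hj
  have hcast : (((n - j) * b : ℕ) : ℝ) / M = (n - j) * (b / M) := by
    rw [Nat.cast_mul, Nat.cast_sub hj.le, mul_div_assoc]
  have hlower := div_le_cast_ceilDiv hM ((n - j) * b)
  have hupper := cast_ceilDiv_le hM ((n - j) * b)
  rw [hcast] at hlower hupper
  have hb0 : (0 : ℝ) ≤ b / M := by positivity
  have hb1 : (b / M : ℝ) ≤ 1 := div_le_one_of_le₀ (by exact_mod_cast hb) (by positivity)
  have hy0 : 0 ≤ (n - j) * (b / M : ℝ) := mul_nonneg (by linarith) hb0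
  have hyn : (n - j) * (b / M : ℝ) ≤ n := by nlinarith
  have hk : (Q.card + 1) / 2 * ((n - j) * (b / M : ℝ)) ≤ (Q.card + 1) / 2 * n := by gcongr
  have hsum := sum_range_affine_le (B := d + 1 + j) (k := Q.card)
    (E := ∑ p ∈ Q, (μ p : ℝ) + j * ∑ h ∈ s, (a h / M : ℝ)) (by positivity) (by positivity)
    (by positivity) hy0 hlower hupper
  rw [Nat.cast_sum]
  refine (Finset.sum_le_sum fun i hi => cast_sub_forced_le hM ha hμ hd ?_ hj).trans ?_
  · exact (Finset.mem_range.1 hi).trans_le ((mul_ceilDiv_le hM hb _).trans (n.sub_le j))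
  · linarith

lemma line_estimate_le {x k H σ D N C : ℝ} (hx0 : 0 ≤ x) (hx1 : x ≤ 1) (hk : 0 ≤ k) (hkC : k ≤ C)
    (hH : 0 ≤ H) (hHC : H ≤ C) (hσ : 0 ≤ σ) (hN : 1 ≤ N) (hD : D ≤ C * N) :
    x * (D - σ) * (N * (N + 1) / 2) + x * (1 - H) * ((N ^ 3 - N) / 6) +
        (k - 1) / 2 * x ^ 2 * (N * (N + 1) * (2 * N + 1) / 6) + (D + 2 * N + (k + 1) / 2 * N) * N ≤
      x * (D - σ) * N ^ 2 / 2 + x * N ^ 3 / 6 + (k - 1) * x ^ 2 * N ^ 3 / 6 - x * H * N ^ 3 / 6 +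
        (3 * C + 3) * N ^ 2 := by
  have hNsq : N ≤ N ^ 2 := by nlinarith
  have hC : 0 ≤ C := hk.trans hkC
  have hx2 : x ^ 2 ≤ 1 := pow_le_one₀ hx0 hx1
  have hdegree : x * (D - σ) * N ≤ C * N ^ 2 := by
    have hxD : x * (D - σ) ≤ 1 * (C * N) := by
      refine (mul_le_mul_of_nonneg_left (by linarith) hx0).trans
        (mul_le_mul_of_nonneg_right hx1 (by positivity))
    nlinarith
  have hcross : x * H * N ≤ 1 * C * N ^ 2 := by gcongr
  have hpoints : k * x ^ 2 * (3 * N ^ 2 + N) ≤ C * 1 * (3 * N ^ 2 + N ^ 2) := by gcongr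
  have hremainder : (D + 2 * N + (k + 1) / 2 * N) * N ≤
      (C * N + 2 * N + (C + 1) / 2 * N) * N := by gcongr
  have hxN : 0 ≤ x * N := by positivity
  have hx2N : 0 ≤ x ^ 2 * (3 * N ^ 2 + N) := by positivity
  nlinarith

variable {K : Type*}

theorem cast_lineCost_le {Q : Finset (K × K)} {μ : K × K → ℕ} (hM : 0 < M) (ha : ∀ h, a h ≤ M)
    (l : ι) (hμ : ∀ p ∈ Q, μ p ≤ n) (hn : 1 ≤ n) (hd : (Q.card + s.card + 1) * n ≤ d) {C : ℝ}
    (hC : d ≤ C * n) :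
    (lineCost M n d a l Q μ s : ℝ) ≤
      a l / M * (d - ∑ p ∈ Q, (μ p : ℝ)) * n ^ 2 / 2 + a l / M * n ^ 3 / 6 +
        (Q.card - 1) * (a l / M) ^ 2 * n ^ 3 / 6 - a l / M * (∑ h ∈ s, (a h / M : ℝ)) * n ^ 3 / 6 +
        (3 * C + 3) * n ^ 2 := by
  rw [lineCost, Nat.cast_sum]
  refine (Finset.sum_le_sum fun j hj => cast_sum_sub_forced_le hM (fun h _ => ha h) hμ hd (ha l)
    (Finset.mem_range.1 hj)).trans ?_
  rw [sum_range_quadratic]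
  have hcard : (Q.card + s.card + 1 : ℝ) ≤ C := by
    have : (0 : ℝ) < n := by exact_mod_cast hn
    refine le_of_mul_le_mul_right (le_trans ?_ hC) this
    exact_mod_cast hd
  have hle (h : ι) : (a h / M : ℝ) ≤ 1 :=
    div_le_one_of_le₀ (by exact_mod_cast ha h) (by positivity)
  have hcross : ∑ h ∈ s, (a h / M : ℝ) ≤ s.card := by
    simpa using Finset.sum_le_card_nsmul s _ 1 fun h _ => hle h
  exact line_estimate_le (by positivity) (hle l) (by positivity) (by linarith) (by positivity)
    (by linarith) (by positivity) (by exact_mod_cast hn) hC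

end LineCostEstimate

/-! ### The total cost of the vanishing conditions -/

section Incidence

variable {K : Type*} [Field K] {ι : Type*} (m c : ι → K) (P : Finset (K × K))

/-- The point `p` lies on the `i`-th line `y = m i * x + c i`. -/
def OnLine (i : ι) (p : K × K) : Prop := p.2 = m i * p.1 + c i

/-- The set `P` contains every point lying on at least three of the lines. -/
def ContainsTriplePoints : Prop :=
  ∀ p, ∀ s : Finset ι, 2 < s.card → (∀ i ∈ s, OnLine m c i p) → p ∈ P

/-- The lines `i` and `h` are distinct and do not meet at a point of `P`, so that they meet at an
ordinary double point if `P` contains the points of multiplicity at least three. -/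
def MeetOutside (i h : ι) : Prop := i ≠ h ∧ ∀ p ∈ P, ¬(OnLine m c i p ∧ OnLine m c h p)

open Classical in
/-- The points of `P` on the `i`-th line. -/
noncomputable def pointsOn (i : ι) : Finset (K × K) := P.filter (OnLine m c i)

open Classical in
/-- The sum of `x l * x h` over the ordered pairs of lines of `s` meeting outside `P`. -/
noncomputable def doublePointSum (x : ι → ℝ) (s : Finset ι) : ℝ :=
  ∑ l ∈ s, ∑ h ∈ s with MeetOutside m c P l h, x l * x h

variable {m c P}

lemma MeetOutside.symm {i h : ι} (hd : MeetOutside m c P i h) : MeetOutside m c P h i :=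
  ⟨hd.1.symm, fun p hp hh => hd.2 p hp hh.symm⟩

lemma meetOutside_comm {i h : ι} : MeetOutside m c P i h ↔ MeetOutside m c P h i :=
  ⟨MeetOutside.symm, MeetOutside.symm⟩

lemma mem_pointsOn {i : ι} {p : K × K} : p ∈ pointsOn m c P i ↔ p ∈ P ∧ OnLine m c i p := by
  simp [pointsOn]

lemma onLine_of_div_eq {l h : ι} (hne : m l ≠ m h) {p : K × K} (hp : OnLine m c l p)
    (hx : (c h - c l) / (m l - m h) = p.1) : OnLine m c h p := by
  rw [div_eq_iff (sub_ne_zero.2 hne)] at hx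
  unfold OnLine at hp ⊢
  linear_combination hp - hx

lemma onLine_crossing {l h : ι} (hne : m l ≠ m h) :
    OnLine m c h ((c h - c l) / (m l - m h), m l * ((c h - c l) / (m l - m h)) + c l) :=
  onLine_of_div_eq (l := l) hne rfl rfl

lemma injOn_crossing (hm : Function.Injective m) (hP : ContainsTriplePoints m c P)
    (l : ι) : Set.InjOn (fun h => (c h - c l) / (m l - m h)) {h | MeetOutside m c P l h} := by
  classical
  intro h hh h' hh' he
  by_contra hne
  have hcross : OnLine m c h _ := onLine_crossing (l := l) (hm.ne hh.1)
  refine hh.2 _ (hP _ {l, h, h'} ?_ ?_) ⟨?_, hcross⟩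
  · rw [Finset.card_eq_three.2 ⟨l, h, h', hh.1, hh'.1, hne, rfl⟩]
    norm_num
  · simp only [Finset.mem_insert, Finset.mem_singleton, forall_eq_or_imp, forall_eq]
    exact ⟨rfl, hcross, onLine_of_div_eq (hm.ne hh'.1) rfl he.symm⟩
  · rfl

open Classical in
lemma doublePointSum_insert (x : ι → ℝ) {s : Finset ι} {l : ι} (hl : l ∉ s) :
    doublePointSum m c P x (insert l s) =
      doublePointSum m c P x s + 2 * ∑ h ∈ s with MeetOutside m c P l h, x l * x h := by
  have hll : ¬MeetOutside m c P l l := fun h => h.1 rfl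
  simp only [doublePointSum, Finset.sum_filter]
  simp only [Finset.sum_insert hl, if_neg hll, Finset.sum_add_distrib,
    meetOutside_comm (h := l), mul_comm _ (x l)]
  ring

end Incidence

section TotalCost

variable {K : Type*} [Field K]

lemma le_inf_iInf_add {α I : Type*} [CompleteLattice α] [DecidableEq I] (F : α → ℝ) (S : α)
    (U : I → α) (b : Finset I → ℝ) (h₀ : b ∅ = 0)
    (h : ∀ s, ∀ i ∉ s, F (S ⊓ ⨅ j ∈ s, U j) + b s ≤ F (S ⊓ (⨅ j ∈ s, U j) ⊓ U i) + b (insert i s))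
    (s : Finset I) : F S ≤ F (S ⊓ ⨅ i ∈ s, U i) + b s := by
  induction s using Finset.induction_on with
  | empty => simp [h₀]
  | insert i s hi ih =>
    rw [Finset.iInf_insert, inf_comm (U i), ← inf_assoc]
    exact ih.trans (h s i hi)

theorem two_mul_finrank_le_inf_iInf_pointOrderSubmodule (S : Submodule K K[X][X][X])
    [FiniteDimensional K S] {n : ℕ} (hS : ∀ f ∈ S, f.natDegree ≤ n) (μ : K × K → ℕ)
    (P : Finset (K × K)) :
    (2 * Module.finrank K S : ℝ) ≤
      2 * Module.finrank K ↥(S ⊓ ⨅ p ∈ P, pointOrderSubmodule p.1 p.2 (μ p)) +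
        ∑ p ∈ P, ((n : ℝ) + 1) * (μ p * (μ p + 1)) := by
  classical
  refine le_inf_iInf_add (fun T : Submodule K K[X][X][X] => (2 * Module.finrank K T : ℝ)) S
    (fun p => pointOrderSubmodule p.1 p.2 (μ p))
    (fun s => ∑ p ∈ s, ((n : ℝ) + 1) * (μ p * (μ p + 1))) rfl (fun s p hp => ?_) P
  have : FiniteDimensional K ↥(S ⊓ ⨅ q ∈ s, pointOrderSubmodule q.1 q.2 (μ q)) :=
    Submodule.finiteDimensional_of_le inf_le_left
  have hcut := two_mul_finrank_le_inf_pointOrderSubmodule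
    (S ⊓ ⨅ q ∈ s, pointOrderSubmodule q.1 q.2 (μ q)) (fun f hf => hS f hf.1) p.1 p.2 (μ p)
  have hcut' := Nat.cast_le (α := ℝ).2 hcut
  push_cast at hcut'
  rw [Finset.sum_insert hp]
  linarith

variable {ι : Type*}

/-- An upper bound for the cost of vanishing along the line `l` to weighted order `n * a l`, before
accounting for the double points. -/
noncomputable def lineCostBound (m c : ι → K) (P : Finset (K × K)) (M n d : ℕ) (a : ι → ℕ)
    (μ : K × K → ℕ) (C : ℝ) (l : ι) : ℝ :=
  a l / M * (d - ∑ p ∈ pointsOn m c P l, (μ p : ℝ)) * n ^ 2 / 2 + a l / M * n ^ 3 / 6 +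
    ((pointsOn m c P l).card - 1) * (a l / M) ^ 2 * n ^ 3 / 6 + (3 * C + 3) * n ^ 2

variable [Fintype ι] {m c : ι → K} {P : Finset (K × K)}

open Classical in
lemma finrank_le_finrank_inf_lineOrderSubmodule_add_lineCostBound (hm : Function.Injective m)
    (hP : ContainsTriplePoints m c P) {M n d : ℕ} (hM : 0 < M) (hn : 1 ≤ n) {a : ι → ℕ}
    (ha : ∀ i, a i ≤ M) {μ : K × K → ℕ} (hμ : ∀ p ∈ P, μ p ≤ n)
    (hd : (P.card + Fintype.card ι + 1) * n ≤ d) {C : ℝ} (hC : d ≤ C * n)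
    (S : Submodule K K[X][X][X]) [FiniteDimensional K S] (hS : S ≤ flagSections K n d)
    (hSP : ∀ p ∈ P, S ≤ pointOrderSubmodule p.1 p.2 (μ p)) {s : Finset ι}
    (hSs : ∀ h ∈ s, S ≤ lineOrderSubmodule (m h) (c h) M (a h) (n * a h)) (l : ι) :
    (Module.finrank K S : ℝ) ≤
      Module.finrank K ↥(S ⊓ lineOrderSubmodule (m l) (c l) M (a l) (n * a l)) +
        (lineCostBound m c P M n d a μ C l -
          (∑ h ∈ s with MeetOutside m c P l h, (a l / M : ℝ) * (a h / M)) * n ^ 3 / 6) := by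
  set s' := {h ∈ s | MeetOutside m c P l h}
  have hmeet {h : ι} (hh : h ∈ s') : MeetOutside m c P l h := (Finset.mem_filter.1 hh).2
  have hne {h : ι} (hh : h ∈ s') : m l ≠ m h := hm.ne (hmeet hh).1
  have hcost := finrank_le_finrank_inf_lineOrderSubmodule_add_lineCost (c := c) hM (ha l)
    (Q := pointsOn m c P l) (μ := μ) (s := s') (fun p hp => (mem_pointsOn.1 hp).2)
    (fun h hh => hne hh) (fun h hh => onLine_crossing (hne hh))
    ((injOn_crossing hm hP l).mono fun h hh => hmeet hh)
    (fun h hh p hp he => (hmeet hh).2 p (mem_pointsOn.1 hp).1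
      ⟨(mem_pointsOn.1 hp).2, onLine_of_div_eq (hne hh) (mem_pointsOn.1 hp).2 he⟩)
    S hS (fun p hp => hSP p (mem_pointsOn.1 hp).1) fun h hh => hSs h (Finset.mem_filter.1 hh).1
  have hcard : ((pointsOn m c P l).card + s'.card + 1) * n ≤ d := by
    refine le_trans ?_ hd
    gcongr
    · exact Finset.filter_subset _ _
    · exact s'.card_le_univ
  have hbound := cast_lineCost_le hM ha l (fun p hp => hμ p (mem_pointsOn.1 hp).1) hn hcard hC
  rw [← Finset.mul_sum]
  have hcost' := Nat.cast_le (α := ℝ).2 hcost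
  push_cast at hcost'
  rw [lineCostBound]
  linarith

theorem finrank_le_finrank_inf_iInf_lineOrderSubmodule_add (hm : Function.Injective m)
    (hP : ContainsTriplePoints m c P) {M n d : ℕ} (hM : 0 < M) (hn : 1 ≤ n) {a : ι → ℕ}
    (ha : ∀ i, a i ≤ M) {μ : K × K → ℕ} (hμ : ∀ p ∈ P, μ p ≤ n)
    (hd : (P.card + Fintype.card ι + 1) * n ≤ d) {C : ℝ} (hC : d ≤ C * n)
    (S : Submodule K K[X][X][X]) [FiniteDimensional K S] (hS : S ≤ flagSections K n d)
    (hSP : ∀ p ∈ P, S ≤ pointOrderSubmodule p.1 p.2 (μ p)) (s : Finset ι) :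
    (Module.finrank K S : ℝ) ≤
      Module.finrank K ↥(S ⊓ ⨅ i ∈ s, lineOrderSubmodule (m i) (c i) M (a i) (n * a i)) +
        (∑ l ∈ s, lineCostBound m c P M n d a μ C l -
          doublePointSum m c P (fun l => (a l / M : ℝ)) s * n ^ 3 / 12) := by
  classical
  refine le_inf_iInf_add (fun T : Submodule K K[X][X][X] => (Module.finrank K T : ℝ)) S _
    (fun s => ∑ l ∈ s, lineCostBound m c P M n d a μ C l -
      doublePointSum m c P (fun l => (a l / M : ℝ)) s * n ^ 3 / 12)
    (by simp [doublePointSum]) (fun s l hl => ?_) s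
  set T := S ⊓ ⨅ i ∈ s, lineOrderSubmodule (m i) (c i) M (a i) (n * a i)
  have : FiniteDimensional K T := Submodule.finiteDimensional_of_le inf_le_left
  have hcut := finrank_le_finrank_inf_lineOrderSubmodule_add_lineCostBound hm hP hM hn ha hμ hd hC
    T (inf_le_left.trans hS) (fun p hp => inf_le_left.trans (hSP p hp))
    (fun h hh => inf_le_right.trans (iInf₂_le h hh)) l
  rw [Finset.sum_insert hl, doublePointSum_insert _ hl]
  linarith

end TotalCost

/-! ### The inequality for rational weights -/

section PointWeight

variable {K : Type*} [Field K] {ι : Type*} [Fintype ι] (m c : ι → K) (P : Finset (K × K))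

open Classical in
/-- The total weight of the lines through the point `p`. -/
noncomputable def pointWeight (x : ι → ℝ) (p : K × K) : ℝ := ∑ i with OnLine m c i p, x i

/-- The coefficient of `n ^ 3` in the lower bound for the excess of twice the dimension of the
space of parabolic sections over `(n + 1) * e ^ 2`, as a function of the weights of the lines. -/
noncomputable def leadingExcess (x : ι → ℝ) : ℝ :=
  -((∑ i, x i - 1) / 2) ^ 2 - (∑ i, x i) / 3 + (∑ i, x i ^ 2) / 3 +
    doublePointSum m c P x Finset.univ / 6 +
    ((∑ p ∈ P, pointWeight m c x p ^ 2) / 4 - (∑ p ∈ P, pointWeight m c (x ^ 2) p) / 3)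

lemma sum_mul_sum_pointsOn (x : ι → ℝ) (f : K × K → ℝ) :
    ∑ l, x l * ∑ p ∈ pointsOn m c P l, f p = ∑ p ∈ P, f p * pointWeight m c x p := by
  classical
  simp_rw [pointsOn, pointWeight, Finset.sum_filter, Finset.mul_sum]
  rw [Finset.sum_comm]
  refine Finset.sum_congr rfl fun p _ => Finset.sum_congr rfl fun l _ => ?_
  rw [mul_ite, mul_ite, mul_comm, mul_zero, mul_zero]

lemma sum_mul_card_pointsOn (x : ι → ℝ) :
    ∑ l, x l * (pointsOn m c P l).card = ∑ p ∈ P, pointWeight m c x p := by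
  simpa using sum_mul_sum_pointsOn m c P x 1

end PointWeight

section RationalWeights

variable {K : Type*} [Field K] {ι : Type*} [Fintype ι] {m c : ι → K} {P : Finset (K × K)}

lemma exists_cast_eq_mul_pointWeight {M : ℕ} (hM : 0 < M) (r : ℕ) {a : ι → ℕ}
    (hpt : ∀ x y : K, ∀ s : Finset ι, (∀ i ∈ s, y = m i * x + c i) → ∑ i ∈ s, a i ≤ 2 * M) :
    ∃ μ : K × K → ℕ, (∀ p, μ p ≤ 2 * M * r) ∧
      ∀ p, (μ p : ℝ) = (2 * M * r : ℕ) / 2 * pointWeight m c (fun i => (a i / M : ℝ)) p := by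
  classical
  refine ⟨fun p => r * ∑ i with OnLine m c i p, a i, fun p => ?_, fun p => ?_⟩
  · exact (Nat.mul_le_mul_left r (hpt p.1 p.2 {i | OnLine m c i p}
      fun i hi => (Finset.mem_filter.1 hi).2)).trans_eq (mul_comm _ _)
  · have hM' : (M : ℝ) ≠ 0 := by exact_mod_cast hM.ne'
    rw [pointWeight, ← Finset.sum_div]
    push_cast
    field_simp

lemma two_mul_sum_lineCostBound {M n d : ℕ} {a : ι → ℕ} {μ : K × K → ℕ} {C : ℝ} {x : ι → ℝ}
    (hx : ∀ i, (a i / M : ℝ) = x i) (hμ : ∀ p, (μ p : ℝ) = n / 2 * pointWeight m c x p) :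
    2 * ∑ l, lineCostBound m c P M n d a μ C l =
      (∑ i, x i) * (d * n ^ 2 + n ^ 3 / 3) - (∑ p ∈ P, pointWeight m c x p ^ 2) * (n ^ 3 / 2) +
        (∑ p ∈ P, pointWeight m c (x ^ 2) p - ∑ i, x i ^ 2) * (n ^ 3 / 3) +
        Fintype.card ι * (6 * C + 6) * n ^ 2 := by
  have hterm (l : ι) : 2 * lineCostBound m c P M n d a μ C l =
      x l * (d * n ^ 2 + n ^ 3 / 3) -
        (x l * ∑ p ∈ pointsOn m c P l, pointWeight m c x p) * (n ^ 3 / 2) +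
        ((x ^ 2) l * (pointsOn m c P l).card - x l ^ 2) * (n ^ 3 / 3) + (6 * C + 6) * n ^ 2 := by
    simp only [lineCostBound, hx, hμ, ← Finset.mul_sum, Pi.pow_apply]
    ring
  have hsq : ∑ l, x l * ∑ p ∈ pointsOn m c P l, pointWeight m c x p =
      ∑ p ∈ P, pointWeight m c x p ^ 2 := by
    simp_rw [sum_mul_sum_pointsOn, sq]
  rw [Finset.mul_sum]
  simp_rw [hterm]
  rw [Finset.sum_add_distrib, Finset.sum_add_distrib, Finset.sum_sub_distrib, ← Finset.sum_mul,
    ← Finset.sum_mul, ← Finset.sum_mul, Finset.sum_sub_distrib, hsq, sum_mul_card_pointsOn,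
    Finset.sum_const, Finset.card_univ, nsmul_eq_mul]
  ring

lemma sum_pointCost {n : ℕ} {μ : K × K → ℕ} {x : ι → ℝ}
    (hμ : ∀ p, (μ p : ℝ) = n / 2 * pointWeight m c x p) :
    ∑ p ∈ P, ((n : ℝ) + 1) * (μ p * (μ p + 1)) =
      (n + 1) * (n ^ 2 / 4 * ∑ p ∈ P, pointWeight m c x p ^ 2 +
        n / 2 * ∑ p ∈ P, pointWeight m c x p) := by
  simp only [hμ, ← Finset.mul_sum]
  congr 1
  rw [Finset.mul_sum, Finset.mul_sum, ← Finset.sum_add_distrib]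
  exact Finset.sum_congr rfl fun p _ => by ring

open Filter Topology in
lemma nonpos_of_eventually_cubic_le {A B C : ℝ} {u : ℕ → ℝ} (hu : Tendsto u atTop atTop)
    (h : ∀ᶠ r in atTop, A * u r ^ 3 + B * u r ^ 2 + C * u r ≤ 0) : A ≤ 0 := by
  have hinv : Tendsto (fun r => (u r)⁻¹) atTop (𝓝 0) := tendsto_inv_atTop_zero.comp hu
  have hlim : Tendsto (fun r => A + B * (u r)⁻¹ + C * (u r)⁻¹ ^ 2) atTop (𝓝 A) := by
    simpa using (tendsto_const_nhds (x := A)).add (hinv.const_mul B) |>.add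
      ((hinv.pow 2).const_mul C)
  refine le_of_tendsto hlim ?_
  filter_upwards [h, hu.eventually_gt_atTop 0] with r hr hpos
  have hdiv : A + B * (u r)⁻¹ + C * (u r)⁻¹ ^ 2 =
      (A * u r ^ 3 + B * u r ^ 2 + C * u r) / u r ^ 3 := by
    field_simp
  exact hdiv ▸ div_nonpos_of_nonpos_of_nonneg hr (pow_pos hpos 3).le

variable [CharZero K]

theorem cast_le_of_two_mul_finrank_parabolicSections_le (hm : Function.Injective m)
    (hc : ∀ i, c i ≠ 0) (hP : ContainsTriplePoints m c P) {M : ℕ} (hM : 0 < M) {a : ι → ℕ}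
    (ha : ∀ i, a i ≤ M)
    (hpt : ∀ x y : K, ∀ s : Finset ι, (∀ i ∈ s, y = m i * x + c i) → ∑ i ∈ s, a i ≤ 2 * M)
    (hle : 3 * M ≤ ∑ i, a i) (hge : ∑ i, a i ≤ 5 * M) {n r k e : ℕ} (hr : 0 < r)
    (hn : n = 2 * M * r) (hk : k + 2 + r * M = r * ∑ i, a i) (he : k + 2 * n < e)
    {μ : K × K → ℕ} (hμ : ∀ p ∈ P, μ p ≤ n) (hd : (P.card + Fintype.card ι + 1) * n ≤ e + k)
    {C : ℝ} (hC : ((e + k : ℕ) : ℝ) ≤ C * n) :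
    ((n : ℝ) + 1) * (e + k + 1) * (n + (e + k) + 2) -
        ∑ p ∈ P, ((n : ℝ) + 1) * (μ p * (μ p + 1)) -
        2 * ∑ l, lineCostBound m c P M n (e + k) a μ C l +
        doublePointSum m c P (fun l => (a l / M : ℝ)) Finset.univ * n ^ 3 / 6 ≤
      (n + 1) * e ^ 2 := by
  have hn₁ : 1 ≤ n := by rw [hn]; exact Nat.succ_le_of_lt (by positivity)
  obtain ⟨F, hF, hfin, hdim⟩ := exists_le_flagSections_two_mul_finrank_eq K n (e + k)
  have hpoints := two_mul_finrank_le_inf_iInf_pointOrderSubmodule F (fun f hf => (hF hf).1) μ P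
  set S := F ⊓ ⨅ p ∈ P, pointOrderSubmodule p.1 p.2 (μ p)
  have : FiniteDimensional K S := Submodule.finiteDimensional_of_le inf_le_left
  have hlines := finrank_le_finrank_inf_iInf_lineOrderSubmodule_add hm hP hM hn₁ ha hμ hd hC S
    (inf_le_left.trans hF) (fun p hp => inf_le_right.trans (iInf₂_le p hp)) Finset.univ
  obtain ⟨hfin', hhalf⟩ :=
    two_mul_finrank_parabolicSections_le hm hc hM ha hpt hle hge hn hk he
  have hsub : S ⊓ ⨅ i ∈ Finset.univ, lineOrderSubmodule (m i) (c i) M (a i) (n * a i) ≤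
      parabolicSections m c M a n (e + k) := by
    rw [parabolicSections, iInf_congr fun i => iInf_pos (Finset.mem_univ i)]
    exact inf_le_inf_right _ (inf_le_left.trans hF)
  have hmono := Nat.cast_le (α := ℝ).2 (Submodule.finrank_mono hsub)
  have hdim' := congrArg (Nat.cast (R := ℝ)) hdim
  have hhalf' := Nat.cast_le (α := ℝ).2 hhalf
  push_cast at hdim' hhalf'
  linarith

lemma leadingExcess_mul_cube_add_le (hm : Function.Injective m) (hc : ∀ i, c i ≠ 0)
    (hP : ContainsTriplePoints m c P) {M : ℕ} (hM : 0 < M) {a : ι → ℕ} (ha : ∀ i, a i ≤ M)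
    (hpt : ∀ x y : K, ∀ s : Finset ι, (∀ i ∈ s, y = m i * x + c i) → ∑ i ∈ s, a i ≤ 2 * M)
    (hle : 3 * M ≤ ∑ i, a i) (hge : ∑ i, a i ≤ 5 * M) {x : ι → ℝ}
    (hx : ∀ i, (a i / M : ℝ) = x i) {w : ℝ} (hw : w = (∑ i, x i - 1) / 2) {C n r : ℕ}
    (hC : C = P.card + Fintype.card ι + 10) (hr : 0 < r) (hn : n = 2 * M * r) :
    leadingExcess m c P x * n ^ 3 +
        (C * (2 * w) + (w + 1) * (w - 1) + 2 * ∑ i, x i -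
          (∑ p ∈ P, pointWeight m c x p ^ 2) / 4 - (∑ p ∈ P, pointWeight m c x p) / 2 -
          Fintype.card ι * (6 * (C + 2) + 6)) * n ^ 2 +
        (-C - (w + 1) - (∑ p ∈ P, pointWeight m c x p) / 2) * n ≤ 0 := by
  obtain rfl : (fun i => (a i / M : ℝ)) = x := _root_.funext hx
  have hn' : n = 2 * (r * M) := by rw [hn]; ring
  have hrM : 0 < r * M := by positivity
  have hlow := Nat.mul_le_mul_left r hle
  have hhigh := Nat.mul_le_mul_left r hge
  rw [Nat.mul_left_comm] at hlow hhigh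
  obtain ⟨k, hk⟩ : ∃ k, k + 2 + r * M = r * ∑ i, a i := ⟨r * ∑ i, a i - r * M - 2, by omega⟩
  have hCn : 10 * n ≤ C * n := Nat.mul_le_mul_right n (by omega)
  have hkR : (k : ℝ) = n * w - 2 := by
    have hkR := congrArg (Nat.cast (R := ℝ)) hk
    push_cast at hkR
    rw [hw, ← Finset.sum_div, hn]
    push_cast
    field_simp
    linear_combination hkR
  obtain ⟨μ, hμ, hμR⟩ := exists_cast_eq_mul_pointWeight hM r hpt
  rw [← hn] at hμ hμR
  have hkn : (k : ℝ) ≤ 2 * n := by exact_mod_cast (by omega : k ≤ 2 * n)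
  have hcount := cast_le_of_two_mul_finrank_parabolicSections_le hm hc hP hM ha hpt hle hge hr hn hk
    (e := C * n) (by omega) (fun p _ => hμ p)
    ((Nat.mul_le_mul_right n (by omega)).trans (Nat.le_add_right _ k)) (C := C + 2)
    (by push_cast; linarith)
  rw [sum_pointCost hμR, two_mul_sum_lineCostBound (fun _ => rfl) hμR] at hcount
  push_cast at hcount
  rw [hkR] at hcount
  have hsum : ∑ i, (a i / M : ℝ) = 2 * w + 1 := by rw [hw]; ring
  rw [leadingExcess, hsum]
  rw [hsum] at hcount
  linear_combination hcount

theorem leadingExcess_div_nonpos (hm : Function.Injective m) (hc : ∀ i, c i ≠ 0)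
    (hP : ContainsTriplePoints m c P) {M : ℕ} (hM : 0 < M) {a : ι → ℕ} (ha : ∀ i, a i ≤ M)
    (hpt : ∀ x y : K, ∀ s : Finset ι, (∀ i ∈ s, y = m i * x + c i) → ∑ i ∈ s, a i ≤ 2 * M)
    (hle : 3 * M ≤ ∑ i, a i) (hge : ∑ i, a i ≤ 5 * M) :
    leadingExcess m c P (fun i => (a i / M : ℝ)) ≤ 0 := by
  have hu : Filter.Tendsto (fun r => ((2 * M * r : ℕ) : ℝ)) Filter.atTop Filter.atTop :=
    tendsto_natCast_atTop_atTop.comp (Filter.tendsto_id.const_mul_atTop' (by positivity))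
  exact nonpos_of_eventually_cubic_le hu <| (Filter.eventually_gt_atTop 0).mono fun r hr =>
    leadingExcess_mul_cube_add_le hm hc hP hM ha hpt hle hge (fun _ => rfl) rfl rfl hr rfl

end RationalWeights

/-! ### The inequality for real weights -/

section Pairs

variable {K : Type*} [Field K] {ι : Type*} {m c : ι → K} {P : Finset (K × K)}

lemma eq_of_onLine_of_ne (hm : Function.Injective m) {l h : ι} (hne : l ≠ h) {p q : K × K}
    (hlp : OnLine m c l p) (hhp : OnLine m c h p) (hlq : OnLine m c l q) (hhq : OnLine m c h q) :
    p = q := by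
  have hx : p.1 = q.1 := by
    unfold OnLine at *
    refine mul_left_cancel₀ (sub_ne_zero.2 (hm.ne hne)) ?_
    linear_combination hhp - hlp + hlq - hhq
  exact Prod.ext hx (by rw [hlp, hlq, hx])

open Classical in
lemma card_filter_onLine_and_onLine (hm : Function.Injective m) {l h : ι} (hne : l ≠ h) :
    Finset.card {p ∈ P | OnLine m c l p ∧ OnLine m c h p} =
      if MeetOutside m c P l h then 0 else 1 := by
  split_ifs with hmeet
  · exact Finset.card_eq_zero.2 (Finset.filter_eq_empty_iff.2 fun p hp => hmeet.2 p hp)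
  · obtain ⟨p, hp, hon⟩ : ∃ p ∈ P, OnLine m c l p ∧ OnLine m c h p := by
      by_contra! hno
      exact hmeet ⟨hne, fun p hp hon => hno p hp hon.1 hon.2⟩
    refine Finset.card_eq_one.2 ⟨p, Finset.eq_singleton_iff_unique_mem.2
      ⟨Finset.mem_filter.2 ⟨hp, hon⟩, fun q hq => ?_⟩⟩
    obtain ⟨-, hlq, hhq⟩ := Finset.mem_filter.1 hq
    exact eq_of_onLine_of_ne hm hne hlq hhq hon.1 hon.2

lemma sq_sum_eq_sum_sq_add_sum_offDiag {α R : Type*} [CommSemiring R] (s : Finset α)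
    (f : α → R) :
    (∑ i ∈ s, f i) ^ 2 = ∑ i ∈ s, f i ^ 2 + ∑ q ∈ s.offDiag, f q.1 * f q.2 := by
  classical
  rw [sq, Finset.sum_mul_sum, ← Finset.sum_product', ← Finset.diag_union_offDiag,
    Finset.sum_union (Finset.disjoint_diag_offDiag s), Finset.sum_diag]
  simp_rw [sq]

end Pairs

section RealWeights

variable {K : Type*} [Field K] {ι : Type*} [Fintype ι] (m c : ι → K) (P : Finset (K × K))

open Filter Topology

lemma continuous_pointWeight (p : K × K) : Continuous fun x : ι → ℝ => pointWeight m c x p := by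
  unfold pointWeight
  fun_prop

lemma continuous_leadingExcess : Continuous (leadingExcess m c P) := by
  have hpoint := continuous_pointWeight m c
  have hsq (p : K × K) : Continuous fun x : ι → ℝ => pointWeight m c (x ^ 2) p :=
    (hpoint p).comp (by fun_prop)
  unfold leadingExcess doublePointSum
  fun_prop

variable {m c P}

lemma sum_le_two_mul_of_forall_pointWeight_le (hP : ContainsTriplePoints m c P) {M : ℕ}
    (hM : 0 < M) {a : ι → ℕ} (ha : ∀ i, a i ≤ M)
    (h : ∀ p ∈ P, pointWeight m c (fun i => (a i / M : ℝ)) p ≤ 2) (p : K × K) {s : Finset ι}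
    (hs : ∀ i ∈ s, OnLine m c i p) : ∑ i ∈ s, a i ≤ 2 * M := by
  classical
  by_cases hp : p ∈ P
  · have hp2 := h p hp
    rw [pointWeight, ← Finset.sum_div, div_le_iff₀ (by exact_mod_cast hM)] at hp2
    calc ∑ i ∈ s, a i ≤ ∑ i with OnLine m c i p, a i :=
          Finset.sum_le_sum_of_subset fun i hi => Finset.mem_filter.2 ⟨Finset.mem_univ i, hs i hi⟩
      _ ≤ 2 * M := by exact_mod_cast hp2
  · have hcard : s.card ≤ 2 := not_lt.1 fun hlt => hp (hP p s hlt hs)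
    calc ∑ i ∈ s, a i ≤ s.card • M := Finset.sum_le_card_nsmul _ _ _ fun i _ => ha i
      _ ≤ 2 * M := Nat.mul_le_mul_right M hcard

theorem leadingExcess_nonpos [CharZero K] (hm : Function.Injective m) (hc : ∀ i, c i ≠ 0)
    (hP : ContainsTriplePoints m c P) {x : ι → ℝ} (hx₀ : ∀ i, 0 ≤ x i) (hx₁ : ∀ i, x i ≤ 1)
    (hle : 3 ≤ ∑ i, x i) (hlt : ∑ i, x i < 5) (hx₂ : ∀ p ∈ P, pointWeight m c x p < 2) :
    leadingExcess m c P x ≤ 0 := by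
  let a (M : ℕ) (i : ι) : ℕ := ⌈x i * M⌉₊
  have hlim (i : ι) : Tendsto (fun M : ℕ => (a M i / M : ℝ)) atTop (𝓝 (x i)) :=
    (tendsto_nat_ceil_mul_div_atTop (hx₀ i)).comp tendsto_natCast_atTop_atTop
  have hlim' : Tendsto (fun (M : ℕ) i => (a M i / M : ℝ)) atTop (𝓝 x) := tendsto_pi_nhds.2 hlim
  have hlt_five : ∀ᶠ M : ℕ in atTop, ∑ i, (a M i / M : ℝ) < 5 :=
    (tendsto_finsetSum _ fun i _ => hlim i).eventually_lt_const hlt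
  have hlt_two : ∀ᶠ M : ℕ in atTop, ∀ p ∈ P, pointWeight m c (fun i => (a M i / M : ℝ)) p < 2 :=
    (eventually_all_finset P).2 fun p hp =>
      (((continuous_pointWeight m c p).tendsto x).comp hlim').eventually_lt_const (hx₂ p hp)
  refine le_of_tendsto (((continuous_leadingExcess m c P).tendsto x).comp hlim') ?_
  filter_upwards [hlt_five, hlt_two, eventually_gt_atTop 0] with M h₅ h₂ hM
  have hM' : (0 : ℝ) < M := by exact_mod_cast hM
  have haM (i : ι) : a M i ≤ M := Nat.ceil_le.2 (mul_le_of_le_one_left hM'.le (hx₁ i))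
  refine leadingExcess_div_nonpos hm hc hP hM haM (fun u v s hs =>
    sum_le_two_mul_of_forall_pointWeight_le hP hM haM (fun p hp => (h₂ p hp).le) (u, v) hs) ?_ ?_
  · have hlow : (3 : ℝ) * M ≤ ∑ i, (a M i : ℝ) := by
      refine (mul_le_mul_of_nonneg_right hle hM'.le).trans ?_
      rw [Finset.sum_mul]
      exact Finset.sum_le_sum fun i _ => Nat.le_ceil (x i * M)
    exact_mod_cast hlow
  · rw [← Finset.sum_div, div_lt_iff₀ hM'] at h₅
    exact_mod_cast h₅.le

theorem sq_sum_eq_add_doublePointSum_add (hm : Function.Injective m) (x : ι → ℝ) :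
    (∑ i, x i) ^ 2 = ∑ i, x i ^ 2 + doublePointSum m c P x Finset.univ +
      ∑ p ∈ P, (pointWeight m c x p ^ 2 - pointWeight m c (x ^ 2) p) := by
  classical
  have hdouble : doublePointSum m c P x Finset.univ =
      ∑ q ∈ Finset.univ.offDiag, if MeetOutside m c P q.1 q.2 then x q.1 * x q.2 else 0 := by
    simp_rw [doublePointSum, Finset.sum_filter]
    rw [← Finset.sum_product', ← Finset.diag_union_offDiag,
      Finset.sum_union (Finset.disjoint_diag_offDiag _), Finset.sum_diag]
    simp [MeetOutside]
  have hpoint (p : K × K) : pointWeight m c x p ^ 2 - pointWeight m c (x ^ 2) p =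
      ∑ q ∈ Finset.univ.offDiag, if OnLine m c q.1 p ∧ OnLine m c q.2 p then x q.1 * x q.2
        else 0 := by
    rw [pointWeight, sq_sum_eq_sum_sq_add_sum_offDiag, pointWeight, ← Finset.sum_filter]
    simp only [Pi.pow_apply, add_sub_cancel_left]
    congr 1
    ext q
    simp only [Finset.mem_offDiag, Finset.mem_filter, Finset.mem_univ, true_and]
    tauto
  simp_rw [hpoint]
  rw [Finset.sum_comm, sq_sum_eq_sum_sq_add_sum_offDiag, add_assoc, hdouble,
    ← Finset.sum_add_distrib]
  congr 1
  refine Finset.sum_congr rfl fun q hq => ?_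
  rw [← Finset.sum_filter, Finset.sum_const,
    card_filter_onLine_and_onLine hm (Finset.mem_offDiag.1 hq).2.2]
  split_ifs <;> simp

theorem sum_sq_pointWeight_sub_le [CharZero K] (hm : Function.Injective m) (hc : ∀ i, c i ≠ 0)
    (hP : ContainsTriplePoints m c P) {x : ι → ℝ} (hx₀ : ∀ i, 0 ≤ x i) (hx₁ : ∀ i, x i ≤ 1)
    (hsum : ∑ i, x i = 3) (hx₂ : ∀ p ∈ P, pointWeight m c x p < 2) :
    ∑ p ∈ P, (pointWeight m c x p / 2) ^ 2 -
      1 / 2 * ∑ i, x i ^ 2 * ((pointsOn m c P i).card - 1) - 3 / 2 ≤ 0 := by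
  have hexcess := leadingExcess_nonpos hm hc hP hx₀ hx₁ hsum.ge (by norm_num [hsum]) hx₂
  have hpairs := sq_sum_eq_add_doublePointSum_add (c := c) (P := P) hm x
  have hcard := sum_mul_card_pointsOn m c P (x ^ 2)
  simp only [Pi.pow_apply] at hcard
  rw [hsum, Finset.sum_sub_distrib] at hpairs
  rw [leadingExcess, hsum] at hexcess
  simp_rw [mul_sub, mul_one, div_pow]
  rw [Finset.sum_sub_distrib, hcard, ← Finset.sum_div]
  linarith

end RealWeights

/-! ### Affine charts adapted to an arrangement -/

section Functionals

variable {K : Type*} [Field K] {V : Type*} [AddCommGroup V] [Module K V]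

open Module

lemma exists_vecCons_linearIndependent [Infinite K] {k : ℕ} {v : Fin k → V}
    (hv : LinearIndependent K v) (hk : k < finrank K V) {I : Type*} [Finite I]
    (f : I → Dual K V) (hf : ∀ i, f i ≠ 0) :
    ∃ x, LinearIndependent K (Matrix.vecCons x v) ∧ ∀ i, f i x ≠ 0 := by
  by_contra! hno
  let W (o : Option I) : Subspace K V :=
    o.elim (Submodule.span K (Set.range v)) fun i => LinearMap.ker (f i)
  obtain ⟨o, ho⟩ := Subspace.exists_eq_top_of_iUnion_eq_univ (p := W) <|
    Set.eq_univ_of_forall fun x => Set.mem_iUnion.2 <| by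
      by_cases hx : x ∈ Submodule.span K (Set.range v)
      · exact ⟨none, hx⟩
      · obtain ⟨i, hi⟩ := hno x (linearIndependent_finCons.2 ⟨hv, hx⟩)
        exact ⟨some i, hi⟩
  cases o with
  | none =>
    have hspan := finrank_span_eq_card hv
    rw [show Submodule.span K (Set.range v) = ⊤ from ho, finrank_top, Fintype.card_fin] at hspan
    exact hk.ne hspan.symm
  | some i => exact hf i (LinearMap.ker_eq_top.1 ho)

lemma exists_ker_eq_of_finrank_add_one_eq [FiniteDimensional K V] {ℓ : Submodule K V}
    (hℓ : finrank K ℓ + 1 = finrank K V) : ∃ f : Dual K V, LinearMap.ker f = ℓ ∧ f ≠ 0 := by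
  have hlt : ℓ < ⊤ := lt_top_iff_ne_top.2 fun h => by
    rw [h, finrank_top] at hℓ
    omega
  obtain ⟨f, hf, hle⟩ := ℓ.exists_le_ker_of_lt_top hlt
  refine ⟨f, (Submodule.eq_of_le_of_finrank_le hle ?_).symm, hf⟩
  have hrank := Dual.finrank_ker_add_one_of_ne_zero hf
  omega

lemma smul_sub_smul_ne_zero_of_ker_ne {f g : Dual K V} {a b : K} (ha : a ≠ 0) (hb : b ≠ 0)
    (hker : LinearMap.ker f ≠ LinearMap.ker g) : a • f - b • g ≠ 0 := fun h =>
  hker <| by rw [← LinearMap.ker_smul f a ha, sub_eq_zero.1 h, LinearMap.ker_smul g b hb]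

lemma exists_linearIndependent_forall_ne_zero [Infinite K] (hV : finrank K V = 3) {I : Type*}
    [Finite I] (f : I → Dual K V) (hf : ∀ i, f i ≠ 0)
    (hker : Function.Injective fun i => LinearMap.ker (f i)) :
    ∃ b : Fin 3 → V, LinearIndependent K b ∧ (∀ i, f i (b 0) ≠ 0) ∧ (∀ i, f i (b 2) ≠ 0) ∧
      ∀ i j, i ≠ j → f j (b 2) * f i (b 1) ≠ f i (b 2) * f j (b 1) := by
  obtain ⟨v₂, hli₂, h₂⟩ := exists_vecCons_linearIndependent
    (linearIndependent_empty_type (v := ![])) (by omega) f hf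
  obtain ⟨v₁, hli₁, h₁⟩ := exists_vecCons_linearIndependent hli₂ (by omega)
    (fun q : {q : I × I // q.1 ≠ q.2} => f q.1.2 v₂ • f q.1.1 - f q.1.1 v₂ • f q.1.2) fun q =>
      smul_sub_smul_ne_zero_of_ker_ne (h₂ _) (h₂ _) (hker.ne q.2)
  obtain ⟨v₀, hli₀, h₀⟩ := exists_vecCons_linearIndependent hli₁ (by omega) f hf
  exact ⟨_, hli₀, h₀, h₂, fun i j hij => sub_ne_zero.1 (h₁ ⟨(i, j), hij⟩)⟩

end Functionals

section AffineChart

variable {K : Type*} [Field K] {V : Type*} [AddCommGroup V] [Module K V]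

open Module

/-- An affine chart of the projective plane of `V` in which the lines of `L` have equations
`y = slope i * x + intercept i` with pairwise distinct slopes and avoid the origin. The point with
coordinates `q` is the one-dimensional subspace `point q`. -/
structure AffineChart (L : Finset (Submodule K V)) where
  point : K × K → Submodule K V
  slope : L → K
  intercept : L → K
  finrank_point : ∀ q, finrank K (point q) = 1
  point_injective : Function.Injective point
  slope_injective : Function.Injective slope
  intercept_ne_zero : ∀ i, intercept i ≠ 0
  point_le_iff : ∀ i q, point q ≤ i.1 ↔ OnLine slope intercept i q

lemma span_add_smul_add_smul_injective {b : Fin 3 → V} (hb : LinearIndependent K b) :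
    Function.Injective fun q : K × K => Submodule.span K {b 0 + q.1 • b 1 + q.2 • b 2} := by
  intro q q' (h : Submodule.span K _ = Submodule.span K _)
  obtain ⟨t, ht⟩ := Submodule.mem_span_singleton.1 (h ▸ Submodule.mem_span_singleton_self _ :
    b 0 + q.1 • b 1 + q.2 • b 2 ∈ Submodule.span K {b 0 + q'.1 • b 1 + q'.2 • b 2})
  have hzero := Fintype.linearIndependent_iff.1 hb ![t - 1, t * q'.1 - q.1, t * q'.2 - q.2] (by
    rw [← sub_eq_zero] at ht
    rw [Fin.sum_univ_three, ← ht]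
    simp only [Matrix.cons_val]
    module)
  have h₀ := hzero 0
  have h₁ := hzero 1
  have h₂ := hzero 2
  simp only [Matrix.cons_val] at h₀ h₁ h₂
  rw [sub_eq_zero.1 h₀, one_mul, sub_eq_zero] at h₁ h₂
  exact Prod.ext h₁.symm h₂.symm

lemma span_add_smul_add_smul_le_ker_iff {f : Dual K V} {v₀ v₁ v₂ : V} (h₂ : f v₂ ≠ 0)
    (q : K × K) : Submodule.span K {v₀ + q.1 • v₁ + q.2 • v₂} ≤ LinearMap.ker f ↔
      q.2 = -(f v₁ / f v₂) * q.1 + -(f v₀ / f v₂) := by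
  rw [Submodule.span_singleton_le_iff_mem, LinearMap.mem_ker]
  simp only [map_add, map_smul, smul_eq_mul]
  field_simp
  constructor <;> intro h <;> linear_combination h

theorem nonempty_affineChart [Infinite K] (hV : finrank K V = 3) {L : Finset (Submodule K V)}
    (hL : ∀ ℓ ∈ L, finrank K ℓ = 2) : Nonempty (AffineChart L) := by
  have : FiniteDimensional K V := FiniteDimensional.of_finrank_pos (by omega)
  choose f hker hf using fun i : L =>
    exists_ker_eq_of_finrank_add_one_eq (by rw [hL i i.2, hV] : finrank K i.1 + 1 = finrank K V)
  obtain ⟨b, hb, h₀, h₂, hdet⟩ := exists_linearIndependent_forall_ne_zero hV f hf <| by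
    simpa only [hker] using Subtype.val_injective
  exact ⟨{
    point := fun q => Submodule.span K {b 0 + q.1 • b 1 + q.2 • b 2}
    slope := fun i => -(f i (b 1) / f i (b 2))
    intercept := fun i => -(f i (b 0) / f i (b 2))
    finrank_point := fun q => finrank_span_singleton fun h =>
      one_ne_zero (Fintype.linearIndependent_iff.1 hb ![1, q.1, q.2]
        (by simpa [Fin.sum_univ_three] using h) 0)
    point_injective := span_add_smul_add_smul_injective hb
    slope_injective := fun i j hij => by
      by_contra hne
      rw [neg_inj, div_eq_div_iff (h₂ i) (h₂ j)] at hij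
      exact hdet i j hne (by linear_combination hij)
    intercept_ne_zero := fun i => neg_ne_zero.2 (div_ne_zero (h₀ i) (h₂ i))
    point_le_iff := fun i q => by
      rw [← hker i]
      exact span_add_smul_add_smul_le_ker_iff (h₂ i) q }⟩

end AffineChart

/-! ### The weighted inequality -/

section WeightedInequality

variable {K : Type*} [Field K] {V : Type*} [AddCommGroup V] [Module K V]
  (L : Finset (Submodule K V)) (β : Submodule K V → ℝ)

open Module

/-- The lines of the arrangement `L` through the point `p`. -/
def linesThrough (p : Submodule K V) : Set (Submodule K V) := {ℓ | ℓ ∈ L ∧ p ≤ ℓ}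

/-- The points of the projective plane of `V` lying on at least three lines of `L`. -/
def multiplePoints : Set (Submodule K V) :=
  {p : Submodule K V | finrank K p = 1 ∧ 3 ≤ (linesThrough L p).ncard}

/-- The number `α(p)`: the conical angle at the point `p` is `2πα(p)`. -/
noncomputable def coneAngle (p : Submodule K V) : ℝ :=
  1 + (1 / 2) * ∑ᶠ ℓ ∈ linesThrough L p, (β ℓ - 1)

/-- The number `B(ℓ)`: minus the self-intersection of the proper transform of the line `ℓ` in the
blow-up of the projective plane at the multiple points. -/
noncomputable def negSelfIntersection (ℓ : Submodule K V) : ℤ :=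
  (Set.ncard {p : Submodule K V |
    finrank K p = 1 ∧ 3 ≤ (linesThrough L p).ncard ∧ p ≤ ℓ} : ℤ) - 1

variable {L}

lemma eq_inf_of_finrank {p i j : Submodule K V} (hi : finrank K i = 2) (hj : finrank K j = 2)
    (hne : i ≠ j) (hp : finrank K p = 1) (hpi : p ≤ i) (hpj : p ≤ j) : p = i ⊓ j := by
  have : FiniteDimensional K i := FiniteDimensional.of_finrank_pos (by omega)
  have : FiniteDimensional K j := FiniteDimensional.of_finrank_pos (by omega)
  have hlt : i ⊓ j < i := inf_le_left.lt_of_ne fun h => hne <|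
    Submodule.eq_of_le_of_finrank_eq (inf_eq_left.1 h) (hi.trans hj.symm)
  have hrank := Submodule.finrank_lt_finrank_of_lt hlt
  exact Submodule.eq_of_le_of_finrank_le (le_inf hpi hpj) (by omega)

lemma exists_eq_inf_of_mem_multiplePoints (hL : ∀ ℓ ∈ L, finrank K ℓ = 2) {p : Submodule K V}
    (hp : p ∈ multiplePoints L) : ∃ i ∈ L, ∃ j ∈ L, i ≠ j ∧ p = i ⊓ j := by
  obtain ⟨i, hi, j, hj, hne⟩ := (Set.one_lt_ncard (L.finite_toSet.subset fun ℓ hℓ => hℓ.1)).1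
    (lt_of_lt_of_le (by norm_num) hp.2 : 1 < (linesThrough L p).ncard)
  exact ⟨i, hi.1, j, hj.1, hne,
    eq_inf_of_finrank (hL i hi.1) (hL j hj.1) hne hp.1 hi.2 hj.2⟩

lemma finite_multiplePoints (hL : ∀ ℓ ∈ L, finrank K ℓ = 2) : (multiplePoints L).Finite := by
  refine (L.finite_toSet.image2 (· ⊓ ·) L.finite_toSet).subset fun p hp => ?_
  obtain ⟨i, hi, j, hj, -, rfl⟩ := exists_eq_inf_of_mem_multiplePoints hL hp
  exact ⟨i, hi, j, hj, rfl⟩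

namespace AffineChart

variable (χ : AffineChart L)

lemma linesThrough_point (q : K × K) :
    linesThrough L (χ.point q) = Subtype.val '' {i | OnLine χ.slope χ.intercept i q} := by
  ext ℓ
  simp [linesThrough, ← χ.point_le_iff, and_comm]

lemma finsum_linesThrough_point (g : Submodule K V → ℝ) (q : K × K) :
    ∑ᶠ ℓ ∈ linesThrough L (χ.point q), g ℓ =
      pointWeight χ.slope χ.intercept (fun i => g i) q := by
  classical
  rw [χ.linesThrough_point, finsum_mem_image Subtype.val_injective.injOn, pointWeight,
    finsum_mem_eq_finite_toFinset_sum _ (Set.toFinite _)]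
  congr 1
  ext i
  simp

lemma exists_point_eq (hL : ∀ ℓ ∈ L, finrank K ℓ = 2) {p : Submodule K V}
    (hp : p ∈ multiplePoints L) : ∃ q, χ.point q = p := by
  obtain ⟨i, hi, j, hj, hne, rfl⟩ := exists_eq_inf_of_mem_multiplePoints hL hp
  have hcross := onLine_crossing (c := χ.intercept) (l := ⟨i, hi⟩) (h := ⟨j, hj⟩)
    (χ.slope_injective.ne fun h => hne (congrArg Subtype.val h))
  have hj_le := (χ.point_le_iff ⟨j, hj⟩ _).2 hcross
  refine ⟨_, eq_inf_of_finrank (hL i hi) (hL j hj) hne (χ.finrank_point _) ?_ hj_le⟩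
  exact (χ.point_le_iff ⟨i, hi⟩ _).2 rfl

variable {P : Finset (K × K)}

lemma point_image_eq (hP : ∀ q, q ∈ P ↔ χ.point q ∈ multiplePoints L)
    (hL : ∀ ℓ ∈ L, finrank K ℓ = 2) :
    χ.point '' P = multiplePoints L := by
  ext p
  refine ⟨?_, fun hp => ?_⟩
  · rintro ⟨q, hq, rfl⟩
    exact (hP q).1 hq
  · obtain ⟨q, rfl⟩ := χ.exists_point_eq hL hp
    exact ⟨q, (hP q).2 hp, rfl⟩

lemma containsTriplePoints (hP : ∀ q, q ∈ P ↔ χ.point q ∈ multiplePoints L) :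
    ContainsTriplePoints χ.slope χ.intercept P := by
  intro q s hs hon
  refine (hP q).2 ⟨χ.finrank_point q, ?_⟩
  rw [χ.linesThrough_point, Set.ncard_image_of_injective _ Subtype.val_injective]
  calc 3 ≤ s.card := hs
    _ = (s : Set L).ncard := (Set.ncard_coe_finset s).symm
    _ ≤ _ := Set.ncard_le_ncard hon

lemma negSelfIntersection_eq (hP : ∀ q, q ∈ P ↔ χ.point q ∈ multiplePoints L)
    (hL : ∀ ℓ ∈ L, finrank K ℓ = 2) (i : L) :
    negSelfIntersection L i = (pointsOn χ.slope χ.intercept P i).card - 1 := by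
  have himage : {p : Submodule K V | finrank K p = 1 ∧ 3 ≤ (linesThrough L p).ncard ∧ p ≤ i} =
      χ.point '' (pointsOn χ.slope χ.intercept P i) := by
    ext p
    simp_rw [← and_assoc]
    change p ∈ multiplePoints L ∧ p ≤ i ↔ _
    rw [← χ.point_image_eq hP hL]
    simp only [Set.mem_image, Finset.mem_coe, mem_pointsOn, ← χ.point_le_iff]
    constructor
    · rintro ⟨⟨q, hq, rfl⟩, hle⟩
      exact ⟨q, ⟨hq, hle⟩, rfl⟩
    · rintro ⟨q, ⟨hq, hle⟩, rfl⟩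
      exact ⟨⟨q, hq, rfl⟩, hle⟩
  rw [negSelfIntersection, himage, Set.ncard_image_of_injective _ χ.point_injective,
    Set.ncard_coe_finset]

end AffineChart

end WeightedInequality

end LineArrangement

open Module LineArrangement in
theorem weighted_arrangement_BG_inequality_general {K : Type*} [Field K] [CharZero K]
    {V : Type*} [AddCommGroup V] [Module K V] (hV : finrank K V = 3) {L : Finset (Submodule K V)}
    (hL : ∀ ℓ ∈ L, finrank K ℓ = 2) {β : Submodule K V → ℝ} (hβ : ∀ ℓ ∈ L, 0 ≤ β ℓ ∧ β ℓ ≤ 1)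
    (hsum : ∑ ℓ ∈ L, (β ℓ - 1) = -3)
    (htriple : ∀ p : Submodule K V, finrank K p = 1 → 3 ≤ (linesThrough L p).ncard →
      ∑ᶠ ℓ ∈ linesThrough L p, (β ℓ - 1) > -2) :
    ∑ᶠ p ∈ multiplePoints L, (coneAngle L β p - 1) ^ 2 -
      1 / 2 * ∑ ℓ ∈ L, (1 - β ℓ) ^ 2 * (negSelfIntersection L ℓ : ℝ) - 3 / 2 ≤ 0 := by
  obtain ⟨χ⟩ := nonempty_affineChart hV hL
  let P := ((finite_multiplePoints hL).preimage χ.point_injective.injOn).toFinset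
  have hP (q : K × K) : q ∈ P ↔ χ.point q ∈ multiplePoints L := Set.Finite.mem_toFinset _
  have hweight (q : K × K) : ∑ᶠ ℓ ∈ linesThrough L (χ.point q), (β ℓ - 1) =
      -pointWeight χ.slope χ.intercept (fun i => 1 - β i) q := by
    rw [χ.finsum_linesThrough_point]
    simp [pointWeight]
  have hsum' : ∑ i : L, (1 - β i) = 3 := by
    rw [Finset.sum_coe_sort L fun ℓ => 1 - β ℓ, ← neg_inj, ← hsum, ← Finset.sum_neg_distrib]
    simp
  have hmain := sum_sq_pointWeight_sub_le χ.slope_injective χ.intercept_ne_zero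
    (χ.containsTriplePoints hP) (fun i => sub_nonneg.2 (hβ i i.2).2)
    (fun i => sub_le_self 1 (hβ i i.2).1) hsum' fun q hq => by
      have hq' := htriple _ ((hP q).1 hq).1 ((hP q).1 hq).2
      rw [hweight] at hq'
      linarith
  have hpoints : ∑ᶠ p ∈ multiplePoints L, (coneAngle L β p - 1) ^ 2 =
      ∑ q ∈ P, (pointWeight χ.slope χ.intercept (fun i => 1 - β i) q / 2) ^ 2 := by
    rw [← χ.point_image_eq hP hL, finsum_mem_image χ.point_injective.injOn,
      finsum_mem_coe_finset]
    refine Finset.sum_congr rfl fun q _ => ?_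
    rw [coneAngle, hweight]
    ring
  rw [hpoints, ← Finset.sum_coe_sort L]
  simpa [χ.negSelfIntersection_eq hP hL] using hmain

/-- The inequality part of Theorem 1.7 of the paper (parabolic
Bogomolov–Gieseker inequality for weighted line arrangements in `ℂP²`):
`∑_{p : μ(p) ≥ 3} (α(p) − 1)² − (1/2)·∑_ℓ (1 − βℓ)²·B(ℓ) − 3/2 ≤ 0`. -/
theorem weighted_arrangement_BG_inequality
    (L : Finset (Submodule ℂ (Fin 3 → ℂ)))
    (hL : ∀ ℓ ∈ L, Module.finrank ℂ ℓ = 2)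
    (β : Submodule ℂ (Fin 3 → ℂ) → ℝ)
    (hβ : ∀ ℓ ∈ L, 0 < β ℓ ∧ β ℓ < 1)
    (hsum : ∑ ℓ ∈ L, (β ℓ - 1) = -3)
    (htriple : ∀ p : Submodule ℂ (Fin 3 → ℂ), Module.finrank ℂ p = 1 →
      3 ≤ lineMult L p →
      (∑ᶠ ℓ ∈ {ℓ : Submodule ℂ (Fin 3 → ℂ) | ℓ ∈ L ∧ p ≤ ℓ}, (β ℓ - 1)) > -2) :
    (∑ᶠ p ∈ {p : Submodule ℂ (Fin 3 → ℂ) |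
        Module.finrank ℂ p = 1 ∧ 3 ≤ lineMult L p}, (alphaPt L β p - 1) ^ 2)
      - (1 / 2) * ∑ ℓ ∈ L, (1 - β ℓ) ^ 2 * (BSelf L ℓ : ℝ) - 3 / 2 ≤ 0 :=
  weighted_arrangement_BG_inequality_general (by simp) hL
    (fun ℓ hℓ => ⟨(hβ ℓ hℓ).1.le, (hβ ℓ hℓ).2.le⟩) hsum htriple
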